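/- arXiv:1912.01283 — 4 statements merged into one kernel-verified Lean document; each statement's English description precedes it below -/
import Mathlib

section
/- Let Ω ⊂ ℝ^N (N ≥ 3) be a bounded open set with C² boundary, W : Ω → [0,∞) continuous, K : Ω × ∂Ω → [0,∞) continuous, and suppose there exist C ≥ 1 and ε > 0 such that for every y ∈ ∂Ω and every β ∈ (0,ε): C⁻¹ ≤ ∫_{Σ_β} W(x) K(x,y) dH^{N−1}(x) ≤ C. Then there exists C₁ ≥ 1 such that for every finite positive Borel measure ν on ∂Ω: C₁⁻¹ ν(∂Ω) ≤ ∫_Ω W(x) (∫_{∂Ω} K(x,y) dν(y)) dx ≤ C₁ ν(∂Ω). -/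
open MeasureTheory Metric Set

/-- `Ω` has `C²` boundary: near each boundary point, `Ω` coincides with the strict
sublevel set of a `C²` function with nonvanishing derivative. -/
def HasC2Boundary {N : ℕ} (Ω : Set (EuclideanSpace ℝ (Fin N))) : Prop :=
  ∀ p ∈ frontier Ω, ∃ (U : Set (EuclideanSpace ℝ (Fin N)))
    (f : EuclideanSpace ℝ (Fin N) → ℝ),
    IsOpen U ∧ p ∈ U ∧ ContDiffOn ℝ 2 f U ∧ (∀ x ∈ U, fderiv ℝ f x ≠ 0) ∧
    Ω ∩ U = {x ∈ U | f x < 0}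

/-!
At a boundary point the `C²` regularity provides uniform exterior cones, and these make the distance
`δ` to the boundary grow at a positive rate in a fixed direction `e`. Hence `x ↦ (π x, δ x)`, with
`π` the orthogonal projection along `e`, is bi-Lipschitz near that point, and since Hausdorff
measures are distorted by bi-Lipschitz maps only up to constants, Tonelli's theorem in the product
`e^⊥ × ℝ` becomes a coarea formula for `δ` up to constants. By compactness it holds in a collar of
the boundary, where the bounds on the level sets of `δ` therefore integrate to bounds on the mass of
the kernel. The part of the domain away from the boundary contributes a bounded amount because the
kernel is continuous on a compact set. This bounds the mass uniformly in the boundary point `y`, and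
integrating in `y` gives the result.
-/

open scoped NNReal ENNReal InnerProductSpace Topology
open Module (finrank)

section Comparability

/-- Two extended nonnegative numbers bound each other up to the factor `c`; this is the relation
`a ≍ b` with an explicit constant, in which all integral estimates below are expressed. -/
def WithinFactor (c : ℝ≥0) (a b : ℝ≥0∞) : Prop :=
  a ≤ c * b ∧ b ≤ c * a

namespace WithinFactor

variable {c c' : ℝ≥0} {a a' b b' d : ℝ≥0∞}

theorem symm (h : WithinFactor c a b) : WithinFactor c b a :=
  And.symm h

theorem trans (h : WithinFactor c a b) (h' : WithinFactor c' b d) :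
    WithinFactor (c * c') a d := by
  rw [WithinFactor, ENNReal.coe_mul]
  constructor
  · calc a ≤ c * b := h.1
      _ ≤ c * (c' * d) := by gcongr; exact h'.1
      _ = c * c' * d := (mul_assoc _ _ _).symm
  · calc d ≤ c' * b := h'.2
      _ ≤ c' * (c * a) := by gcongr; exact h.2
      _ = c * c' * a := by ring

theorem mono (h : WithinFactor c a b) (hc : c ≤ c') : WithinFactor c' a b :=
  ⟨h.1.trans (by gcongr), h.2.trans (by gcongr)⟩

theorem add (h : WithinFactor c a b) (h' : WithinFactor c a' b') :
    WithinFactor c (a + a') (b + b') := by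
  rw [WithinFactor, mul_add, mul_add]
  exact ⟨add_le_add h.1 h'.1, add_le_add h.2 h'.2⟩

theorem lintegral {α : Type*} [MeasurableSpace α] {μ : Measure α} {f g : α → ℝ≥0∞}
    (h : ∀ᵐ x ∂μ, WithinFactor c (f x) (g x)) :
    WithinFactor c (∫⁻ x, f x ∂μ) (∫⁻ x, g x ∂μ) := by
  rw [WithinFactor, ← lintegral_const_mul' _ _ ENNReal.coe_ne_top,
    ← lintegral_const_mul' _ _ ENNReal.coe_ne_top]
  exact ⟨lintegral_mono_ae (h.mono fun _ hx ↦ hx.1), lintegral_mono_ae (h.mono fun _ hx ↦ hx.2)⟩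

theorem add_le_of_one (h : WithinFactor c a 1) (hab : a ≤ b) {e : ℝ≥0} (hb : b ≤ a + e) :
    WithinFactor (c + e) b 1 := by
  rw [WithinFactor, mul_one, ENNReal.coe_add]
  constructor
  · calc b ≤ a + e := hb
      _ ≤ c + e := by gcongr; simpa using h.1
  · calc 1 ≤ c * a := h.2
      _ ≤ (c + e) * b := by gcongr; exact le_self_add

end WithinFactor

theorem exists_withinFactor_one {a : ℝ≥0∞} (h₀ : a ≠ 0) (h : a ≠ ∞) :
    ∃ c, WithinFactor c a 1 := by
  lift a to ℝ≥0 using h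
  refine ⟨max a a⁻¹, ?_, ?_⟩
  · rw [mul_one]
    exact_mod_cast le_max_left _ _
  · have ha : a ≠ 0 := by exact_mod_cast h₀
    calc (1 : ℝ≥0∞) = (a⁻¹ * a : ℝ≥0) := by rw [inv_mul_cancel₀ ha, ENNReal.coe_one]
      _ ≤ (max a a⁻¹ : ℝ≥0) * a := by
        rw [ENNReal.coe_mul]
        gcongr
        exact le_max_right _ _

theorem withinFactor_toNNReal_iff {C : ℝ} (hC : 0 < C) {a b : ℝ≥0∞} :
    WithinFactor C.toNNReal a b ↔
      ENNReal.ofReal C⁻¹ * b ≤ a ∧ a ≤ ENNReal.ofReal C * b := by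
  rw [WithinFactor, and_comm, ENNReal.ofReal_inv_of_pos hC,
    ENNReal.inv_mul_le_iff (by simpa using hC) ENNReal.ofReal_ne_top]
  rfl

variable {α : Type*} [MeasurableSpace α]

theorem withinFactor_setLIntegral_union (μ : Measure α) (S T : Set α) (g : α → ℝ≥0∞) :
    WithinFactor 2 (∫⁻ x in S ∪ T, g x ∂μ) (∫⁻ x in S, g x ∂μ + ∫⁻ x in T, g x ∂μ) := by
  constructor
  · refine (lintegral_union_le g S T).trans ?_
    exact le_mul_of_one_le_left zero_le (by norm_num)
  · rw [ENNReal.coe_ofNat, two_mul]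
    exact add_le_add (lintegral_mono_set subset_union_left) (lintegral_mono_set subset_union_right)

theorem exists_withinFactor_setLIntegral_of_isAddHaarMeasure {G : Type*} [AddGroup G]
    [TopologicalSpace G] [IsTopologicalAddGroup G] [LocallyCompactSpace G]
    [SecondCountableTopology G] [MeasurableSpace G] [BorelSpace G]
    (μ ν : Measure G) [μ.IsAddHaarMeasure] [ν.IsAddHaarMeasure] :
    ∃ c, ∀ (s : Set G) (g : G → ℝ≥0∞),
      WithinFactor c (∫⁻ x in s, g x ∂μ) (∫⁻ x in s, g x ∂ν) := by
  have setLIntegral_eq (μ ν : Measure G) [μ.IsAddHaarMeasure] [ν.IsAddHaarMeasure] (s : Set G)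
      (g : G → ℝ≥0∞) :
      ∫⁻ x in s, g x ∂μ = μ.addHaarScalarFactor ν * ∫⁻ x in s, g x ∂ν := by
    conv_lhs => rw [μ.isAddLeftInvariant_eq_smul ν]
    rw [Measure.restrict_smul, lintegral_smul_measure, ENNReal.smul_def, smul_eq_mul]
  refine ⟨max (μ.addHaarScalarFactor ν) (ν.addHaarScalarFactor μ), fun s g ↦ ⟨?_, ?_⟩⟩
  · rw [setLIntegral_eq μ ν]
    gcongr
    exact le_max_left _ _
  · rw [setLIntegral_eq ν μ]
    gcongr
    exact le_max_right _ _

theorem withinFactor_lintegral_lintegral {β : Type*} [MeasurableSpace β] {μ : Measure α}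
    {ν : Measure β} [SFinite μ] [SFinite ν] {k : α → β → ℝ≥0∞}
    (hk : AEMeasurable (Function.uncurry k) (μ.prod ν)) {c : ℝ≥0}
    (h : ∀ᵐ y ∂ν, WithinFactor c (∫⁻ x, k x y ∂μ) 1) :
    WithinFactor c (∫⁻ x, ∫⁻ y, k x y ∂ν ∂μ) (ν univ) := by
  rw [lintegral_lintegral_swap hk, ← lintegral_one]
  exact WithinFactor.lintegral h

end Comparability

section BiLipschitz

variable {X Y : Type*} [MetricSpace X] [MeasurableSpace X] [BorelSpace X]
  [MetricSpace Y] [MeasurableSpace Y] [BorelSpace Y]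

theorem lintegral_hausdorffMeasure_subtype {T : Set X} (hT : MeasurableSet T) {d : ℝ}
    (hd : 0 ≤ d) (g : X → ℝ≥0∞) :
    ∫⁻ x : T, g x ∂μH[d] = ∫⁻ x in T, g x ∂μH[d] := by
  rw [← (MeasurableEmbedding.subtype_coe hT).lintegral_map,
    isometry_subtype_coe.map_hausdorffMeasure (.inl hd), Subtype.range_coe]

theorem lintegral_comp_hausdorffMeasure_le {φ : X → Y} (hφm : Measurable φ) {k : ℝ≥0}
    (hφ : AntilipschitzWith k φ) {d : ℝ} (hd : 0 ≤ d) {h : Y → ℝ≥0∞} (hh : Measurable h) :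
    ∫⁻ x, h (φ x) ∂μH[d] ≤ (k ^ d : ℝ≥0) * ∫⁻ y, h y ∂μH[d] := by
  rw [← lintegral_map hh hφm, ← smul_eq_mul, ← lintegral_smul_measure]
  refine lintegral_mono' (Measure.le_iff.2 fun B hB ↦ ?_) le_rfl
  rw [Measure.map_apply hφm hB, Measure.smul_apply, smul_eq_mul, ENNReal.coe_rpow_of_nonneg k hd]
  exact hφ.hausdorffMeasure_preimage_le hd B

theorem setLIntegral_range_hausdorffMeasure_le {φ : X → Y} {k : ℝ≥0} (hφ : LipschitzWith k φ)
    {d : ℝ} (hd : 0 ≤ d) {h : Y → ℝ≥0∞} (hh : Measurable h) :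
    ∫⁻ y in range φ, h y ∂μH[d] ≤ (k ^ d : ℝ≥0) * ∫⁻ x, h (φ x) ∂μH[d] := by
  have hφm : Measurable φ := hφ.continuous.measurable
  rw [← lintegral_map hh hφm, ← smul_eq_mul, ← lintegral_smul_measure]
  refine lintegral_mono' (Measure.le_iff.2 fun B hB ↦ ?_) le_rfl
  rw [Measure.restrict_apply hB, ← image_preimage_eq_inter_range, Measure.smul_apply, smul_eq_mul,
    Measure.map_apply hφm hB, ENNReal.coe_rpow_of_nonneg k hd]
  exact hφ.hausdorffMeasure_image_le hd _

theorem withinFactor_setLIntegral_comp_hausdorffMeasure {φ : X → Y} {T : Set X}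
    (hT : MeasurableSet T) {k k' : ℝ≥0} (hlip : LipschitzOnWith k φ T)
    (hanti : AntilipschitzWith k' (T.domRestrict φ)) {d : ℝ} (hd : 0 ≤ d) {h : Y → ℝ≥0∞}
    (hh : Measurable h) (hsupp : h.support ⊆ φ '' T) :
    WithinFactor (max (k ^ d) (k' ^ d)) (∫⁻ x in T, h (φ x) ∂μH[d]) (∫⁻ y, h y ∂μH[d]) := by
  have hlip' := hlip.to_restrict
  rw [← lintegral_hausdorffMeasure_subtype hT hd]
  constructor
  · refine (lintegral_comp_hausdorffMeasure_le hlip'.continuous.measurable hanti hd hh).trans ?_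
    gcongr
    exact le_max_right _ _
  · rw [← range_domRestrict] at hsupp
    rw [← setLIntegral_eq_of_support_subset hsupp]
    refine (setLIntegral_range_hausdorffMeasure_le hlip' hd hh).trans ?_
    gcongr
    · exact le_max_left _ _
    · exact le_rfl

end BiLipschitz

section Coarea

/-- A coarea formula up to a constant for the function `δ` on the set `S`: the integral of `g` over
`S` against the `(d + 1)`-dimensional Hausdorff measure is comparable to the integral over `β` of
the `d`-dimensional integrals of `g` over the level sets `δ = β` in `S`. The latter need not depend
measurably on `β`, hence the comparison goes through a measurable function `G`. -/
def CoareaComparable {X : Type*} [MetricSpace X] [MeasurableSpace X] [BorelSpace X]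
    (d : ℝ) (δ : X → ℝ) (S : Set X) : Prop :=
  ∃ c : ℝ≥0, ∀ g : X → ℝ≥0∞, Measurable g → ∃ G : ℝ → ℝ≥0∞, Measurable G ∧
    WithinFactor c (∫⁻ x in S, g x ∂μH[d + 1]) (∫⁻ β, G β) ∧
    ∀ β, WithinFactor c (∫⁻ x in S ∩ δ ⁻¹' {β}, g x ∂μH[d]) (G β)

namespace CoareaComparable

variable {X : Type*} [MetricSpace X] [MeasurableSpace X] [BorelSpace X] {d : ℝ} {δ : X → ℝ}
  {S T : Set X}

theorem empty : CoareaComparable d δ ∅ :=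
  ⟨0, fun _ _ ↦ ⟨0, measurable_zero, by simp [WithinFactor], by simp [WithinFactor]⟩⟩

theorem mono_set (h : CoareaComparable d δ S) (hTS : T ⊆ S) (hT : MeasurableSet T) :
    CoareaComparable d δ T := by
  obtain ⟨c, hc⟩ := h
  refine ⟨c, fun g hg ↦ ?_⟩
  obtain ⟨G, hGm, hG, hGβ⟩ := hc (T.indicator g) (hg.indicator hT)
  simp only [setLIntegral_indicator hT, ← inter_assoc, inter_eq_left.2 hTS] at hG hGβ
  exact ⟨G, hGm, hG, hGβ⟩

theorem union (hS : CoareaComparable d δ S) (hT : CoareaComparable d δ T) :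
    CoareaComparable d δ (S ∪ T) := by
  obtain ⟨c, hc⟩ := hS
  obtain ⟨c', hc'⟩ := hT
  refine ⟨2 * max c c', fun g hg ↦ ?_⟩
  obtain ⟨G, hGm, hG, hGβ⟩ := hc g hg
  obtain ⟨G', hGm', hG', hGβ'⟩ := hc' g hg
  refine ⟨fun β ↦ G β + G' β, hGm.add hGm', ?_, fun β ↦ ?_⟩
  · rw [lintegral_add_left hGm]
    exact (withinFactor_setLIntegral_union _ _ _ _).trans
      ((hG.mono (le_max_left _ _)).add (hG'.mono (le_max_right _ _)))
  · rw [union_inter_distrib_right]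
    exact (withinFactor_setLIntegral_union _ _ _ _).trans
      (((hGβ β).mono (le_max_left _ _)).add ((hGβ' β).mono (le_max_right _ _)))

theorem exists_withinFactor_mul_volume (h : CoareaComparable d δ S) {I : Set ℝ}
    (hI : MeasurableSet I) (hSI : MapsTo δ S I) :
    ∃ c, ∀ g : X → ℝ≥0∞, Measurable g → ∀ (C : ℝ≥0) (a : ℝ≥0∞),
      (∀ β ∈ I, WithinFactor C (∫⁻ x in S ∩ δ ⁻¹' {β}, g x ∂μH[d]) a) →
      WithinFactor (c * C) (∫⁻ x in S, g x ∂μH[d + 1]) (a * volume I) := by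
  obtain ⟨c, hc⟩ := h
  refine ⟨c * c, fun g hg C a hCa ↦ ?_⟩
  obtain ⟨G, -, hG, hGβ⟩ := hc g hg
  have hGa : ∀ β ∈ I, WithinFactor (c * C) (G β) a := fun β hβ ↦ (hGβ β).symm.trans (hCa β hβ)
  have hsupp : G.support ⊆ I := by
    intro β hβ
    by_contra hβI
    have hempty : S ∩ δ ⁻¹' {β} = ∅ :=
      eq_empty_of_forall_notMem fun x hx ↦ hβI (hx.2 ▸ hSI hx.1)
    have hle := (hGβ β).2
    rw [hempty, setLIntegral_empty, mul_zero, nonpos_iff_eq_zero] at hle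
    exact hβ hle
  rw [mul_assoc, ← setLIntegral_const]
  refine hG.trans ?_
  rw [← setLIntegral_eq_of_support_subset hsupp]
  exact WithinFactor.lintegral (ae_restrict_of_forall_mem hI hGa)

end CoareaComparable

variable {X F : Type*} [MetricSpace X] [MeasurableSpace X] [BorelSpace X]
  [NormedAddCommGroup F] [NormedSpace ℝ F] [FiniteDimensional ℝ F] [MeasurableSpace F]
  [BorelSpace F]

theorem exists_measurable_comp_eqOn {α β : Type*} [MeasurableSpace α] [MeasurableSpace β]
    {S : Set α} {Φ : α → β} (hΦ : MeasurableEmbedding (S.domRestrict Φ)) {g : α → ℝ≥0∞}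
    (hg : Measurable g) :
    ∃ h : β → ℝ≥0∞, Measurable h ∧ EqOn (h ∘ Φ) g S ∧ h.support ⊆ Φ '' S := by
  refine ⟨Function.extend (S.domRestrict Φ) (S.domRestrict g) 0,
    hΦ.measurable_extend (hg.comp measurable_subtype_coe) measurable_const, fun x hx ↦ ?_,
    fun w hw ↦ ?_⟩
  · exact hΦ.injective.extend_apply (S.domRestrict g) 0 ⟨x, hx⟩
  · by_contra hwS
    rw [← range_domRestrict] at hwS
    exact hw (Function.extend_apply' _ _ w hwS)

theorem exists_withinFactor_lintegral_hausdorffMeasure_prod_real (F : Type*)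
    [NormedAddCommGroup F] [NormedSpace ℝ F] [FiniteDimensional ℝ F] [MeasurableSpace F]
    [BorelSpace F] :
    ∃ c, ∀ h : F × ℝ → ℝ≥0∞, Measurable h → WithinFactor c
      (∫⁻ w, h w ∂μH[finrank ℝ F + 1]) (∫⁻ β, ∫⁻ v, h (v, β) ∂μH[finrank ℝ F]) := by
  obtain ⟨c, hc⟩ := exists_withinFactor_setLIntegral_of_isAddHaarMeasure
    (μH[finrank ℝ (F × ℝ)] : Measure (F × ℝ)) ((μH[finrank ℝ F] : Measure F).prod volume)
  refine ⟨c, fun h hh ↦ ?_⟩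
  have hprod := hc univ h
  rwa [setLIntegral_univ, setLIntegral_univ, Module.finrank_prod, Module.finrank_self,
    Nat.cast_add_one, lintegral_prod_symm _ hh.aemeasurable] at hprod

theorem coareaComparable_of_biLipschitz [PolishSpace X] {p : X → F} {δ : X → ℝ} {S : Set X}
    (hS : MeasurableSet S) (hδ : Measurable δ) {k k' : ℝ≥0}
    (hlip : LipschitzOnWith k (fun x ↦ (p x, δ x)) S)
    (hanti : AntilipschitzWith k' (S.domRestrict fun x ↦ (p x, δ x))) :
    CoareaComparable (finrank ℝ F) δ S := by
  have hlevel : ∀ β, MeasurableSet (S ∩ δ ⁻¹' {β}) := fun β ↦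
    hS.inter (hδ (measurableSet_singleton β))
  have hlip_level : ∀ β, LipschitzOnWith k p (S ∩ δ ⁻¹' {β}) := fun β x hx z hz ↦
    (le_max_left _ _).trans (hlip hx.1 hz.1)
  have hanti_level : ∀ β, AntilipschitzWith k' ((S ∩ δ ⁻¹' {β}).domRestrict p) := by
    rintro β ⟨x, hx, rfl⟩ ⟨z, hz, hzx⟩
    refine (hanti ⟨x, hx⟩ ⟨z, hz⟩).trans_eq ?_
    have hδzx : δ z = δ x := hzx
    simp [Prod.edist_eq, hδzx]
  obtain ⟨c, hc⟩ := exists_withinFactor_lintegral_hausdorffMeasure_prod_real F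
  set d : ℝ := (finrank ℝ F : ℝ)
  have hd : 0 ≤ d := Nat.cast_nonneg _
  let b : ℝ → ℝ≥0 := fun s ↦ max (k ^ s) (k' ^ s)
  refine ⟨max (b (d + 1) * c) (b d), fun g hg ↦ ?_⟩
  obtain ⟨h, hh, hhg, hsupp⟩ := exists_measurable_comp_eqOn
    (hlip.continuousOn.measurableEmbedding hS (injOn_iff_injective.2 hanti.injective)) hg
  refine ⟨fun β ↦ ∫⁻ v, h (v, β) ∂μH[d], hh.lintegral_prod_left', ?_, fun β ↦ ?_⟩
  · rw [← setLIntegral_congr_fun hS hhg]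
    exact ((withinFactor_setLIntegral_comp_hausdorffMeasure hS hlip hanti (by positivity) hh
      hsupp).trans (hc h hh)).mono (le_max_left _ _)
  · have hhg_level : EqOn (fun x ↦ h (p x, β)) g (S ∩ δ ⁻¹' {β}) := by
      rintro x ⟨hx, rfl⟩
      exact hhg hx
    have hsupp_level : (fun v ↦ h (v, β)).support ⊆ p '' (S ∩ δ ⁻¹' {β}) := by
      intro v hv
      obtain ⟨x, hx, hxv⟩ := hsupp hv
      exact ⟨x, ⟨hx, congrArg Prod.snd hxv⟩, congrArg Prod.fst hxv⟩
    rw [← setLIntegral_congr_fun (hlevel β) hhg_level]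
    exact (withinFactor_setLIntegral_comp_hausdorffMeasure (hlevel β) (hlip_level β)
      (hanti_level β) hd (hh.comp measurable_prodMk_right) hsupp_level).mono (le_max_right _ _)

end Coarea

section Chart

/-- On `S`, moving by a time `t ≤ T` in the direction `e` increases `δ` by at least `a * t`; for the
distance to the boundary of a domain this expresses that `e` points into the domain. -/
def GrowsAlong {E : Type*} [NormedAddCommGroup E] [NormedSpace ℝ E] (δ : E → ℝ) (e : E)
    (a T : ℝ) (S : Set E) : Prop :=
  ∀ z ∈ S, ∀ t ∈ Icc 0 T, δ z + a * t ≤ δ (z + t • e)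

variable {E : Type*} [NormedAddCommGroup E] [InnerProductSpace ℝ E]

theorem dist_orthogonalProjectionOnto_orthogonal {e : E} (he : ‖e‖ = 1) (x z : E) :
    dist ((ℝ ∙ e)ᗮ.orthogonalProjectionOnto x) ((ℝ ∙ e)ᗮ.orthogonalProjectionOnto z) =
      dist x (z + ⟪e, x - z⟫_ℝ • e) := by
  rw [dist_eq_norm, ← map_sub, ← Submodule.norm_coe, ← Submodule.starProjection_apply,
    Submodule.starProjection_orthogonal_val, Submodule.starProjection_unit_singleton ℝ he,
    dist_eq_norm, sub_sub]

theorem GrowsAlong.dist_le {δ : E → ℝ} {e : E} {a T : ℝ} {S : Set E} {k : ℝ≥0}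
    (h : GrowsAlong δ e a T S) (he : ‖e‖ = 1) (ha : 0 < a) (hδ : LipschitzWith k δ)
    (hT : ∀ x ∈ S, ∀ z ∈ S, dist x z ≤ T) {x z : E} (hx : x ∈ S) (hz : z ∈ S) :
    dist x z ≤ (1 + k / a) * dist ((ℝ ∙ e)ᗮ.orthogonalProjectionOnto x)
      ((ℝ ∙ e)ᗮ.orthogonalProjectionOnto z) + 1 / a * dist (δ x) (δ z) := by
  wlog ht : 0 ≤ ⟪e, x - z⟫_ℝ generalizing x z
  · have hzx := this hz hx (by rw [← neg_sub, inner_neg_right]; linarith)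
    rwa [dist_comm x, dist_comm (δ x), dist_comm ((ℝ ∙ e)ᗮ.orthogonalProjectionOnto x)]
  rw [dist_orthogonalProjectionOnto_orthogonal he]
  set t := ⟪e, x - z⟫_ℝ
  have htT : t ≤ T :=
    calc t ≤ ‖e‖ * ‖x - z‖ := real_inner_le_norm _ _
      _ = dist x z := by rw [he, one_mul, dist_eq_norm]
      _ ≤ T := hT x hx z hz
  have hgrow : a * t ≤ k * dist x (z + t • e) + dist (δ x) (δ z) :=
    calc a * t ≤ δ (z + t • e) - δ z := by linarith [h z hz t ⟨ht, htT⟩]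
      _ ≤ dist (δ (z + t • e)) (δ z) := le_abs_self _
      _ ≤ dist (δ x) (δ (z + t • e)) + dist (δ x) (δ z) := dist_triangle_left _ _ _
      _ ≤ k * dist x (z + t • e) + dist (δ x) (δ z) := by gcongr; exact hδ.dist_le_mul _ _
  calc dist x z ≤ dist x (z + t • e) + dist (z + t • e) z := dist_triangle _ _ _
    _ = dist x (z + t • e) + t := by
      rw [dist_self_add_left, norm_smul, he, mul_one, Real.norm_of_nonneg ht]
    _ ≤ dist x (z + t • e) + (k * dist x (z + t • e) + dist (δ x) (δ z)) / a := by
      gcongr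
      rwa [le_div_iff₀' ha]
    _ = (1 + k / a) * dist x (z + t • e) + 1 / a * dist (δ x) (δ z) := by ring

theorem GrowsAlong.exists_antilipschitzWith {δ : E → ℝ} {e : E} {a T : ℝ} {S : Set E} {k : ℝ≥0}
    (h : GrowsAlong δ e a T S) (he : ‖e‖ = 1) (ha : 0 < a) (hδ : LipschitzWith k δ)
    (hT : ∀ x ∈ S, ∀ z ∈ S, dist x z ≤ T) :
    ∃ k', AntilipschitzWith k'
      (S.domRestrict fun x ↦ ((ℝ ∙ e)ᗮ.orthogonalProjectionOnto x, δ x)) := by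
  lift a to ℝ≥0 using ha.le
  refine ⟨1 + k / a + 1 / a, AntilipschitzWith.of_le_mul_dist fun ⟨x, hx⟩ ⟨z, hz⟩ ↦ ?_⟩
  refine (h.dist_le he ha hδ hT hx hz).trans ?_
  push_cast
  rw [add_mul _ (1 / (a : ℝ))]
  gcongr
  · exact le_max_left _ _
  · exact le_max_right _ _

variable [FiniteDimensional ℝ E] [MeasurableSpace E] [BorelSpace E]

theorem GrowsAlong.coareaComparable {δ : E → ℝ} {e : E} {a T : ℝ} {S : Set E} {k : ℝ≥0}
    (h : GrowsAlong δ e a T S) (he : ‖e‖ = 1) (ha : 0 < a) (hδ : LipschitzWith k δ)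
    (hT : ∀ x ∈ S, ∀ z ∈ S, dist x z ≤ T) (hS : MeasurableSet S) :
    CoareaComparable (finrank ℝ E - 1) δ S := by
  have hfinrank : finrank ℝ (ℝ ∙ e)ᗮ + 1 = finrank ℝ E := by
    rw [← Submodule.finrank_add_finrank_orthogonal (ℝ ∙ e),
      finrank_span_singleton (norm_ne_zero_iff.1 (he ▸ one_ne_zero)), add_comm]
  have hproj : LipschitzWith 1 fun x ↦ (ℝ ∙ e)ᗮ.orthogonalProjectionOnto x := by
    refine LipschitzWith.of_dist_le_mul fun x z ↦ ?_
    rw [dist_eq_norm, dist_eq_norm, ← map_sub, NNReal.coe_one, one_mul]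
    exact (ℝ ∙ e)ᗮ.norm_orthogonalProjectionOnto_apply_le _
  obtain ⟨k', hanti⟩ := h.exists_antilipschitzWith he ha hδ hT
  rw [← hfinrank, Nat.cast_add_one, add_sub_cancel_right]
  exact coareaComparable_of_biLipschitz hS hδ.continuous.measurable
    (hproj.prodMk hδ).lipschitzOnWith hanti

end Chart

section ExteriorCone

variable {E : Type*} [NormedAddCommGroup E] [NormedSpace ℝ E]

/-- The uniform exterior cone condition at `p`: there is a fixed truncated cone, with axis `-e` and
aperture `a`, lying outside `Ω` whenever its vertex is a point near `p` outside `Ω`. The cone is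
written as the union over `t ≥ 0` of the balls of radius `a * t` around the points `q - t • e` of
its axis, and truncated to the ball `ball p r`. -/
def HasExteriorConeAt (Ω : Set E) (p : E) : Prop :=
  ∃ e : E, ‖e‖ = 1 ∧ ∃ a > 0, ∃ r > 0, ∀ q ∈ ball p r \ Ω, ∀ t : ℝ, 0 ≤ t →
    Disjoint (closedBall (q - t • e) (a * t) ∩ ball p r) Ω

theorem exists_norm_eq_one_apply_eq_neg_norm {H : Type*} [NormedAddCommGroup H]
    [InnerProductSpace ℝ H] [CompleteSpace H] {f : H →L[ℝ] ℝ} (hf : f ≠ 0) :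
    ∃ e, ‖e‖ = 1 ∧ f e = -‖f‖ := by
  obtain ⟨v, rfl⟩ := (InnerProductSpace.toDual ℝ H).surjective f
  have hv : ‖v‖ ≠ 0 := by simpa using hf
  refine ⟨-(‖v‖⁻¹ • v), ?_, ?_⟩
  · rw [norm_neg, norm_smul, norm_inv, norm_norm, inv_mul_cancel₀ hv]
  · rw [InnerProductSpace.toDual_apply_apply, inner_neg_right, inner_smul_right,
      real_inner_self_eq_norm_sq, LinearIsometryEquiv.norm_map, sq, inv_mul_cancel_left₀ hv]

theorem exists_forall_ball_le_of_hasStrictFDerivAt {f : E → ℝ} {f' : E →L[ℝ] ℝ} {p e : E}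
    (hf : HasStrictFDerivAt f f' p) (hf' : f' ≠ 0) (he : ‖e‖ = 1) (hfe : f' e = -‖f'‖) :
    ∃ r > 0, ∀ x ∈ ball p r, ∀ y ∈ ball p r, ∀ t : ℝ, 0 ≤ t → dist y (x - t • e) ≤ t / 2 →
      f x ≤ f y := by
  obtain ⟨r, hr, hball⟩ := Metric.eventually_nhds_iff_ball.1
    (hf.isLittleO.def (div_pos (norm_pos_iff.2 hf') three_pos))
  refine ⟨r, hr, fun x hx y hy t ht hyx ↦ ?_⟩
  have hlin : |f y - f x - f' (y - x)| ≤ ‖f'‖ / 3 * ‖y - x‖ := by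
    refine hball (y, x) ?_
    rw [← ball_prod_same]
    exact ⟨hy, hx⟩
  obtain ⟨w, rfl⟩ : ∃ w, y = x - t • e + w := ⟨y - (x - t • e), by abel⟩
  rw [dist_self_add_left] at hyx
  have hyx_eq : x - t • e + w - x = w - t • e := by abel
  rw [hyx_eq] at hlin
  have hnorm : ‖w - t • e‖ ≤ 3 * t / 2 :=
    calc ‖w - t • e‖ ≤ ‖w‖ + ‖t • e‖ := norm_sub_le _ _
      _ ≤ t / 2 + t := by
        rw [norm_smul, he, mul_one, Real.norm_of_nonneg ht]
        gcongr
      _ = 3 * t / 2 := by ring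
  have hderiv : ‖f'‖ * t / 2 ≤ f' (w - t • e) :=
    calc ‖f'‖ * t / 2 = -(‖f'‖ * (t / 2)) + t * ‖f'‖ := by ring
      _ ≤ -(‖f'‖ * ‖w‖) + t * ‖f'‖ := by gcongr
      _ ≤ f' w + t * ‖f'‖ := by
        gcongr
        exact (abs_le.1 (f'.le_opNorm w)).1
      _ = f' (w - t • e) := by rw [map_sub, map_smul, hfe, smul_eq_mul]; ring
  have hsmall : ‖f'‖ / 3 * ‖w - t • e‖ ≤ ‖f'‖ * t / 2 :=
    calc ‖f'‖ / 3 * ‖w - t • e‖ ≤ ‖f'‖ / 3 * (3 * t / 2) := by gcongr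
      _ = ‖f'‖ * t / 2 := by ring
  linarith [(abs_le.1 hlin).1]

theorem hasExteriorConeAt_of_hasStrictFDerivAt {H : Type*} [NormedAddCommGroup H]
    [InnerProductSpace ℝ H] [CompleteSpace H] {Ω U : Set H} {p : H} (hU : U ∈ 𝓝 p) {f : H → ℝ}
    {f' : H →L[ℝ] ℝ} (hf : HasStrictFDerivAt f f' p) (hf' : f' ≠ 0)
    (hΩU : Ω ∩ U = {x ∈ U | f x < 0}) : HasExteriorConeAt Ω p := by
  obtain ⟨e, he, hfe⟩ := exists_norm_eq_one_apply_eq_neg_norm hf'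
  obtain ⟨r, hr, hcone⟩ := exists_forall_ball_le_of_hasStrictFDerivAt hf hf' he hfe
  obtain ⟨r', hr', hrU⟩ := Metric.mem_nhds_iff.1 hU
  have hmem : ∀ x ∈ ball p (min r r'), x ∈ Ω ↔ f x < 0 := fun x hx ↦ by
    have hxU : x ∈ U := hrU (ball_subset_ball (min_le_right _ _) hx)
    simpa [hxU] using Set.ext_iff.1 hΩU x
  have hsub : ball p (min r r') ⊆ ball p r := ball_subset_ball (min_le_left _ _)
  refine ⟨e, he, 1 / 2, by norm_num, min r r', lt_min hr hr', fun q ⟨hq, hqΩ⟩ t ht ↦ ?_⟩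
  refine disjoint_left.2 fun y ⟨hyq, hy⟩ hyΩ ↦ ?_
  rw [hmem q hq, not_lt] at hqΩ
  rw [hmem y hy] at hyΩ
  rw [mem_closedBall, one_div_mul_eq_div] at hyq
  exact (hqΩ.trans (hcone q (hsub hq) y (hsub hy) t ht hyq)).not_gt hyΩ

theorem HasC2Boundary.hasExteriorConeAt {N : ℕ} {Ω : Set (EuclideanSpace ℝ (Fin N))}
    (h : HasC2Boundary Ω) {p : EuclideanSpace ℝ (Fin N)} (hp : p ∈ frontier Ω) :
    HasExteriorConeAt Ω p := by
  obtain ⟨U, f, hU, hpU, hf, hf', hΩU⟩ := h p hp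
  have hUp : U ∈ 𝓝 p := hU.mem_nhds hpU
  exact hasExteriorConeAt_of_hasStrictFDerivAt hUp
    ((hf.contDiffAt hUp).hasStrictFDerivAt (by norm_num)) (hf' p hpU) hΩU

variable [FiniteDimensional ℝ E]

theorem infDist_frontier_le_dist {Ω : Set E} {x y : E} (hx : x ∈ Ω) (hy : y ∉ Ω) :
    infDist x (frontier Ω) ≤ dist x y := by
  obtain ⟨z, hz, hxz⟩ := exists_mem_frontier_infDist_compl_eq_dist hx
    (ne_univ_iff_exists_notMem Ω |>.2 ⟨y, hy⟩)
  calc infDist x (frontier Ω) ≤ dist x z := infDist_le_dist_of_mem hz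
    _ = infDist x Ωᶜ := hxz.symm
    _ ≤ dist x y := infDist_le_dist_of_mem hy

theorem infDist_frontier_add_le_dist {Ω : Set E} {x c : E} {s : ℝ} (hx : x ∈ Ω) (hs : 0 ≤ s)
    (hc : Disjoint (closedBall c s) Ω) : infDist x (frontier Ω) + s ≤ dist x c := by
  have hxc : s < dist x c := not_le.1 fun h ↦ disjoint_left.1 hc h hx
  obtain ⟨y, hxy, hyc⟩ :=
    exists_dist_le_le (sub_nonneg.2 hxc.le) hs (add_sub_cancel s (dist x c)).ge
  linarith [infDist_frontier_le_dist hx (disjoint_left.1 hc hyc)]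

/-- The ball of radius `a * t` around `q - t • e`, where `q` is a boundary point nearest to
`z + t • e`, misses `Ω`, and its centre has the same distance to `z` as `q` has to `z + t • e`. -/
theorem HasExteriorConeAt.exists_growsAlong {Ω : Set E} {p : E} (h : HasExteriorConeAt Ω p)
    (hΩ : IsOpen Ω) (hp : p ∈ frontier Ω) :
    ∃ e : E, ‖e‖ = 1 ∧ ∃ a > 0, ∃ ρ > 0,
      GrowsAlong (infDist · (frontier Ω)) e a (2 * ρ) (Ω ∩ ball p ρ) := by
  obtain ⟨e, he, a, ha, r, hr, hcone⟩ := h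
  obtain ⟨ρ, hρ, hρr⟩ : ∃ ρ > 0, (8 + 2 * a) * ρ < r := by
    refine ⟨r / (9 + 2 * a), by positivity, ?_⟩
    rw [← mul_div_assoc, div_lt_iff₀ (by positivity)]
    nlinarith
  have haρ : 0 < a * ρ := by positivity
  refine ⟨e, he, a, ha, ρ, hρ, fun z ⟨hzΩ, hzp⟩ t ⟨ht, htρ⟩ ↦ ?_⟩
  have hte : ‖t • e‖ = t := by rw [norm_smul, he, mul_one, Real.norm_of_nonneg ht]
  obtain ⟨q, hq, hzq⟩ := isClosed_frontier.exists_infDist_eq_dist ⟨p, hp⟩ (z + t • e)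
  have hqΩ : q ∉ Ω := (hΩ.frontier_eq ▸ hq).2
  have hqp : dist q p ≤ 6 * ρ := by
    have hzp' : dist (z + t • e) p ≤ 3 * ρ := by
      have htri := dist_triangle (z + t • e) z p
      rw [dist_self_add_left, hte] at htri
      linarith [mem_ball.1 hzp]
    have hqz : dist (z + t • e) q ≤ dist (z + t • e) p := hzq ▸ infDist_le_dist_of_mem hp
    linarith [dist_triangle_left q p (z + t • e)]
  have hball : closedBall (q - t • e) (a * t) ⊆ ball p r := by
    refine closedBall_subset_ball' ?_
    have htri := dist_triangle (q - t • e) q p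
    rw [dist_self_sub_left, hte] at htri
    nlinarith
  have hdisj : Disjoint (closedBall (q - t • e) (a * t)) Ω := by
    have hqr : q ∈ ball p r := by rw [mem_ball]; nlinarith
    simpa only [inter_eq_left.2 hball] using hcone q ⟨hqr, hqΩ⟩ t ht
  calc infDist z (frontier Ω) + a * t ≤ dist z (q - t • e) :=
        infDist_frontier_add_le_dist hzΩ (by positivity) hdisj
    _ = dist (z + t • e) q := by rw [dist_eq_norm, dist_eq_norm]; congr 1; abel
    _ = infDist (z + t • e) (frontier Ω) := hzq.symm

end ExteriorCone

section Collar

theorem infDist_frontier_pos {X : Type*} [PseudoMetricSpace X] {Ω : Set X} (hΩ : IsOpen Ω)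
    (hne : (frontier Ω).Nonempty) {x : X} (hx : x ∈ Ω) : 0 < infDist x (frontier Ω) := by
  refine (isClosed_frontier.notMem_iff_infDist_pos hne).1 fun h ↦ ?_
  rw [hΩ.frontier_eq] at h
  exact h.2 hx

variable {E : Type*} [NormedAddCommGroup E] [InnerProductSpace ℝ E] [FiniteDimensional ℝ E]
  [MeasurableSpace E] [BorelSpace E] {Ω : Set E}

theorem HasExteriorConeAt.exists_coareaComparable_nhds {p : E} (h : HasExteriorConeAt Ω p)
    (hΩ : IsOpen Ω) (hp : p ∈ frontier Ω) :
    ∃ V, IsOpen V ∧ p ∈ V ∧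
      CoareaComparable (finrank ℝ E - 1) (infDist · (frontier Ω)) (Ω ∩ V) := by
  obtain ⟨e, he, a, ha, ρ, hρ, hgrow⟩ := h.exists_growsAlong hΩ hp
  refine ⟨ball p ρ, isOpen_ball, mem_ball_self hρ, ?_⟩
  refine hgrow.coareaComparable he ha (lipschitz_infDist_pt _) (fun x hx z hz ↦ ?_)
    (hΩ.inter isOpen_ball).measurableSet
  linarith [dist_triangle_right x z p, mem_ball.1 hx.2, mem_ball.1 hz.2]

theorem exists_coareaComparable_collar (hΩ : IsOpen Ω) (hfr : IsCompact (frontier Ω))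
    (hcone : ∀ p ∈ frontier Ω, HasExteriorConeAt Ω p) :
    ∃ η > 0, CoareaComparable (finrank ℝ E - 1) (infDist · (frontier Ω))
      (Ω ∩ thickening η (frontier Ω)) := by
  obtain ⟨V, hV, hfrV, hcoarea⟩ : ∃ V, IsOpen V ∧ frontier Ω ⊆ V ∧
      CoareaComparable (finrank ℝ E - 1) (infDist · (frontier Ω)) (Ω ∩ V) := by
    refine hfr.induction_on (p := fun s ↦ ∃ V, IsOpen V ∧ s ⊆ V ∧
      CoareaComparable (finrank ℝ E - 1) (infDist · (frontier Ω)) (Ω ∩ V))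
      ⟨∅, isOpen_empty, empty_subset _, by rw [inter_empty]; exact .empty⟩ ?_ ?_ fun p hp ↦ ?_
    · rintro s t hst ⟨V, hV, htV, h⟩
      exact ⟨V, hV, hst.trans htV, h⟩
    · rintro s t ⟨V, hV, hsV, h⟩ ⟨V', hV', htV', h'⟩
      exact ⟨V ∪ V', hV.union hV', union_subset_union hsV htV',
        by rw [inter_union_distrib_left]; exact h.union h'⟩
    · obtain ⟨V, hV, hpV, h⟩ := (hcone p hp).exists_coareaComparable_nhds hΩ hp
      exact ⟨V, mem_nhdsWithin_of_mem_nhds (hV.mem_nhds hpV), V, hV, Subset.rfl, h⟩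
  obtain ⟨η, hη, hηV⟩ := hfr.exists_thickening_subset_open hV hfrV
  exact ⟨η, hη, hcoarea.mono_set (inter_subset_inter_right _ hηV)
    (hΩ.inter isOpen_thickening).measurableSet⟩

theorem exists_withinFactor_setLIntegral_collar (hΩ : IsOpen Ω) (hfr : IsCompact (frontier Ω))
    (hne : (frontier Ω).Nonempty) (hcone : ∀ p ∈ frontier Ω, HasExteriorConeAt Ω p) {ε : ℝ}
    (hε : 0 < ε) (C : ℝ≥0) (μ : Measure E) [μ.IsAddHaarMeasure] :
    ∃ η > 0, ∃ c, ∀ g : E → ℝ≥0∞, Measurable g →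
      (∀ β ∈ Ioo 0 ε, WithinFactor C
        (∫⁻ x in Ω ∩ (infDist · (frontier Ω)) ⁻¹' {β}, g x ∂μH[finrank ℝ E - 1]) 1) →
      WithinFactor c (∫⁻ x in Ω ∩ thickening η (frontier Ω), g x ∂μ) 1 := by
  obtain ⟨η₀, hη₀, hcoarea⟩ := exists_coareaComparable_collar hΩ hfr hcone
  set δ : E → ℝ := (infDist · (frontier Ω))
  obtain ⟨η, hη, hηη₀, hηε⟩ : ∃ η > 0, η ≤ η₀ ∧ η ≤ ε :=
    ⟨min η₀ ε, lt_min hη₀ hε, min_le_left _ _, min_le_right _ _⟩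
  have hlt : ∀ x, x ∈ thickening η (frontier Ω) ↔ δ x < η := fun x ↦
    mem_thickening_iff_infDist_lt hne
  have hmaps : MapsTo δ (Ω ∩ thickening η (frontier Ω)) (Ioo 0 η) := fun x hx ↦
    ⟨infDist_frontier_pos hΩ hne hx.1, (hlt x).1 hx.2⟩
  have hlevel : ∀ β ∈ Ioo 0 η,
      Ω ∩ thickening η (frontier Ω) ∩ δ ⁻¹' {β} = Ω ∩ δ ⁻¹' {β} := by
    intro β hβ
    have hsub : δ ⁻¹' {β} ⊆ thickening η (frontier Ω) := by
      rintro x rfl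
      exact (hlt x).2 hβ.2
    rw [inter_assoc, inter_eq_right.2 hsub]
  obtain ⟨c, hc⟩ := (hcoarea.mono_set (inter_subset_inter_right _ (thickening_mono hηη₀ _))
    (hΩ.inter isOpen_thickening).measurableSet).exists_withinFactor_mul_volume
      measurableSet_Ioo hmaps
  obtain ⟨c', hc'⟩ := exists_withinFactor_one (a := 1 * volume (Ioo 0 η)) (by simp [hη]) (by simp)
  obtain ⟨c'', hc''⟩ := exists_withinFactor_setLIntegral_of_isAddHaarMeasure μ μH[finrank ℝ E]
  refine ⟨η, hη, c'' * (c * C * c'), fun g hg hgC ↦ (hc'' _ g).trans ?_⟩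
  rw [← sub_add_cancel (finrank ℝ E : ℝ) 1]
  refine (hc g hg C 1 fun β hβ ↦ ?_).trans hc'
  rw [hlevel β hβ]
  exact hgC β ⟨hβ.1, hβ.2.trans_le hηε⟩

end Collar

section Kernel

theorem isCompact_frontier_of_isBounded {X : Type*} [PseudoMetricSpace X] [ProperSpace X]
    {Ω : Set X} (hΩb : Bornology.IsBounded Ω) : IsCompact (frontier Ω) :=
  hΩb.isCompact_closure.of_isClosed_subset isClosed_frontier frontier_subset_closure

theorem isCompact_sdiff_thickening_frontier {X : Type*} [PseudoMetricSpace X] [ProperSpace X]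
    {Ω : Set X} (hΩ : IsOpen Ω) (hΩb : Bornology.IsBounded Ω) {η : ℝ} (hη : 0 < η) :
    IsCompact (Ω \ thickening η (frontier Ω)) := by
  have hclosure : Ω \ thickening η (frontier Ω) = closure Ω \ thickening η (frontier Ω) := by
    rw [← sdiff_union_of_subset subset_closure, union_sdiff_distrib, ← hΩ.frontier_eq,
      sdiff_eq_empty.2 (self_subset_thickening hη _), empty_union]
  rw [hclosure]
  exact hΩb.isCompact_closure.diff isOpen_thickening

variable {E Y : Type*} [NormedAddCommGroup E] [InnerProductSpace ℝ E] [FiniteDimensional ℝ E]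
  [MeasurableSpace E] [BorelSpace E] [TopologicalSpace Y] {Ω : Set E} {T : Set Y}

theorem exists_setLIntegral_sdiff_thickening_le (hΩ : IsOpen Ω) (hΩb : Bornology.IsBounded Ω)
    (hT : IsCompact T) {k : E → Y → ℝ≥0} (hk : ContinuousOn (Function.uncurry k) (Ω ×ˢ T))
    (μ : Measure E) [IsFiniteMeasureOnCompacts μ] {η : ℝ} (hη : 0 < η) :
    ∃ M : ℝ≥0, ∀ y ∈ T, ∫⁻ x in Ω \ thickening η (frontier Ω), k x y ∂μ ≤ M := by
  have hQ := isCompact_sdiff_thickening_frontier hΩ hΩb hη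
  obtain ⟨M, hM⟩ := (hQ.prod hT).bddAbove_image (hk.mono (prod_mono sdiff_subset Subset.rfl))
  refine ⟨M * (μ (Ω \ thickening η (frontier Ω))).toNNReal, fun y hy ↦ ?_⟩
  rw [ENNReal.coe_mul, ENNReal.coe_toNNReal hQ.measure_ne_top, ← setLIntegral_const]
  refine setLIntegral_mono' hQ.measurableSet fun x hx ↦ ?_
  exact_mod_cast hM (mem_image_of_mem _ (mk_mem_prod hx hy))

theorem exists_withinFactor_setLIntegral_one (hΩ : IsOpen Ω) (hΩb : Bornology.IsBounded Ω)
    (hcone : ∀ p ∈ frontier Ω, HasExteriorConeAt Ω p) (hT : IsCompact T) {k : E → Y → ℝ≥0}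
    (hk : ContinuousOn (Function.uncurry k) (Ω ×ˢ T)) {C : ℝ≥0} {ε : ℝ} (hε : 0 < ε)
    (hslice : ∀ y ∈ T, ∀ β ∈ Ioo 0 ε, WithinFactor C
      (∫⁻ x in Ω ∩ (infDist · (frontier Ω)) ⁻¹' {β}, k x y ∂μH[finrank ℝ E - 1]) 1)
    (μ : Measure E) [μ.IsAddHaarMeasure] :
    ∃ c, ∀ y ∈ T, WithinFactor c (∫⁻ x in Ω, k x y ∂μ) 1 := by
  rcases T.eq_empty_or_nonempty with rfl | ⟨y₀, hy₀⟩
  · exact ⟨0, fun y hy ↦ hy.elim⟩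
  have hne : (frontier Ω).Nonempty := by
    by_contra! hempty
    have hmass := (hslice y₀ hy₀ (ε / 2) ⟨half_pos hε, half_lt_self hε⟩).2
    simp [hempty, preimage_const_of_notMem, (half_pos hε).ne] at hmass
  have hfr : IsCompact (frontier Ω) := isCompact_frontier_of_isBounded hΩb
  obtain ⟨η, hη, c, hcollar⟩ :=
    exists_withinFactor_setLIntegral_collar hΩ hfr hne hcone hε C μ
  obtain ⟨M, hM⟩ := exists_setLIntegral_sdiff_thickening_le hΩ hΩb hT hk μ hη
  refine ⟨c + M, fun y hy ↦ ?_⟩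
  have hky : Measurable (Ω.indicator fun x ↦ (k x y : ℝ≥0∞)) := by
    classical
    rw [← piecewise_eq_indicator]
    refine ContinuousOn.measurable_piecewise ?_ continuousOn_const hΩ.measurableSet
    exact ENNReal.continuous_coe.comp_continuousOn
      (hk.comp (f := fun x ↦ (x, y)) (by fun_prop) fun x hx ↦ ⟨hx, hy⟩)
  have hcollar_y := hcollar _ hky
  simp only [setLIntegral_indicator hΩ.measurableSet, ← inter_assoc, inter_self] at hcollar_y
  refine (hcollar_y (hslice y hy)).add_le_of_one (lintegral_mono_set inter_subset_left) ?_
  calc ∫⁻ x in Ω, k x y ∂μ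
      = ∫⁻ x in Ω ∩ thickening η (frontier Ω), k x y ∂μ +
          ∫⁻ x in Ω \ thickening η (frontier Ω), k x y ∂μ :=
        (lintegral_inter_add_sdiff _ _ isOpen_thickening.measurableSet).symm
    _ ≤ ∫⁻ x in Ω ∩ thickening η (frontier Ω), k x y ∂μ + M := by gcongr; exact hM y hy

theorem stmt1_general [MeasurableSpace Y] [OpensMeasurableSpace Y] [T2Space Y] (hΩ : IsOpen Ω)
    (hΩb : Bornology.IsBounded Ω) (hcone : ∀ p ∈ frontier Ω, HasExteriorConeAt Ω p)
    (hT : IsCompact T) {W : E → ℝ≥0} {K : E → Y → ℝ≥0} (hW : ContinuousOn W Ω)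
    (hK : ContinuousOn (Function.uncurry K) (Ω ×ˢ T)) {C ε : ℝ} (hC : 0 < C) (hε : 0 < ε)
    (hbound : ∀ y ∈ T, ∀ β ∈ Ioo 0 ε,
      ENNReal.ofReal C⁻¹ ≤
        ∫⁻ x in {x ∈ Ω | infDist x (frontier Ω) = β}, W x * K x y ∂μH[finrank ℝ E - 1] ∧
      ∫⁻ x in {x ∈ Ω | infDist x (frontier Ω) = β}, W x * K x y ∂μH[finrank ℝ E - 1] ≤
        ENNReal.ofReal C) :
    ∃ C₁ : ℝ, 1 ≤ C₁ ∧ ∀ ν : Measure Y, SFinite ν →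
      ENNReal.ofReal C₁⁻¹ * ν T ≤ ∫⁻ x in Ω, W x * ∫⁻ y in T, K x y ∂ν ∧
      ∫⁻ x in Ω, W x * ∫⁻ y in T, K x y ∂ν ≤ ENNReal.ofReal C₁ * ν T := by
  have hk : ContinuousOn (Function.uncurry fun x y ↦ W x * K x y) (Ω ×ˢ T) :=
    (hW.comp continuousOn_fst fun _ hz ↦ hz.1).mul hK
  obtain ⟨c, hc⟩ := exists_withinFactor_setLIntegral_one hΩ hΩb hcone hT hk hε (C := C.toNNReal)
    (fun y hy β hβ ↦ by
      rw [withinFactor_toNNReal_iff hC, mul_one, mul_one]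
      exact_mod_cast hbound y hy β hβ) volume
  refine ⟨max c 1, le_max_right _ _, fun ν _ ↦ ?_⟩
  rw [← withinFactor_toNNReal_iff (by positivity)]
  simp only [← lintegral_const_mul' _ _ ENNReal.coe_ne_top, ← ENNReal.coe_mul]
  rw [← Measure.restrict_apply_univ T]
  refine withinFactor_lintegral_lintegral ?_
    (ae_restrict_of_forall_mem hT.measurableSet fun y hy ↦ (hc y hy).mono ?_)
  · rw [Measure.prod_restrict]
    exact (ENNReal.continuous_coe.comp_continuousOn hk).aemeasurable
      (hΩ.measurableSet.prod hT.measurableSet)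
  · exact NNReal.le_toNNReal_of_coe_le (le_max_left _ _)

end Kernel

theorem stmt1 {N : ℕ} (hN : 3 ≤ N) (Ω : Set (EuclideanSpace ℝ (Fin N)))
    (hΩo : IsOpen Ω) (hΩb : Bornology.IsBounded Ω) (hΩ2 : HasC2Boundary Ω)
    (W : EuclideanSpace ℝ (Fin N) → ℝ)
    (K : EuclideanSpace ℝ (Fin N) → EuclideanSpace ℝ (Fin N) → ℝ)
    (hWc : ContinuousOn W Ω)
    (hKc : ContinuousOn (Function.uncurry K) (Ω ×ˢ frontier Ω))
    (hWnn : ∀ x ∈ Ω, 0 ≤ W x)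
    (hKnn : ∀ x ∈ Ω, ∀ y ∈ frontier Ω, 0 ≤ K x y)
    (C ε : ℝ) (hC : 1 ≤ C) (hε : 0 < ε)
    (hbound : ∀ y ∈ frontier Ω, ∀ β ∈ Set.Ioo (0:ℝ) ε,
      ENNReal.ofReal C⁻¹ ≤
        (∫⁻ x in {x ∈ Ω | Metric.infDist x (frontier Ω) = β},
          ENNReal.ofReal (W x * K x y) ∂(μH[(N:ℝ) - 1])) ∧
      (∫⁻ x in {x ∈ Ω | Metric.infDist x (frontier Ω) = β},
          ENNReal.ofReal (W x * K x y) ∂(μH[(N:ℝ) - 1])) ≤ ENNReal.ofReal C) :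
    ∃ C₁ : ℝ, 1 ≤ C₁ ∧
      ∀ ν : Measure (EuclideanSpace ℝ (Fin N)), IsFiniteMeasure ν →
        ν (frontier Ω)ᶜ = 0 →
        ENNReal.ofReal C₁⁻¹ * ν (frontier Ω) ≤
          (∫⁻ x in Ω, ENNReal.ofReal (W x) *
            (∫⁻ y in frontier Ω, ENNReal.ofReal (K x y) ∂ν) ∂volume) ∧
        (∫⁻ x in Ω, ENNReal.ofReal (W x) *
            (∫⁻ y in frontier Ω, ENNReal.ofReal (K x y) ∂ν) ∂volume) ≤
          ENNReal.ofReal C₁ * ν (frontier Ω) := by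
  have hlevel (y β) : ∫⁻ x in {x ∈ Ω | infDist x (frontier Ω) = β},
      ENNReal.ofReal (W x * K x y) ∂μH[(N : ℝ) - 1] =
      ∫⁻ x in {x ∈ Ω | infDist x (frontier Ω) = β},
        (W x).toNNReal * (K x y).toNNReal ∂μH[(N : ℝ) - 1] :=
    setLIntegral_congr_fun (hΩo.measurableSet.inter <|
      (continuous_infDist_pt _).measurable (measurableSet_singleton β))
      fun x hx ↦ ENNReal.ofReal_mul (hWnn x hx.1)
  obtain ⟨C₁, hC₁, h⟩ := stmt1_general hΩo hΩb (fun p hp ↦ hΩ2.hasExteriorConeAt hp)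
    (isCompact_frontier_of_isBounded hΩb) (K := fun x y ↦ (K x y).toNNReal)
    (continuous_real_toNNReal.comp_continuousOn hWc)
    (continuous_real_toNNReal.comp_continuousOn hKc) (zero_lt_one.trans_le hC) hε
    fun y hy β hβ ↦ by
      rw [finrank_euclideanSpace_fin]
      exact hlevel y β ▸ hbound y hy β hβ
  exact ⟨C₁, hC₁, fun ν _ _ ↦ h ν inferInstance⟩
end

section
/- Let Ω ⊂ ℝ^N (N ≥ 3) be a bounded open set with C² boundary, W : Ω → [0,∞) and K : Ω × ∂Ω → [0,∞) Borel measurable, and C ≥ 1, ε > 0 such that: (a) C⁻¹ ≤ ∫_{Σ_β} W(x) K(x,y) dH^{N−1}(x) ≤ C for all y ∈ ∂Ω and β ∈ (0,ε); (b) for every r > 0, sup_{y ∈ ∂Ω} ∫_{Σ_β ∖ B_r(y)} W(x) K(x,y) dH^{N−1}(x) → 0 as β → 0⁺. For a finite positive Borel measure ν on ∂Ω set u_ν(x) := ∫_{∂Ω} K(x,y) dν(y), and let σ_β(ν) be the Borel measure on ℝ^N defined by σ_β(ν)(A) := ∫_{A ∩ Σ_β} W u_ν dH^{N−1}. If β_n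 → 0⁺ and the measures σ_{β_n}(ν) converge weakly to a finite measure μ on ℝ^N, then μ is concentrated on ∂Ω, and the measure ν′ := μ restricted to ∂Ω satisfies: ν ≪ ν′, ν′ ≪ ν, and C⁻¹ ≤ dν′/dν ≤ C ν-almost everywhere. -/
open MeasureTheory Metric Set Filter Topology

/-- The measure `σ_β(ν)` on `ℝ^N`: `σ_β(ν)(A) = ∫_{A ∩ Σ_β} W·u_ν dH^{N-1}`, where
`u_ν(x) = ∫_{∂Ω} K(x,y) dν(y)` and `Σ_β = {x ∈ Ω : dist(x,∂Ω) = β}`. -/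
noncomputable def sigmaMeas {N : ℕ} (Ω : Set (EuclideanSpace ℝ (Fin N)))
    (W : EuclideanSpace ℝ (Fin N) → ℝ)
    (K : EuclideanSpace ℝ (Fin N) → EuclideanSpace ℝ (Fin N) → ℝ)
    (ν : Measure (EuclideanSpace ℝ (Fin N))) (β : ℝ) :
    Measure (EuclideanSpace ℝ (Fin N)) :=
  ((μH[(N:ℝ) - 1]).restrict {x ∈ Ω | Metric.infDist x (frontier Ω) = β}).withDensity
    (fun x => ENNReal.ofReal (W x) * ∫⁻ y in frontier Ω, ENNReal.ofReal (K x y) ∂ν)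

/-!
Suppose the kernels `k(·, y)` have `ρ`-mass in `[c, C]`, of which only `o(1)` lies outside
`B_r(y)`, and let `σ = u_ν dρ` with `u_ν(x) = ∫ k(x, y) dν(y)`. Fubini's theorem gives
`c ν(F) ≤ σ(F_r) + o(1)` and `σ(G) ≤ C ν(G_r) + o(1)`, where `A_r` is the `r`-neighbourhood of
`A`. Passing to the weak limit `μ` and letting `r → 0` yields `c ν ≤ μ ≤ C ν`, and the density
bounds follow.

Fubini's theorem needs `H^{N-1}` to be σ-finite on the level sets `{dist(·, Γ) = β}`. If `p` is a
point of the closure of `Γ` nearest to `x`, the level set of `x` avoids the open ball of radius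
`β` about `p`. So where `x` and `p` vary little the level set satisfies a cone condition with axis
`x - p`, and is there a Lipschitz graph over a hyperplane.
-/

open scoped NNReal ENNReal BoundedContinuousFunction RealInnerProductSpace

section InnerProductSpace

variable {E : Type*} [NormedAddCommGroup E] [InnerProductSpace ℝ E]

lemma norm_le_abs_inner_add_norm_orthogonalProjection {e : E} (he : ‖e‖ = 1) (v : E) :
    ‖v‖ ≤ |⟪e, v⟫| + ‖(ℝ ∙ e)ᗮ.orthogonalProjectionOnto v‖ := by
  calc ‖v‖ = ‖⟪e, v⟫ • e + (ℝ ∙ e)ᗮ.starProjection v‖ := by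
        rw [← Submodule.starProjection_unit_singleton ℝ he,
          Submodule.starProjection_add_starProjection_orthogonal]
    _ ≤ ‖⟪e, v⟫ • e‖ + ‖(ℝ ∙ e)ᗮ.starProjection v‖ := norm_add_le _ _
    _ = |⟪e, v⟫| + ‖(ℝ ∙ e)ᗮ.orthogonalProjectionOnto v‖ := by
        rw [norm_smul, he, mul_one, Real.norm_eq_abs, Submodule.starProjection_apply,
          Submodule.coe_norm]

lemma antilipschitzWith_orthogonalProjection_of_abs_inner_le {e : E} (he : ‖e‖ = 1) {s : Set E}
    {a : ℝ} (ha : a < 1) (hs : ∀ x ∈ s, ∀ y ∈ s, |⟪e, x - y⟫| ≤ a * ‖x - y‖) :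
    AntilipschitzWith (1 - a).toNNReal⁻¹
      fun x : s => (ℝ ∙ e)ᗮ.orthogonalProjectionOnto (x : E) := by
  refine AntilipschitzWith.of_le_mul_dist fun x y => ?_
  rw [Subtype.dist_eq, dist_eq_norm, dist_eq_norm, ← map_sub, NNReal.coe_inv,
    Real.coe_toNNReal _ (sub_nonneg.2 ha.le), le_inv_mul_iff₀ (sub_pos.2 ha)]
  linarith [norm_le_abs_inner_add_norm_orthogonalProjection he (x - y : E), hs x x.2 y y.2]

lemma two_mul_inner_sub_le_norm_sq {p x y : E} (h : ‖x - p‖ ≤ ‖y - p‖) :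
    2 * ⟪x - p, x - y⟫ ≤ ‖x - y‖ ^ 2 := by
  have hexpand := norm_sub_sq_real (x - p) (x - y)
  rw [sub_sub_sub_cancel_left] at hexpand
  linarith [pow_le_pow_left₀ (norm_nonneg _) h 2]

-- With `‖x - p‖ = β`, the point `y` lies outside the ball about `p` that has `x` on its boundary,
-- and `e` is nearly the unit normal of that ball at `x`.
lemma inner_sub_le_half_norm {e p x y : E} {β : ℝ} (hβ : 0 < β) (hp : ‖x - p‖ ≤ ‖y - p‖)
    (he : ‖β • e - (x - p)‖ ≤ β / 4) (hxy : ‖x - y‖ ≤ β / 2) :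
    ⟪e, x - y⟫ ≤ 1 / 2 * ‖x - y‖ := by
  have htangent : 2 * ⟪x - p, x - y⟫ ≤ β / 2 * ‖x - y‖ :=
    (two_mul_inner_sub_le_norm_sq hp).trans (by rw [sq]; gcongr)
  have hnormal : ⟪β • e - (x - p), x - y⟫ ≤ β / 4 * ‖x - y‖ :=
    (real_inner_le_norm _ _).trans (by gcongr)
  rw [inner_sub_left, real_inner_smul_left] at hnormal
  exact le_of_mul_le_mul_left (by linarith) hβ

lemma abs_inner_sub_le_half_norm {e p q x y : E} {β : ℝ} (hβ : 0 < β)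
    (hp : ‖x - p‖ ≤ ‖y - p‖) (hq : ‖y - q‖ ≤ ‖x - q‖) (hep : ‖β • e - (x - p)‖ ≤ β / 4)
    (heq : ‖β • e - (y - q)‖ ≤ β / 4) (hxy : ‖x - y‖ ≤ β / 2) :
    |⟪e, x - y⟫| ≤ 1 / 2 * ‖x - y‖ := by
  have hyx := inner_sub_le_half_norm hβ hq heq (by rwa [norm_sub_rev])
  rw [← neg_sub x y, inner_neg_right, norm_neg] at hyx
  exact abs_le.2 ⟨by linarith, inner_sub_le_half_norm hβ hp hep hxy⟩

variable [FiniteDimensional ℝ E]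

lemma finrank_orthogonal_span_singleton_eq_sub_one {e : E} (he : e ≠ 0) :
    (Module.finrank ℝ (ℝ ∙ e)ᗮ : ℝ) = (Module.finrank ℝ E : ℝ) - 1 := by
  have h := (ℝ ∙ e).finrank_add_finrank_orthogonal
  rw [finrank_span_singleton he] at h
  rw [← h, Nat.cast_add, Nat.cast_one, add_sub_cancel_left]

variable [MeasurableSpace E] [BorelSpace E]

lemma hausdorffMeasure_lt_top_of_abs_inner_le {e : E} (he : ‖e‖ = 1) {s : Set E}
    (hs : Bornology.IsBounded s) {a : ℝ} (ha : a < 1)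
    (hcone : ∀ x ∈ s, ∀ y ∈ s, |⟪e, x - y⟫| ≤ a * ‖x - y‖) :
    μH[(Module.finrank ℝ E : ℝ) - 1] s < ∞ := by
  have hdim := finrank_orthogonal_span_singleton_eq_sub_one (norm_ne_zero_iff.1 (he ▸ one_ne_zero))
  rw [← hdim]
  have hd : (0 : ℝ) ≤ Module.finrank ℝ (ℝ ∙ e)ᗮ := Nat.cast_nonneg _
  have himage : (fun x : s => (ℝ ∙ e)ᗮ.orthogonalProjectionOnto (x : E)) '' univ =
      (ℝ ∙ e)ᗮ.orthogonalProjectionOnto '' s := by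
    rw [image_univ, range_comp', Subtype.range_coe]
  calc μH[Module.finrank ℝ (ℝ ∙ e)ᗮ] s = μH[Module.finrank ℝ (ℝ ∙ e)ᗮ] (univ : Set s) := by
        rw [← (isometry_subtype_coe (s := s)).hausdorffMeasure_image (Or.inl hd), image_univ,
          Subtype.range_coe]
    _ ≤ _ := (antilipschitzWith_orthogonalProjection_of_abs_inner_le he ha
        hcone).le_hausdorffMeasure_image hd univ
    _ < ∞ := by
      rw [himage]
      exact ENNReal.mul_lt_top (ENNReal.rpow_lt_top_of_nonneg hd ENNReal.coe_ne_top)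
        ((ℝ ∙ e)ᗮ.orthogonalProjectionOnto.lipschitz.isBounded_image hs).measure_lt_top

lemma hausdorffMeasure_lt_top_of_exterior_balls_of_near {p : E → E} {s : Set E}
    (hs : Bornology.IsBounded s) {β : ℝ} (hβ : 0 < β) (hp : ∀ x ∈ s, ‖x - p x‖ = β)
    (hp_le : ∀ x ∈ s, ∀ y ∈ s, β ≤ ‖y - p x‖) {z : E} (hz : z ∈ s)
    (hnear : ∀ x ∈ s, dist x z < β / 8 ∧ dist (p x) (p z) < β / 8) :
    μH[(Module.finrank ℝ E : ℝ) - 1] s < ∞ := by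
  have hnormal : ∀ x ∈ s, ‖β • β⁻¹ • (z - p z) - (x - p x)‖ ≤ β / 4 := fun x hx => by
    rw [smul_inv_smul₀ hβ.ne', ← dist_eq_norm]
    linarith [dist_sub_sub_le z (p z) x (p x), hnear x hx, dist_comm x z, dist_comm (p x) (p z)]
  refine hausdorffMeasure_lt_top_of_abs_inner_le (e := β⁻¹ • (z - p z)) (a := 1 / 2) ?_ hs
    (by norm_num) fun x hx y hy => abs_inner_sub_le_half_norm hβ ((hp x hx).trans_le
      (hp_le x hx y hy)) ((hp y hy).trans_le (hp_le y hy x hx)) (hnormal x hx) (hnormal y hy) ?_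
  · rw [norm_smul, hp z hz, norm_inv, Real.norm_of_nonneg hβ.le, inv_mul_cancel₀ hβ.ne']
  · rw [← dist_eq_norm]
    linarith [dist_triangle_right x y z, hnear x hx, hnear y hy]

lemma hausdorffMeasure_lt_top_of_exterior_balls {p : E → E} {s : Set E}
    (hs : Bornology.IsBounded s) {β : ℝ} (hβ : 0 < β) (hp : ∀ x ∈ s, ‖x - p x‖ = β)
    (hp_le : ∀ x ∈ s, ∀ y ∈ s, β ≤ ‖y - p x‖) :
    μH[(Module.finrank ℝ E : ℝ) - 1] s < ∞ := by
  have : ProperSpace E := FiniteDimensional.proper ℝ E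
  obtain ⟨R, hR⟩ := hs.subset_closedBall 0
  have hpR : MapsTo p s (closedBall 0 (R + β)) := fun x hx => by
    rw [mem_closedBall_zero_iff]
    linarith [norm_le_norm_add_norm_sub x (p x), hp x hx, mem_closedBall_zero_iff.1 (hR hx)]
  have hbdd : Bornology.IsBounded ((fun x => (x, p x)) '' s) :=
    (hs.prod isBounded_closedBall).subset (image_subset_iff.2 fun x hx => ⟨hx, hpR hx⟩)
  have htb := (isCompact_of_isClosed_isBounded isClosed_closure
    (isBounded_closure_iff.2 hbdd)).totallyBounded.subset subset_closure
  obtain ⟨t, hts, htf, hst⟩ := finite_approx_of_totallyBounded htb (β / 8) (by positivity)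
  have hcover : s ⊆ ⋃ c ∈ t, {x ∈ s | (x, p x) ∈ ball c (β / 8)} := fun x hx => by
    simpa [hx] using hst (mem_image_of_mem _ hx)
  refine (measure_mono hcover).trans_lt (measure_biUnion_lt_top htf fun c hc => ?_)
  obtain ⟨z, hz, rfl⟩ := hts hc
  refine hausdorffMeasure_lt_top_of_exterior_balls_of_near (p := p) (hs.subset (sep_subset _ _))
    hβ (fun x hx => hp x hx.1) (fun x hx y hy => hp_le x hx.1 y hy.1)
    (z := z) ⟨hz, mem_ball_self (by positivity)⟩ fun x hx => ?_
  exact max_lt_iff.1 hx.2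

lemma hausdorffMeasure_lt_top_of_infDist_eq {F s : Set E} (hs : Bornology.IsBounded s)
    {β : ℝ} (hβ : 0 < β) (hsβ : ∀ x ∈ s, infDist x F = β) :
    μH[(Module.finrank ℝ E : ℝ) - 1] s < ∞ := by
  rcases F.eq_empty_or_nonempty with rfl | hF
  · simp [eq_empty_of_forall_notMem fun x hx => hβ.ne (infDist_empty.symm.trans (hsβ x hx))]
  have : ProperSpace E := FiniteDimensional.proper ℝ E
  choose p hpF hp using exists_mem_closure_infDist_eq_dist hF
  refine hausdorffMeasure_lt_top_of_exterior_balls (p := p) hs hβ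
    (fun x hx => by rw [← dist_eq_norm, ← hp, hsβ x hx]) fun x _ y hy => ?_
  rw [← hsβ y hy, ← infDist_closure, ← dist_eq_norm]
  exact infDist_le_dist_of_mem (hpF x)

lemma isLocallyFiniteMeasure_restrict_infDist_level (F : Set E) {β : ℝ} (hβ : 0 < β) :
    IsLocallyFiniteMeasure
      ((μH[(Module.finrank ℝ E : ℝ) - 1] : Measure E).restrict {x | infDist x F = β}) := by
  have : ProperSpace E := FiniteDimensional.proper ℝ E
  have : IsFiniteMeasureOnCompacts
      ((μH[(Module.finrank ℝ E : ℝ) - 1] : Measure E).restrict {x | infDist x F = β}) :=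
    ⟨fun s hs => by
      rw [Measure.restrict_apply hs.measurableSet]
      exact hausdorffMeasure_lt_top_of_infDist_eq (hs.isBounded.subset inter_subset_left) hβ
        fun x hx => hx.2⟩
  infer_instance

end InnerProductSpace

section WeakConvergence

variable {X : Type*} [MeasurableSpace X]

lemma measure_le_of_forall_isClosed_le_thickening [PseudoEMetricSpace X] [BorelSpace X]
    {μ ν : Measure X} [IsFiniteMeasure μ] [IsFiniteMeasure ν]
    (h : ∀ F, IsClosed F → ∀ r : ℝ, 0 < r → μ F ≤ ν (thickening r F)) : μ ≤ ν := by
  refine Measure.le_iff.2 fun A hA => ?_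
  rw [hA.measure_eq_iSup_isClosed_of_ne_top (measure_ne_top μ A)]
  refine iSup₂_le fun F hFA => iSup_le fun hF => le_trans ?_ (measure_mono hFA)
  refine ge_of_tendsto
    (tendsto_measure_thickening_of_isClosed ⟨1, one_pos, measure_ne_top ν _⟩ hF) ?_
  filter_upwards [self_mem_nhdsWithin] with r hr using h F hF r hr

lemma lintegral_thickenedIndicator_le_measure [PseudoEMetricSpace X] [OpensMeasurableSpace X]
    (μ : Measure X) {r : ℝ} (hr : 0 < r) (A : Set X) :
    ∫⁻ x, thickenedIndicator hr A x ∂μ ≤ μ (thickening r A) := by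
  rw [← lintegral_indicator_one isOpen_thickening.measurableSet]
  refine lintegral_mono fun x => ?_
  by_cases hx : x ∈ thickening r A
  · simpa [hx] using thickenedIndicator_le_one hr A x
  · simp [hx, thickenedIndicator_zero hr A hx]

variable {ι : Type*} {l : Filter ι} {σ : ι → Measure X} {μ : Measure X}

lemma tendsto_lintegral_of_forall_tendsto_integral [TopologicalSpace X] [OpensMeasurableSpace X]
    [IsFiniteMeasure μ] (hfin : ∀ᶠ i in l, IsFiniteMeasure (σ i))
    (hconv : ∀ f : X → ℝ, Continuous f → (∃ M, ∀ x, |f x| ≤ M) →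
      Tendsto (fun i => ∫ x, f x ∂(σ i)) l (𝓝 (∫ x, f x ∂μ))) (g : X →ᵇ ℝ≥0) :
    Tendsto (fun i => ∫⁻ x, g x ∂(σ i)) l (𝓝 (∫⁻ x, g x ∂μ)) := by
  have hofReal : ∀ τ : Measure X, IsFiniteMeasure τ →
      ENNReal.ofReal (∫ x, (g x : ℝ) ∂τ) = ∫⁻ x, g x ∂τ := fun τ _ => by
    rw [← BoundedContinuousFunction.toReal_lintegral_coe_eq_integral,
      ENNReal.ofReal_toReal (g.lintegral_lt_top_of_nnreal τ).ne]
  have hbdd : ∀ x, |(g x : ℝ)| ≤ nndist g 0 := fun x => by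
    rw [NNReal.abs_eq]
    exact NNReal.coe_le_coe.2 (BoundedContinuousFunction.NNReal.upper_bound g x)
  have hlim := ENNReal.tendsto_ofReal (hconv (fun x => (g x : ℝ))
    (NNReal.continuous_coe.comp g.continuous) ⟨_, hbdd⟩)
  rw [hofReal μ inferInstance] at hlim
  exact hlim.congr' (hfin.mono fun i hi => hofReal _ hi)

variable [PseudoEMetricSpace X] [OpensMeasurableSpace X] [l.NeBot] {r : ℝ} {A : Set X}
  {a : ℝ≥0∞} {e : ι → ℝ≥0∞}

lemma measure_le_of_eventually_thickening_le_add
    (hlim : ∀ g : X →ᵇ ℝ≥0, Tendsto (fun i => ∫⁻ x, g x ∂(σ i)) l (𝓝 (∫⁻ x, g x ∂μ)))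
    (hr : 0 < r) (hA : MeasurableSet A) (he : Tendsto e l (𝓝 0))
    (h : ∀ᶠ i in l, σ i (thickening r A) ≤ a + e i) : μ A ≤ a := by
  refine (measure_le_lintegral_thickenedIndicator μ hA hr).trans ?_
  refine le_of_tendsto_of_tendsto (hlim (thickenedIndicator hr A))
    (by simpa only [add_zero] using he.const_add a) ?_
  filter_upwards [h] with i hi using (lintegral_thickenedIndicator_le_measure _ hr A).trans hi

lemma le_measure_thickening_of_eventually_le_add
    (hlim : ∀ g : X →ᵇ ℝ≥0, Tendsto (fun i => ∫⁻ x, g x ∂(σ i)) l (𝓝 (∫⁻ x, g x ∂μ)))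
    (hr : 0 < r) (hA : MeasurableSet A) (he : Tendsto e l (𝓝 0))
    (h : ∀ᶠ i in l, a ≤ σ i A + e i) : a ≤ μ (thickening r A) := by
  refine le_trans ?_ (lintegral_thickenedIndicator_le_measure μ hr A)
  refine ge_of_tendsto
    (by simpa only [add_zero] using (hlim (thickenedIndicator hr A)).add he) ?_
  filter_upwards [h] with i hi
  exact hi.trans (add_le_add_left (measure_le_lintegral_thickenedIndicator _ hA hr) _)

end WeakConvergence

section RNDeriv

variable {X : Type*} [MeasurableSpace X] {μ ν : Measure X} [SigmaFinite ν] {c : ℝ≥0∞}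

lemma ae_le_rnDeriv_of_smul_le [μ.HaveLebesgueDecomposition ν] (hμν : μ ≪ ν)
    (h : c • ν ≤ μ) : ∀ᵐ x ∂ν, c ≤ μ.rnDeriv ν x :=
  ae_le_of_forall_setLIntegral_le_of_sigmaFinite measurable_const fun s _ _ => by
    rw [setLIntegral_const, Measure.setLIntegral_rnDeriv hμν]
    exact h s

lemma ae_rnDeriv_le_of_le_smul (h : μ ≤ c • ν) : ∀ᵐ x ∂ν, μ.rnDeriv ν x ≤ c :=
  ae_le_of_forall_setLIntegral_le_of_sigmaFinite (μ.measurable_rnDeriv ν) fun s _ _ => by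
    rw [setLIntegral_const]
    exact (Measure.setLIntegral_rnDeriv_le s).trans (h s)

end RNDeriv

/-- The measure `u_ν dρ`, where `u_ν(x) = ∫ k(x, y) dν(y)` is the potential of `ν` with respect to
the kernel `k`. With `ρ` the surface measure of `Σ_β` and `k = W K` it is the measure `σ_β(ν)`
whose weak limits define the approximate traces of `u_ν`. -/
noncomputable def potentialMeasure {X Y : Type*} [MeasurableSpace X] [MeasurableSpace Y]
    (ρ : Measure X) (ν : Measure Y) (k : X → Y → ℝ≥0∞) : Measure X :=
  ρ.withDensity fun x => ∫⁻ y, k x y ∂ν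

section PotentialMeasure

section Apply

variable {X Y : Type*} [MeasurableSpace X] [MeasurableSpace Y] {ρ : Measure X} {ν : Measure Y}
  [SFinite ρ] {k : X → Y → ℝ≥0∞}

lemma potentialMeasure_apply [SFinite ν] (hk : Measurable (Function.uncurry k)) {G : Set X}
    (hG : MeasurableSet G) :
    potentialMeasure ρ ν k G = ∫⁻ y, ∫⁻ x in G, k x y ∂ρ ∂ν := by
  rw [potentialMeasure, withDensity_apply _ hG, lintegral_lintegral_swap hk.aemeasurable]

lemma isFiniteMeasure_potentialMeasure [IsFiniteMeasure ν]
    (hk : Measurable (Function.uncurry k)) {c : ℝ≥0∞} (hc : c ≠ ∞)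
    (hkc : ∀ᵐ y ∂ν, ∫⁻ x, k x y ∂ρ ≤ c) : IsFiniteMeasure (potentialMeasure ρ ν k) := by
  refine ⟨?_⟩
  rw [potentialMeasure_apply hk .univ]
  simp only [Measure.restrict_univ]
  exact (lintegral_mono_ae hkc).trans_lt
    (lintegral_const c ▸ ENNReal.mul_lt_top hc.lt_top (measure_lt_top ν univ))

end Apply

variable {X : Type*} [PseudoMetricSpace X] [MeasurableSpace X] {k : X → X → ℝ≥0∞} {c : ℝ≥0∞}

section FixedMeasure

variable [OpensMeasurableSpace X] {ρ ν : Measure X} [SFinite ρ] [SFinite ν] {s : ℝ≥0∞} {r : ℝ}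

lemma potentialMeasure_le_mul_thickening_add (hk : Measurable (Function.uncurry k))
    (hc : ∀ᵐ y ∂ν, ∫⁻ x, k x y ∂ρ ≤ c) (hs : ∀ᵐ y ∂ν, ∫⁻ x in (ball y r)ᶜ, k x y ∂ρ ≤ s)
    {G : Set X} (hG : MeasurableSet G) :
    potentialMeasure ρ ν k G ≤ c * ν (thickening r G) + s * ν univ := by
  rw [potentialMeasure_apply hk hG]
  calc ∫⁻ y, ∫⁻ x in G, k x y ∂ρ ∂ν
      ≤ ∫⁻ y, (thickening r G).indicator (fun _ => c) y + s ∂ν := by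
        refine lintegral_mono_ae ?_
        filter_upwards [hc, hs] with y hcy hsy
        by_cases hy : y ∈ thickening r G
        · rw [indicator_of_mem hy]
          exact ((setLIntegral_le_lintegral _ _).trans hcy).trans le_self_add
        · rw [indicator_of_notMem hy, zero_add]
          have hG_sub : G ⊆ (ball y r)ᶜ := fun x hx hxy =>
            hy (mem_thickening_iff.2 ⟨x, hx, mem_ball'.1 hxy⟩)
          exact (lintegral_mono_set hG_sub).trans hsy
    _ = c * ν (thickening r G) + s * ν univ := by
        rw [lintegral_add_right _ measurable_const, lintegral_const,
          lintegral_indicator_const isOpen_thickening.measurableSet]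

lemma mul_le_potentialMeasure_thickening_add (hk : Measurable (Function.uncurry k))
    (hc : ∀ᵐ y ∂ν, c ≤ ∫⁻ x, k x y ∂ρ) (hs : ∀ᵐ y ∂ν, ∫⁻ x in (ball y r)ᶜ, k x y ∂ρ ≤ s)
    {F : Set X} (hF : MeasurableSet F) :
    c * ν F ≤ potentialMeasure ρ ν k (thickening r F) + s * ν univ := by
  rw [potentialMeasure_apply hk isOpen_thickening.measurableSet]
  calc c * ν F = ∫⁻ y, F.indicator (fun _ => c) y ∂ν := (lintegral_indicator_const hF c).symm
    _ ≤ ∫⁻ y, (∫⁻ x in thickening r F, k x y ∂ρ) + s ∂ν := by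
        refine lintegral_mono_ae ?_
        filter_upwards [hc, hs] with y hcy hsy
        by_cases hy : y ∈ F
        · rw [indicator_of_mem hy]
          calc c ≤ ∫⁻ x in ball y r, k x y ∂ρ + ∫⁻ x in (ball y r)ᶜ, k x y ∂ρ :=
                hcy.trans_eq (lintegral_add_compl _ measurableSet_ball).symm
            _ ≤ ∫⁻ x in thickening r F, k x y ∂ρ + s :=
                add_le_add (lintegral_mono_set (ball_subset_thickening hy r)) hsy
        · simp only [indicator_of_notMem hy, zero_le]
    _ = ∫⁻ y, ∫⁻ x in thickening r F, k x y ∂ρ ∂ν + s * ν univ := by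
        rw [lintegral_add_right _ measurable_const, lintegral_const]

end FixedMeasure

section Limit

variable [BorelSpace X] {ι : Type*} {l : Filter ι} [l.NeBot] {ρ : ι → Measure X}
  {ν μ : Measure X} [IsFiniteMeasure ν] [IsFiniteMeasure μ]

theorem smul_le_of_tendsto_potentialMeasure (hk : Measurable (Function.uncurry k))
    (hρ : ∀ᶠ i in l, SFinite (ρ i)) (hc : c ≠ ∞)
    (hbound : ∀ᶠ i in l, ∀ᵐ y ∂ν, c ≤ ∫⁻ x, k x y ∂ρ i)
    (hdecay : ∀ r > 0, Tendsto
      (fun i => essSup (fun y => ∫⁻ x in (ball y r)ᶜ, k x y ∂ρ i) ν) l (𝓝 0))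
    (hlim : ∀ g : X →ᵇ ℝ≥0, Tendsto (fun i => ∫⁻ x, g x ∂potentialMeasure (ρ i) ν k) l
      (𝓝 (∫⁻ x, g x ∂μ))) :
    c • ν ≤ μ := by
  have := ν.smul_finite hc
  refine measure_le_of_forall_isClosed_le_thickening fun F hF r hr => ?_
  have herror := ENNReal.Tendsto.mul_const (hdecay _ (half_pos hr)) (.inr (measure_ne_top ν univ))
  rw [zero_mul] at herror
  calc c * ν F ≤ μ (thickening (r / 2) (thickening (r / 2) F)) := by
        refine le_measure_thickening_of_eventually_le_add hlim (half_pos hr)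
          isOpen_thickening.measurableSet herror ?_
        filter_upwards [hρ, hbound] with i _ hi
        exact mul_le_potentialMeasure_thickening_add hk hi (ENNReal.ae_le_essSup _)
          hF.measurableSet
    _ ≤ μ (thickening r F) := measure_mono <|
        (thickening_thickening_subset _ _ F).trans_eq (by rw [add_halves])

theorem le_smul_of_tendsto_potentialMeasure (hk : Measurable (Function.uncurry k))
    (hρ : ∀ᶠ i in l, SFinite (ρ i)) (hc : c ≠ ∞)
    (hbound : ∀ᶠ i in l, ∀ᵐ y ∂ν, ∫⁻ x, k x y ∂ρ i ≤ c)
    (hdecay : ∀ r > 0, Tendsto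
      (fun i => essSup (fun y => ∫⁻ x in (ball y r)ᶜ, k x y ∂ρ i) ν) l (𝓝 0))
    (hlim : ∀ g : X →ᵇ ℝ≥0, Tendsto (fun i => ∫⁻ x, g x ∂potentialMeasure (ρ i) ν k) l
      (𝓝 (∫⁻ x, g x ∂μ))) :
    μ ≤ c • ν := by
  have := ν.smul_finite hc
  refine measure_le_of_forall_isClosed_le_thickening fun F hF r hr => ?_
  have herror := ENNReal.Tendsto.mul_const (hdecay _ (half_pos hr)) (.inr (measure_ne_top ν univ))
  rw [zero_mul] at herror
  calc μ F ≤ c * ν (thickening (r / 2) (thickening (r / 2) F)) := by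
        refine measure_le_of_eventually_thickening_le_add hlim (half_pos hr) hF.measurableSet
          herror ?_
        filter_upwards [hρ, hbound] with i _ hi
        exact potentialMeasure_le_mul_thickening_add hk hi (ENNReal.ae_le_essSup _)
          isOpen_thickening.measurableSet
    _ ≤ c * ν (thickening r F) := by
        gcongr
        exact (thickening_thickening_subset _ _ F).trans_eq (by rw [add_halves])

end Limit

end PotentialMeasure

section RestrictedMeasure

variable {X : Type*} [PseudoMetricSpace X] [MeasurableSpace X] [OpensMeasurableSpace X] {Γ : Set X}

lemma measurableSet_sep_infDist_eq {Ω : Set X} (hΩ : MeasurableSet Ω) (b : ℝ) :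
    MeasurableSet {x ∈ Ω | infDist x Γ = b} :=
  hΩ.inter (measurableSet_eq_fun (continuous_infDist_pt _).measurable measurable_const)

lemma tendsto_essSup_setLIntegral_compl_ball_of_tendsto_iSup {ι : Type*} {l : Filter ι}
    {ρ ν : Measure X} (hν : ∀ᵐ y ∂ν, y ∈ Γ) {k : X → X → ℝ≥0∞} {S : ι → Set X} {r : ℝ}
    (h : Tendsto (fun i => ⨆ y ∈ Γ, ∫⁻ x in S i \ ball y r, k x y ∂ρ) l (𝓝 0)) :
    Tendsto (fun i => essSup (fun y => ∫⁻ x in (ball y r)ᶜ, k x y ∂ρ.restrict (S i)) ν) l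
      (𝓝 0) := by
  refine tendsto_of_tendsto_of_tendsto_of_le_of_le tendsto_const_nhds h (fun _ => zero_le)
    fun i => essSup_le_of_ae_le _ (hν.mono fun y hy => ?_)
  simp only [Measure.restrict_restrict measurableSet_ball.compl, ← sdiff_eq_compl_inter]
  exact le_iSup₂ (f := fun y (_ : y ∈ Γ) => ∫⁻ x in S i \ ball y r, k x y ∂ρ) y hy

end RestrictedMeasure

section LevelSet

variable {E : Type*} [NormedAddCommGroup E] [InnerProductSpace ℝ E] [FiniteDimensional ℝ E]
  [MeasurableSpace E] [BorelSpace E] {N : ℕ} {Ω Γ : Set E}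

lemma sFinite_hausdorffMeasure_restrict_sep_infDist_eq (hN : Module.finrank ℝ E = N)
    (hΩ : MeasurableSet Ω) {b : ℝ} (hb : 0 < b) :
    SFinite ((μH[(N : ℝ) - 1] : Measure E).restrict {x ∈ Ω | infDist x Γ = b}) := by
  have := isLocallyFiniteMeasure_restrict_infDist_level Γ hb
  rw [← hN, ofPred_and, ofPred_mem_eq, ← Measure.restrict_restrict hΩ]
  infer_instance

theorem stmt2_general {ι : Type*} {l : Filter ι} [l.NeBot] (hN : Module.finrank ℝ E = N)
    (hΩ : MeasurableSet Ω) {k : E → E → ℝ≥0∞} (hk : Measurable (Function.uncurry k))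
    {c C : ℝ≥0} (hc : c ≠ 0)
    (hbound : ∀ᶠ b in 𝓝[>] 0, ∀ y ∈ Γ,
      c ≤ ∫⁻ x in {x ∈ Ω | infDist x Γ = b}, k x y ∂μH[(N : ℝ) - 1] ∧
      ∫⁻ x in {x ∈ Ω | infDist x Γ = b}, k x y ∂μH[(N : ℝ) - 1] ≤ C)
    (hdecay : ∀ r > 0, Tendsto (fun b : ℝ => ⨆ y ∈ Γ,
      ∫⁻ x in {x ∈ Ω | infDist x Γ = b} \ ball y r, k x y ∂μH[(N : ℝ) - 1]) (𝓝[>] 0) (𝓝 0))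
    {ν μ : Measure E} [IsFiniteMeasure ν] [IsFiniteMeasure μ] (hν : ν Γᶜ = 0)
    {β : ι → ℝ} (hβ : Tendsto β l (𝓝[>] 0))
    (hconv : ∀ f : E → ℝ, Continuous f → (∃ M, ∀ x, |f x| ≤ M) →
      Tendsto (fun i => ∫ x, f x ∂potentialMeasure
        (μH[(N : ℝ) - 1].restrict {x ∈ Ω | infDist x Γ = β i}) ν k) l (𝓝 (∫ x, f x ∂μ))) :
    μ Γᶜ = 0 ∧ ν ≪ μ.restrict Γ ∧ μ.restrict Γ ≪ ν ∧
      ∀ᵐ x ∂ν, c ≤ (μ.restrict Γ).rnDeriv ν x ∧ (μ.restrict Γ).rnDeriv ν x ≤ C := by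
  have hνΓ : ∀ᵐ y ∂ν, y ∈ Γ := ae_iff.2 hν
  have hsFinite : ∀ᶠ i in l,
      SFinite ((μH[(N : ℝ) - 1] : Measure E).restrict {x ∈ Ω | infDist x Γ = β i}) :=
    hβ.eventually <| eventually_mem_nhdsWithin.mono fun b hb =>
      sFinite_hausdorffMeasure_restrict_sep_infDist_eq hN hΩ hb
  have hlow := (hβ.eventually hbound).mono fun i hi => hνΓ.mono fun y hy => (hi y hy).1
  have hup := (hβ.eventually hbound).mono fun i hi => hνΓ.mono fun y hy => (hi y hy).2
  have hess (r : ℝ) (hr : r > 0) :=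
    tendsto_essSup_setLIntegral_compl_ball_of_tendsto_iSup hνΓ ((hdecay r hr).comp hβ)
  have hlim := tendsto_lintegral_of_forall_tendsto_integral
    ((hsFinite.and hup).mono fun i hi =>
      have := hi.1
      isFiniteMeasure_potentialMeasure hk ENNReal.coe_ne_top hi.2) hconv
  have hνμ := smul_le_of_tendsto_potentialMeasure hk hsFinite ENNReal.coe_ne_top hlow hess hlim
  have hμν := le_smul_of_tendsto_potentialMeasure hk hsFinite ENNReal.coe_ne_top hup hess hlim
  have hac : μ ≪ ν := Measure.absolutelyContinuous_of_le_smul hμν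
  rw [Measure.restrict_eq_self_of_ae_mem (ae_iff.2 (hac hν))]
  exact ⟨hac hν, (Measure.absolutelyContinuous_smul (ENNReal.coe_ne_zero.2 hc)).trans
    (Measure.absolutelyContinuous_of_le hνμ), hac,
    (ae_le_rnDeriv_of_smul_le hac hνμ).and (ae_rnDeriv_le_of_le_smul hμν)⟩

end LevelSet

lemma sigmaMeas_eq_potentialMeasure {N : ℕ} {Ω : Set (EuclideanSpace ℝ (Fin N))}
    (hΩ : MeasurableSet Ω) {W : EuclideanSpace ℝ (Fin N) → ℝ}
    {K : EuclideanSpace ℝ (Fin N) → EuclideanSpace ℝ (Fin N) → ℝ}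
    (hKm : Measurable (Function.uncurry K)) (hWnn : ∀ x ∈ Ω, 0 ≤ W x)
    {ν : Measure (EuclideanSpace ℝ (Fin N))} (hν : ν (frontier Ω)ᶜ = 0) (b : ℝ) :
    sigmaMeas Ω W K ν b =
      potentialMeasure (μH[(N : ℝ) - 1].restrict {x ∈ Ω | infDist x (frontier Ω) = b}) ν
        fun x y => ENNReal.ofReal (W x * K x y) := by
  rw [sigmaMeas, Measure.restrict_eq_self_of_ae_mem (ae_iff.2 hν)]
  refine withDensity_congr_ae ?_
  filter_upwards [ae_restrict_mem (measurableSet_sep_infDist_eq hΩ b)] with x hx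
  simp only [ENNReal.ofReal_mul (hWnn x hx.1)]
  exact (lintegral_const_mul _ (hKm.comp measurable_prodMk_left).ennreal_ofReal).symm

theorem stmt2 {N : ℕ} (hN : 3 ≤ N) (Ω : Set (EuclideanSpace ℝ (Fin N)))
    (hΩo : IsOpen Ω) (hΩb : Bornology.IsBounded Ω) (hΩ2 : HasC2Boundary Ω)
    (W : EuclideanSpace ℝ (Fin N) → ℝ)
    (K : EuclideanSpace ℝ (Fin N) → EuclideanSpace ℝ (Fin N) → ℝ)
    (hWm : Measurable W) (hKm : Measurable (Function.uncurry K))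
    (hWnn : ∀ x ∈ Ω, 0 ≤ W x)
    (hKnn : ∀ x ∈ Ω, ∀ y ∈ frontier Ω, 0 ≤ K x y)
    (C ε : ℝ) (hC : 1 ≤ C) (hε : 0 < ε)
    -- (a): uniform two-sided single-kernel bound
    (hbound : ∀ y ∈ frontier Ω, ∀ β ∈ Set.Ioo (0:ℝ) ε,
      ENNReal.ofReal C⁻¹ ≤
        (∫⁻ x in {x ∈ Ω | Metric.infDist x (frontier Ω) = β},
          ENNReal.ofReal (W x * K x y) ∂(μH[(N:ℝ) - 1])) ∧
      (∫⁻ x in {x ∈ Ω | Metric.infDist x (frontier Ω) = β},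
          ENNReal.ofReal (W x * K x y) ∂(μH[(N:ℝ) - 1])) ≤ ENNReal.ofReal C)
    -- (b): uniform decay away from the singularity
    (hdecay : ∀ r : ℝ, 0 < r →
      Tendsto (fun β : ℝ => ⨆ y ∈ frontier Ω,
          ∫⁻ x in {x ∈ Ω | Metric.infDist x (frontier Ω) = β} \ Metric.ball y r,
            ENNReal.ofReal (W x * K x y) ∂(μH[(N:ℝ) - 1]))
        (𝓝[>] (0:ℝ)) (𝓝 0))
    (ν : Measure (EuclideanSpace ℝ (Fin N))) [IsFiniteMeasure ν]
    (hν : ν (frontier Ω)ᶜ = 0)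
    (β : ℕ → ℝ) (hβpos : ∀ n, 0 < β n) (hβ : Tendsto β atTop (𝓝 0))
    (μ : Measure (EuclideanSpace ℝ (Fin N))) [IsFiniteMeasure μ]
    -- weak convergence of `σ_{β_n}(ν)` to `μ`, tested against bounded continuous functions
    (hconv : ∀ f : EuclideanSpace ℝ (Fin N) → ℝ, Continuous f → (∃ M, ∀ x, |f x| ≤ M) →
      Tendsto (fun n => ∫ x, f x ∂(sigmaMeas Ω W K ν (β n))) atTop (𝓝 (∫ x, f x ∂μ))) :
    μ (frontier Ω)ᶜ = 0 ∧
      ν ≪ μ.restrict (frontier Ω) ∧ μ.restrict (frontier Ω) ≪ ν ∧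
      ∀ᵐ x ∂ν, ENNReal.ofReal C⁻¹ ≤ (μ.restrict (frontier Ω)).rnDeriv ν x ∧
        (μ.restrict (frontier Ω)).rnDeriv ν x ≤ ENNReal.ofReal C := by
  simp only [sigmaMeas_eq_potentialMeasure hΩo.measurableSet hKm hWnn hν] at hconv
  exact stmt2_general (k := fun x y => ENNReal.ofReal (W x * K x y))
    (c := C⁻¹.toNNReal) (C := C.toNNReal) finrank_euclideanSpace_fin
    hΩo.measurableSet ((hWm.comp measurable_fst).mul hKm).ennreal_ofReal
    (Real.toNNReal_pos.2 (by positivity)).ne'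
    (by filter_upwards [Ioo_mem_nhdsGT hε] with b hb y hy using hbound y hy b hb)
    hdecay hν (tendsto_nhdsWithin_iff.2 ⟨hβ, .of_forall hβpos⟩) hconv
end

section
/- Let Ω ⊂ ℝ^N (N ≥ 3) be a bounded open set with C² boundary, Φ : Ω → (0,∞) continuous, Φ₀ : Ω → (0,∞) with c_*⁻¹ δ(x) ≤ Φ₀(x) ≤ c_* δ(x) for all x ∈ Ω and some c_* ≥ 1, and G : {(x,y) ∈ Ω × Ω : x ≠ y} → (0,∞) Borel measurable. Assume: (i) there exist a ≥ 2, c₀ ≥ 1, β₁ > 0 such that c₀⁻¹ |x−y|^{2−N} Φ(y) ≤ Φ(x) G(x,y) ≤ c₀ |x−y|^{2−N} Φ(y) whenever β ∈ (0,β₁), x ∈ Σ_β, y ∈ Ω and 0 < |x−y| < aβ; (ii) for every b > 0 there is C(b) ≥ 1 such that G(x,y) ≥ C(b)⁻¹ |x−y|^{2−N} whenever x,y ∈ Ω satisfy 0 < |x−y| ≤ b⁻¹ min(δ(x),δ(y)). Then there exists c > 0 such that for every positive Borel measure τ on Ω with ∫_Ω Φ dτ < ∞: c⁻¹ ∫_Ω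 Φ dτ ≤ ∫_Ω (Φ(x)/Φ₀(x)) (∫_Ω G(x,y) dτ(y)) dx. -/
open MeasureTheory Metric Set

/-!
The measure `τ` is s-finite on `Ω`, since the positive function `Φ` is `τ`-integrable there. So
Tonelli applies, and as the weight `1 / Φ₀` is bounded below it suffices to find `c > 0` with
`c * Φ y ≤ ∫ x in Ω, Φ x * G x y` for all `y ∈ Ω`. As `closure Ω` is compact, this is a local
matter: for each `p ∈ closure Ω` one needs a point `z ∈ Ω` and `κ > 0` such that
`κ * Φ y ≤ Φ x * G x y` for `x` near `z` and `y ∈ Ω` near `p`, and then one integrates over the `x`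
near `z`. The singular factor `dist x y ^ (2 - N)` only helps, being bounded below on a bounded set.
If `p ∈ Ω`, take `z = p` and combine the interior estimate with the continuity of `Φ`. If `p` is a
boundary point, take `z` close to `p` and nontangential, so that the boundary estimate applies to
all nearby pairs; such `z` exist since near `p` the set `Ω` is `{f < 0}` with `f` differentiable at
`p` and `f' p ≠ 0`.
-/

open Filter Topology
open scoped ENNReal

section Nontangential

/-- The nontangential approach region of aperture `a` at `p`: the points of `Ω` whose distance to
`p` is less than `a` times their distance to the boundary of `Ω`. In a half-space this is a cone
with vertex `p`. The point `p` need not lie on the boundary. -/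
def nontangentialRegion {E : Type*} [PseudoMetricSpace E] (Ω : Set E) (a : ℝ) (p : E) : Set E :=
  {z ∈ Ω | dist z p < a * infDist z (frontier Ω)}

theorem isOpen_setOf_mem_nontangentialRegion {E : Type*} [PseudoMetricSpace E] {Ω : Set E}
    (hΩ : IsOpen Ω) (a : ℝ) : IsOpen {q : E × E | q.1 ∈ nontangentialRegion Ω a q.2} :=
  (hΩ.preimage continuous_fst).inter <| isOpen_lt continuous_dist <|
    continuous_const.mul <| (continuous_infDist_pt _).comp continuous_fst

theorem le_infDist_frontier_of_ball_subset {E : Type*} [PseudoMetricSpace E] {Ω : Set E}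
    (hΩ : IsOpen Ω) (hne : (frontier Ω).Nonempty) {z : E} {r : ℝ} (h : ball z r ⊆ Ω) :
    r ≤ infDist z (frontier Ω) := by
  refine (le_infDist hne).2 fun y hy => ?_
  by_contra! hzy
  exact (disjoint_frontier_iff_isOpen.2 hΩ).notMem_of_mem_left hy (h (mem_ball'.2 hzy))

variable {E : Type*} [NormedAddCommGroup E] [NormedSpace ℝ E]

theorem exists_norm_lt_one_lt_apply (L : E →L[ℝ] ℝ) {r : ℝ} (hr : r < ‖L‖) :
    ∃ v, ‖v‖ < 1 ∧ r < L v := by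
  obtain ⟨v, hv, hLv⟩ := L.exists_lt_apply_of_lt_opNorm hr
  rw [Real.norm_eq_abs] at hLv
  rcases abs_choice (L v) with h | h
  · exact ⟨v, hv, h ▸ hLv⟩
  · exact ⟨-v, by rwa [norm_neg], by rwa [map_neg, ← h]⟩

theorem eventually_ball_subset_of_hasFDerivAt {Ω : Set E} {f : E → ℝ} {L : E →L[ℝ] ℝ} {p v : E}
    {ρ : ℝ} (hf : HasFDerivAt f L p) (hp : f p ≤ 0) (hΩ : ∀ᶠ x in 𝓝 p, f x < 0 → x ∈ Ω)
    (hv : ρ * ‖L‖ < L v) : ∀ᶠ t : ℝ in 𝓝[>] 0, ball (p - t • v) (ρ * t) ⊆ Ω := by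
  obtain ⟨ε, hε, hεv⟩ := exists_pos_mul_lt (sub_pos.2 hv) (ρ + ‖v‖)
  obtain ⟨r, hr, hnear⟩ := Metric.eventually_nhds_iff.1 ((hf.isLittleO.def hε).and hΩ)
  have hsmall : ∀ᶠ t : ℝ in 𝓝[>] 0, t * (ρ + ‖v‖) < r :=
    nhdsWithin_le_nhds <|
      ((continuous_mul_const _).tendsto' 0 0 (zero_mul _)).eventually_lt_const hr
  filter_upwards [self_mem_nhdsWithin, hsmall] with t (ht : 0 < t) htr q hq
  rw [mem_ball, dist_eq_norm] at hq
  have hqp : ‖q - p‖ ≤ t * (ρ + ‖v‖) := calc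
    ‖q - p‖ = ‖q - (p - t • v) - t • v‖ := by rw [sub_sub, sub_add_cancel]
    _ ≤ ‖q - (p - t • v)‖ + ‖t • v‖ := norm_sub_le _ _
    _ ≤ t * (ρ + ‖v‖) := by
      rw [norm_smul, Real.norm_of_nonneg ht.le]
      linarith
  obtain ⟨hfq, hqΩ⟩ := hnear (show dist q p < r from dist_eq_norm q p ▸ hqp.trans_lt htr)
  have hLq : L (q - p) ≤ ‖L‖ * (ρ * t) - t * L v := calc
    L (q - p) = L (q - (p - t • v)) - t * L v := by
      simp only [map_sub, map_smul, smul_eq_mul]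
      ring
    _ ≤ ‖L‖ * ‖q - (p - t • v)‖ - t * L v := by
      gcongr
      exact (le_abs_self _).trans (L.le_opNorm _)
    _ ≤ ‖L‖ * (ρ * t) - t * L v := by gcongr
  apply hqΩ
  calc f q ≤ f p + L (q - p) + ε * ‖q - p‖ := by linarith [(le_abs_self _).trans hfq]
    _ ≤ 0 + (‖L‖ * (ρ * t) - t * L v) + ε * (t * (ρ + ‖v‖)) := by gcongr
    _ = t * ((ρ + ‖v‖) * ε - (L v - ρ * ‖L‖)) := by ring
    _ < 0 := mul_neg_of_pos_of_neg ht (sub_neg.2 hεv)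

theorem mem_closure_nontangentialRegion_of_hasFDerivAt {Ω : Set E} {f : E → ℝ} {L : E →L[ℝ] ℝ}
    {p : E} {a : ℝ} (hΩ : IsOpen Ω) (hp : p ∈ frontier Ω) (hf : HasFDerivAt f L p) (hL : L ≠ 0)
    (hΩf : ∀ᶠ x in 𝓝 p, x ∈ Ω ↔ f x < 0) (ha : 1 < a) :
    p ∈ closure (nontangentialRegion Ω a p) := by
  have hfp : f p ≤ 0 := by
    by_contra! hpos
    refine mem_closure_iff_frequently.1 hp.1 ?_
    filter_upwards [hΩf, hf.continuousAt.eventually_const_lt hpos] with x hx hx0 hxΩ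
    exact lt_asymm hx0 (hx.1 hxΩ)
  obtain ⟨ρ, haρ, hρ⟩ := exists_between (inv_lt_one_of_one_lt₀ ha)
  obtain ⟨v, hv, hLv⟩ := exists_norm_lt_one_lt_apply L
    (mul_lt_of_lt_one_left (norm_pos_iff.2 hL) hρ)
  have hz : Tendsto (fun t : ℝ => p - t • v) (𝓝[>] 0) (𝓝 p) := by
    refine tendsto_nhdsWithin_of_tendsto_nhds (Continuous.tendsto' (by fun_prop) _ _ ?_)
    rw [zero_smul, sub_zero]
  refine mem_closure_of_tendsto hz ?_
  filter_upwards [self_mem_nhdsWithin, eventually_ball_subset_of_hasFDerivAt hf hfp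
    (hΩf.mono fun x hx => hx.2) hLv] with t (ht : 0 < t) hball
  have ha0 : 0 < a := one_pos.trans ha
  have hρt : 0 < ρ * t := mul_pos ((inv_pos.2 ha0).trans haρ) ht
  refine ⟨hball (mem_ball_self hρt), ?_⟩
  calc dist (p - t • v) p = t * ‖v‖ := by
        rw [dist_eq_norm, sub_sub_cancel_left, norm_neg, norm_smul, Real.norm_of_nonneg ht.le]
    _ < t * (a * ρ) := by
        gcongr
        exact hv.trans ((inv_lt_iff_one_lt_mul₀' ha0).1 haρ)
    _ = a * (ρ * t) := by ring
    _ ≤ a * infDist (p - t • v) (frontier Ω) := by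
        gcongr
        exact le_infDist_frontier_of_ball_subset hΩ ⟨p, hp⟩ hball

theorem HasC2Boundary.mem_closure_nontangentialRegion {N : ℕ} {Ω : Set (EuclideanSpace ℝ (Fin N))}
    (h : HasC2Boundary Ω) (hΩ : IsOpen Ω) {p : EuclideanSpace ℝ (Fin N)} (hp : p ∈ frontier Ω)
    {a : ℝ} (ha : 1 < a) : p ∈ closure (nontangentialRegion Ω a p) := by
  obtain ⟨U, f, hU, hpU, hf, hf', hΩU⟩ := h p hp
  have hfp : DifferentiableAt ℝ f p :=
    (hf.contDiffAt (hU.mem_nhds hpU)).differentiableAt two_ne_zero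
  refine mem_closure_nontangentialRegion_of_hasFDerivAt hΩ hp hfp.hasFDerivAt (hf' p hpU) ?_ ha
  filter_upwards [hU.mem_nhds hpU] with x hx
  simpa only [mem_inter_iff, mem_ofPred_eq, hx, and_true, true_and] using Set.ext_iff.1 hΩU x

end Nontangential

section LowerBounds

variable {α β : Type*} [MeasurableSpace α] [MeasurableSpace β]

theorem sFinite_of_lintegral_ne_top {μ : Measure α} {f : α → ℝ≥0∞} (hf : AEMeasurable f μ)
    (hf0 : ∀ᵐ x ∂μ, f x ≠ 0) (hfi : ∫⁻ x, f x ∂μ ≠ ∞) : SFinite μ :=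
  have := isFiniteMeasure_withDensity hfi
  sFinite_of_absolutelyContinuous (withDensity_absolutelyContinuous' hf hf0)

theorem mul_lintegral_le_lintegral_lintegral {μ : Measure α} {τ : Measure β} [SFinite μ] [SFinite τ]
    {φ : β → ℝ≥0∞} {K : α → β → ℝ≥0∞} {c : ℝ≥0∞}
    (hK : AEMeasurable (Function.uncurry K) (μ.prod τ))
    (h : ∀ᵐ y ∂τ, c * φ y ≤ ∫⁻ x, K x y ∂μ) :
    c * ∫⁻ y, φ y ∂τ ≤ ∫⁻ x, ∫⁻ y, K x y ∂τ ∂μ := calc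
  c * ∫⁻ y, φ y ∂τ ≤ ∫⁻ y, c * φ y ∂τ := lintegral_const_mul_le _ _
  _ ≤ ∫⁻ y, ∫⁻ x, K x y ∂μ ∂τ := lintegral_mono_ae h
  _ = ∫⁻ x, ∫⁻ y, K x y ∂τ ∂μ := (lintegral_lintegral_swap hK).symm

theorem exists_ne_zero_forall_mul_le_of_isCompact {X : Type*} [TopologicalSpace X] {s t : Set X}
    (hs : IsCompact s) {φ F : X → ℝ≥0∞}
    (h : ∀ p ∈ s, ∃ c ≠ 0, ∀ᶠ y in 𝓝[t] p, c * φ y ≤ F y) :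
    ∃ c ≠ 0, ∀ y ∈ s ∩ t, c * φ y ≤ F y := by
  refine hs.induction_on (p := fun u => ∃ c ≠ 0, ∀ y ∈ u ∩ t, c * φ y ≤ F y)
    ⟨1, one_ne_zero, by simp⟩ ?_ ?_ ?_
  · rintro u v huv ⟨c, hc, hv⟩
    exact ⟨c, hc, fun y hy => hv y ⟨huv hy.1, hy.2⟩⟩
  · rintro u v ⟨c, hc, hu⟩ ⟨d, hd, hv⟩
    refine ⟨min c d, (lt_min hc.bot_lt hd.bot_lt).ne', ?_⟩
    rintro y ⟨hyu | hyv, hyt⟩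
    · exact (mul_le_mul_left (min_le_left c d) _).trans (hu y ⟨hyu, hyt⟩)
    · exact (mul_le_mul_left (min_le_right c d) _).trans (hv y ⟨hyv, hyt⟩)
  · intro p hp
    obtain ⟨c, hc, hcp⟩ := h p hp
    exact ⟨_, mem_nhdsWithin_of_mem_nhds (eventually_nhdsWithin_iff.1 hcp), c, hc,
      fun y hy => hy.1 hy.2⟩

variable {E : Type*} [TopologicalSpace E] [T1Space E] [MeasurableSpace E] [BorelSpace E]

theorem exists_ne_zero_eventually_mul_le_setLIntegral {μ : Measure E} [μ.IsOpenPosMeasure]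
    [NullSingletonClass μ] {s : Set E} {z : E} (hz : s ∈ 𝓝 z) {l : Filter E} {φ : E → ℝ≥0∞}
    {K : E → E → ℝ≥0∞} {k : ℝ≥0∞} (hk : k ≠ 0)
    (h : ∀ᶠ q in 𝓝 z ×ˢ l, q.1 ≠ q.2 → k * φ q.2 ≤ K q.1 q.2) :
    ∃ c ≠ 0, ∀ᶠ y in l, c * φ y ≤ ∫⁻ x in s, K x y ∂μ := by
  obtain ⟨P, hP, Q, hQ, hPQ⟩ := eventually_prod_iff.1 h
  obtain ⟨U, hUs, hU, hzU⟩ := mem_nhds_iff.1 (inter_mem hz hP)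
  refine ⟨k * μ U, mul_ne_zero hk (hU.measure_pos μ ⟨z, hzU⟩).ne', hQ.mono fun y hy => ?_⟩
  calc k * μ U * φ y = k * φ y * μ (U \ {y}) := by
        rw [measure_sdiff_null (measure_singleton y), mul_right_comm]
    _ = ∫⁻ _ in U \ {y}, k * φ y ∂μ := (setLIntegral_const _ _).symm
    _ ≤ ∫⁻ x in U \ {y}, K x y ∂μ :=
        setLIntegral_mono' (hU.measurableSet.diff (measurableSet_singleton y))
          fun x hx => hPQ (hUs hx.1).2 hy hx.2
    _ ≤ ∫⁻ x in s, K x y ∂μ := lintegral_mono_set fun x hx => (hUs hx.1).1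

theorem exists_pos_forall_ofReal_mul_le_setLIntegral {μ : Measure E} [μ.IsOpenPosMeasure]
    [NullSingletonClass μ] {Ω : Set E} (hΩo : IsOpen Ω) (hΩc : IsCompact (closure Ω)) {φ : E → ℝ}
    {K : E → E → ℝ}
    (h : ∀ p ∈ closure Ω, ∃ z ∈ Ω, ∃ κ > 0,
      ∀ᶠ q in 𝓝 z ×ˢ 𝓝[Ω] p, q.1 ≠ q.2 → κ * φ q.2 ≤ K q.1 q.2) :
    ∃ r > 0, ∀ y ∈ Ω,
      ENNReal.ofReal r * ENNReal.ofReal (φ y) ≤ ∫⁻ x in Ω, ENNReal.ofReal (K x y) ∂μ := by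
  have hlocal : ∀ p ∈ closure Ω, ∃ c ≠ 0, ∀ᶠ y in 𝓝[Ω] p,
      c * ENNReal.ofReal (φ y) ≤ ∫⁻ x in Ω, ENNReal.ofReal (K x y) ∂μ := fun p hp => by
    obtain ⟨z, hz, κ, hκ, hK⟩ := h p hp
    refine exists_ne_zero_eventually_mul_le_setLIntegral (hΩo.mem_nhds hz)
      (ENNReal.ofReal_pos.2 hκ).ne' (hK.mono fun q hq hne => ?_)
    rw [← ENNReal.ofReal_mul hκ.le]
    exact ENNReal.ofReal_le_ofReal (hq hne)
  obtain ⟨c, hc, hcΩ⟩ := exists_ne_zero_forall_mul_le_of_isCompact hΩc hlocal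
  obtain ⟨r, hr, hrc⟩ := ENNReal.lt_iff_exists_nnreal_btwn.1 (pos_iff_ne_zero.2 hc)
  refine ⟨r, NNReal.coe_pos.2 (ENNReal.coe_pos.1 hr), fun y hy => ?_⟩
  rw [ENNReal.ofReal_coe_nnreal]
  exact (mul_le_mul_left hrc.le _).trans (hcΩ y ⟨subset_closure hy, hy⟩)

theorem ofReal_inv_mul_lintegral_le {ν : Measure β} {f : β → ℝ} {A B M : ℝ} (hA : 0 ≤ A)
    (hB : 0 < B) (hBM : B ≤ M) :
    ENNReal.ofReal M⁻¹ * ∫⁻ y, ENNReal.ofReal (A * f y) ∂ν ≤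
      ENNReal.ofReal (A / B) * ∫⁻ y, ENNReal.ofReal (f y) ∂ν := by
  have hM : 0 ≤ M⁻¹ := inv_nonneg.2 (hB.le.trans hBM)
  simp_rw [ENNReal.ofReal_mul hA]
  rw [lintegral_const_mul' _ _ ENNReal.ofReal_ne_top, ← mul_assoc, ← ENNReal.ofReal_mul hM,
    inv_mul_eq_div]
  gcongr

end LowerBounds

section Kernel

theorem exists_pos_forall_le_comp_dist {X : Type*} [MetricSpace X] {s : Set X}
    (hs : Bornology.IsBounded s) {g : ℝ → ℝ} (hg : AntitoneOn g (Ioi 0)) (hg0 : ∀ r > 0, 0 < g r) :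
    ∃ m > 0, ∀ x ∈ s, ∀ y ∈ s, x ≠ y → m ≤ g (dist x y) := by
  obtain ⟨D, hD⟩ := Metric.isBounded_iff.1 hs
  have hD0 : 0 < max D 1 := lt_max_of_lt_right one_pos
  exact ⟨g (max D 1), hg0 _ hD0, fun x hx y hy hxy =>
    hg (dist_pos.2 hxy) hD0 ((hD hx hy).trans (le_max_left _ _))⟩

variable {E : Type*} [PseudoMetricSpace E] {Ω : Set E} {Φ : E → ℝ} {G : E → E → ℝ} {p : E} {κ : ℝ}

theorem eventually_half_mul_le_of_interior {b : ℝ} (hΩ : IsOpen Ω) (hp : p ∈ Ω)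
    (hδ : 0 < infDist p (frontier Ω)) (hΦ : ContinuousAt Φ p) (hΦ0 : 0 < Φ p) (hb : 0 < b)
    (hκ : 0 < κ)
    (hG : ∀ x ∈ Ω, ∀ y ∈ Ω, x ≠ y →
      dist x y ≤ b * min (infDist x (frontier Ω)) (infDist y (frontier Ω)) → κ ≤ G x y) :
    ∀ᶠ q in 𝓝 p ×ˢ 𝓝[Ω] p, q.1 ≠ q.2 → κ / 2 * Φ q.2 ≤ Φ q.1 * G q.1 q.2 := by
  have hδc : Continuous fun x => infDist x (frontier Ω) := continuous_infDist_pt _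
  have hdist : ∀ᶠ q : E × E in 𝓝 (p, p),
      dist q.1 q.2 < b * min (infDist q.1 (frontier Ω)) (infDist q.2 (frontier Ω)) :=
    continuous_dist.continuousAt.eventually_lt
      (((hδc.comp continuous_fst).min (hδc.comp continuous_snd)).const_mul b).continuousAt <| by
        rw [dist_self, min_self]
        exact mul_pos hb hδ
  have hΦ2 : ∀ᶠ q : E × E in 𝓝 (p, p), Φ q.2 < 2 * Φ q.1 :=
    (hΦ.comp_of_eq continuousAt_snd rfl).eventually_lt
      ((hΦ.comp_of_eq continuousAt_fst rfl).const_mul 2) (lt_two_mul_self hΦ0)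
  have hΦ1 : ∀ᶠ q : E × E in 𝓝 (p, p), 0 < Φ q.1 :=
    (hΦ.comp_of_eq continuousAt_fst rfl).eventually_const_lt hΦ0
  rw [nhds_prod_eq] at hdist hΦ1 hΦ2
  have hle : 𝓝 p ×ˢ 𝓝[Ω] p ≤ 𝓝 p ×ˢ 𝓝 p := prod_mono_right _ nhdsWithin_le_nhds
  filter_upwards [hle hdist, hle hΦ1, hle hΦ2,
    prod_mem_prod (hΩ.mem_nhds hp) self_mem_nhdsWithin] with q hq hq1 hq2 hqΩ hne
  calc κ / 2 * Φ q.2 ≤ κ / 2 * (2 * Φ q.1) := by gcongr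
    _ = Φ q.1 * κ := by ring
    _ ≤ Φ q.1 * G q.1 q.2 := by
      gcongr
      exact hG _ hqΩ.1 _ hqΩ.2 hne hq.le

theorem exists_mem_eventually_mul_le_of_frontier {a β : ℝ} (hΩ : IsOpen Ω) (hp : p ∈ frontier Ω)
    (hpa : p ∈ closure (nontangentialRegion Ω a p)) (hβ : 0 < β)
    (hG : ∀ y ∈ Ω, ∀ x ∈ nontangentialRegion Ω a y, infDist x (frontier Ω) < β → x ≠ y →
      κ * Φ y ≤ Φ x * G x y) :
    ∃ z ∈ Ω, ∀ᶠ q in 𝓝 z ×ˢ 𝓝[Ω] p, q.1 ≠ q.2 → κ * Φ q.2 ≤ Φ q.1 * G q.1 q.2 := by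
  obtain ⟨z, hz, hzp⟩ := Metric.mem_closure_iff.1 hpa β hβ
  have hzβ : infDist z (frontier Ω) < β :=
    (infDist_le_dist_of_mem hp).trans_lt (dist_comm p z ▸ hzp)
  have hnear : ∀ᶠ q in 𝓝 z, infDist q (frontier Ω) < β :=
    (continuous_infDist_pt _).continuousAt.eventually_lt_const hzβ
  have hregion : ∀ᶠ q in 𝓝 z ×ˢ 𝓝 p, q.1 ∈ nontangentialRegion Ω a q.2 :=
    nhds_prod_eq (x := z) (y := p) ▸ (isOpen_setOf_mem_nontangentialRegion hΩ a).mem_nhds hz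
  refine ⟨z, hz.1, ?_⟩
  filter_upwards [prod_mono_right _ nhdsWithin_le_nhds hregion,
    prod_mem_prod hnear self_mem_nhdsWithin] with q hq hqβ hne
  exact hG _ hqβ.2 _ hq hqβ.1 hne

end Kernel

theorem exists_pos_forall_mul_lintegral_le_of_local {E : Type*} [MetricSpace E] [MeasurableSpace E]
    [BorelSpace E] {μ : Measure E} [SFinite μ] [μ.IsOpenPosMeasure] [NullSingletonClass μ]
    {Ω : Set E} (hΩo : IsOpen Ω) (hΩc : IsCompact (closure Ω)) {Φ Φ₀ : E → ℝ} {G : E → E → ℝ}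
    (hΦc : ContinuousOn Φ Ω) (hΦpos : ∀ x ∈ Ω, 0 < Φ x) (hΦ₀ : BddAbove (Φ₀ '' Ω))
    (hΦ₀pos : ∀ x ∈ Ω, 0 < Φ₀ x) (hGm : Measurable (Function.uncurry G))
    (hlocal : ∀ p ∈ closure Ω, ∃ z ∈ Ω, ∃ κ > 0,
      ∀ᶠ q in 𝓝 z ×ˢ 𝓝[Ω] p, q.1 ≠ q.2 → κ * Φ q.2 ≤ Φ q.1 * G q.1 q.2) :
    ∃ c : ℝ, 0 < c ∧ ∀ τ : Measure E, SFinite (τ.restrict Ω) →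
      ENNReal.ofReal c⁻¹ * (∫⁻ x in Ω, ENNReal.ofReal (Φ x) ∂τ) ≤
        ∫⁻ x in Ω, ENNReal.ofReal (Φ x / Φ₀ x) *
          (∫⁻ y in Ω, ENNReal.ofReal (G x y) ∂τ) ∂μ := by
  obtain ⟨r, hr, hrΩ⟩ := exists_pos_forall_ofReal_mul_le_setLIntegral (μ := μ) (φ := Φ)
    (K := fun x y => Φ x * G x y) hΩo hΩc hlocal
  obtain ⟨M, hM1, hM⟩ := hΦ₀.exists_ge 1
  have : 0 < M := one_pos.trans_le hM1
  have hΩm : MeasurableSet Ω := hΩo.measurableSet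
  refine ⟨M / r, by positivity, fun τ _ => ?_⟩
  have hK : AEMeasurable (Function.uncurry fun x y => ENNReal.ofReal (Φ x * G x y))
      ((μ.restrict Ω).prod (τ.restrict Ω)) :=
    ((hΦc.aemeasurable hΩm).comp_fst.mul hGm.aemeasurable).ennreal_ofReal
  calc ENNReal.ofReal (M / r)⁻¹ * ∫⁻ y in Ω, ENNReal.ofReal (Φ y) ∂τ
      = ENNReal.ofReal M⁻¹ * (ENNReal.ofReal r * ∫⁻ y in Ω, ENNReal.ofReal (Φ y) ∂τ) := by
        rw [← mul_assoc, ← ENNReal.ofReal_mul (by positivity), inv_div, inv_mul_eq_div]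
    _ ≤ ENNReal.ofReal M⁻¹ * ∫⁻ x in Ω, ∫⁻ y in Ω, ENNReal.ofReal (Φ x * G x y) ∂τ ∂μ := by
        gcongr
        exact mul_lintegral_le_lintegral_lintegral hK (ae_restrict_of_forall_mem hΩm hrΩ)
    _ ≤ ∫⁻ x in Ω, ENNReal.ofReal M⁻¹ * ∫⁻ y in Ω, ENNReal.ofReal (Φ x * G x y) ∂τ ∂μ :=
        lintegral_const_mul_le _ _
    _ ≤ ∫⁻ x in Ω, ENNReal.ofReal (Φ x / Φ₀ x) * ∫⁻ y in Ω, ENNReal.ofReal (G x y) ∂τ ∂μ :=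
        setLIntegral_mono' hΩm fun x hx => ofReal_inv_mul_lintegral_le (hΦpos x hx).le
          (hΦ₀pos x hx) (hM _ (mem_image_of_mem _ hx))

theorem stmt3_general {E : Type*} [MetricSpace E] [MeasurableSpace E] [BorelSpace E]
    {μ : Measure E} [SFinite μ] [μ.IsOpenPosMeasure] [NullSingletonClass μ] {Ω : Set E}
    (hΩo : IsOpen Ω) (hΩc : IsCompact (closure Ω)) (hδ : ∀ x ∈ Ω, 0 < infDist x (frontier Ω))
    {a : ℝ} (hΩa : ∀ p ∈ frontier Ω, p ∈ closure (nontangentialRegion Ω a p))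
    {Φ Φ₀ : E → ℝ} {G : E → E → ℝ} (hΦc : ContinuousOn Φ Ω) (hΦpos : ∀ x ∈ Ω, 0 < Φ x)
    (hΦ₀ : BddAbove (Φ₀ '' Ω)) (hΦ₀pos : ∀ x ∈ Ω, 0 < Φ₀ x) (hGm : Measurable (Function.uncurry G))
    {g : ℝ → ℝ} (hg : AntitoneOn g (Ioi 0)) (hgpos : ∀ r > 0, 0 < g r)
    {c₁ c₂ b β₁ : ℝ} (hc₁ : 0 < c₁) (hc₂ : 0 < c₂) (hb : 0 < b) (hβ₁ : 0 < β₁)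
    (hG1 : ∀ y ∈ Ω, ∀ x ∈ nontangentialRegion Ω a y, infDist x (frontier Ω) < β₁ → x ≠ y →
      c₁ * g (dist x y) * Φ y ≤ Φ x * G x y)
    (hG2 : ∀ x ∈ Ω, ∀ y ∈ Ω, x ≠ y →
      dist x y ≤ b * min (infDist x (frontier Ω)) (infDist y (frontier Ω)) →
      c₂ * g (dist x y) ≤ G x y) :
    ∃ c : ℝ, 0 < c ∧ ∀ τ : Measure E, SFinite (τ.restrict Ω) →
      ENNReal.ofReal c⁻¹ * (∫⁻ x in Ω, ENNReal.ofReal (Φ x) ∂τ) ≤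
        ∫⁻ x in Ω, ENNReal.ofReal (Φ x / Φ₀ x) *
          (∫⁻ y in Ω, ENNReal.ofReal (G x y) ∂τ) ∂μ := by
  obtain ⟨m, hm, hmg⟩ :=
    exists_pos_forall_le_comp_dist (hΩc.isBounded.subset subset_closure) hg hgpos
  have hG1' : ∀ y ∈ Ω, ∀ x ∈ nontangentialRegion Ω a y, infDist x (frontier Ω) < β₁ → x ≠ y →
      c₁ * m * Φ y ≤ Φ x * G x y := fun y hy x hx hxβ hxy => by
    refine le_trans ?_ (hG1 y hy x hx hxβ hxy)
    have := (hΦpos y hy).le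
    gcongr
    exact hmg x hx.1 y hy hxy
  have hG2' : ∀ x ∈ Ω, ∀ y ∈ Ω, x ≠ y →
      dist x y ≤ b * min (infDist x (frontier Ω)) (infDist y (frontier Ω)) → c₂ * m ≤ G x y :=
    fun x hx y hy hxy hd =>
      (mul_le_mul_of_nonneg_left (hmg x hx y hy hxy) hc₂.le).trans (hG2 x hx y hy hxy hd)
  have hlocal : ∀ p ∈ closure Ω, ∃ z ∈ Ω, ∃ κ > 0,
      ∀ᶠ q in 𝓝 z ×ˢ 𝓝[Ω] p, q.1 ≠ q.2 → κ * Φ q.2 ≤ Φ q.1 * G q.1 q.2 := fun p hp => by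
    by_cases hpΩ : p ∈ Ω
    · exact ⟨p, hpΩ, c₂ * m / 2, by positivity, eventually_half_mul_le_of_interior hΩo hpΩ
        (hδ p hpΩ) (hΦc.continuousAt (hΩo.mem_nhds hpΩ)) (hΦpos p hpΩ) hb (mul_pos hc₂ hm) hG2'⟩
    · have hpf : p ∈ frontier Ω := hΩo.frontier_eq ▸ ⟨hp, hpΩ⟩
      obtain ⟨z, hz, hzG⟩ :=
        exists_mem_eventually_mul_le_of_frontier hΩo hpf (hΩa p hpf) hβ₁ hG1'
      exact ⟨z, hz, c₁ * m, mul_pos hc₁ hm, hzG⟩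
  exact exists_pos_forall_mul_lintegral_le_of_local hΩo hΩc hΦc hΦpos hΦ₀ hΦ₀pos hGm hlocal

theorem stmt3 {N : ℕ} (hN : 3 ≤ N) (Ω : Set (EuclideanSpace ℝ (Fin N)))
    (hΩo : IsOpen Ω) (hΩb : Bornology.IsBounded Ω) (hΩ2 : HasC2Boundary Ω)
    (Φ Φ₀ : EuclideanSpace ℝ (Fin N) → ℝ)
    (G : EuclideanSpace ℝ (Fin N) → EuclideanSpace ℝ (Fin N) → ℝ)
    (hΦc : ContinuousOn Φ Ω) (hΦpos : ∀ x ∈ Ω, 0 < Φ x)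
    (cs : ℝ) (hcs : 1 ≤ cs)
    (hΦ₀ : ∀ x ∈ Ω, cs⁻¹ * Metric.infDist x (frontier Ω) ≤ Φ₀ x ∧
      Φ₀ x ≤ cs * Metric.infDist x (frontier Ω))
    (hΦ₀pos : ∀ x ∈ Ω, 0 < Φ₀ x)
    (hGm : Measurable (Function.uncurry G))
    (hGpos : ∀ x ∈ Ω, ∀ y ∈ Ω, x ≠ y → 0 < G x y)
    (a c₀ β₁ : ℝ) (ha : 2 ≤ a) (hc₀ : 1 ≤ c₀) (hβ₁ : 0 < β₁)
    -- (i): two-sided boundary Green estimate near the diagonal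
    (hG1 : ∀ β ∈ Set.Ioo (0:ℝ) β₁, ∀ x ∈ Ω, Metric.infDist x (frontier Ω) = β →
      ∀ y ∈ Ω, 0 < dist x y → dist x y < a * β →
        c₀⁻¹ * dist x y ^ ((2:ℝ) - N) * Φ y ≤ Φ x * G x y ∧
        Φ x * G x y ≤ c₀ * dist x y ^ ((2:ℝ) - N) * Φ y)
    -- (ii): interior lower Green estimate
    (hG2 : ∀ b : ℝ, 0 < b → ∃ Cb : ℝ, 1 ≤ Cb ∧ ∀ x ∈ Ω, ∀ y ∈ Ω,
      0 < dist x y →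
      dist x y ≤ b⁻¹ * min (Metric.infDist x (frontier Ω)) (Metric.infDist y (frontier Ω)) →
      Cb⁻¹ * dist x y ^ ((2:ℝ) - N) ≤ G x y) :
    ∃ c : ℝ, 0 < c ∧ ∀ τ : Measure (EuclideanSpace ℝ (Fin N)), τ Ωᶜ = 0 →
      (∫⁻ x in Ω, ENNReal.ofReal (Φ x) ∂τ) < ⊤ →
      ENNReal.ofReal c⁻¹ * (∫⁻ x in Ω, ENNReal.ofReal (Φ x) ∂τ) ≤
        ∫⁻ x in Ω, ENNReal.ofReal (Φ x / Φ₀ x) *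
          (∫⁻ y in Ω, ENNReal.ofReal (G x y) ∂τ) ∂volume := by
  have hδ : ∀ x ∈ Ω, 0 < infDist x (frontier Ω) := fun x hx =>
    pos_of_mul_pos_right ((hΦ₀pos x hx).trans_le (hΦ₀ x hx).2) (by positivity)
  have hΦ₀b : BddAbove (Φ₀ '' Ω) := by
    obtain ⟨M, hM⟩ := hΩb.isCompact_closure.bddAbove_image
      ((continuous_infDist_pt (frontier Ω)).const_mul cs).continuousOn
    exact ⟨M, forall_mem_image.2 fun x hx =>
      (hΦ₀ x hx).2.trans (hM (mem_image_of_mem _ (subset_closure hx)))⟩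
  have hexp : (2 : ℝ) - N ≤ 0 := sub_nonpos.2 (by exact_mod_cast (Nat.le_succ 2).trans hN)
  have : Nonempty (Fin N) := ⟨⟨0, by lia⟩⟩
  obtain ⟨C, hC1, hC⟩ := hG2 1 one_pos
  obtain ⟨c, hc, h⟩ := stmt3_general (μ := volume) hΩo hΩb.isCompact_closure hδ
    (fun p hp => hΩ2.mem_closure_nontangentialRegion hΩo hp (one_lt_two.trans_le ha)) hΦc hΦpos
    hΦ₀b hΦ₀pos hGm (Real.antitoneOn_rpow_Ioi_of_exponent_nonpos hexp)
    (fun r hr => Real.rpow_pos_of_pos hr _) (inv_pos.2 (one_pos.trans_le hc₀))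
    (inv_pos.2 (one_pos.trans_le hC1)) (inv_pos.2 one_pos) hβ₁
    (fun y hy x hx hβ hxy => (hG1 _ ⟨hδ x hx.1, hβ⟩ x hx.1 rfl y hy (dist_pos.2 hxy) hx.2).1)
    (fun x hx y hy hxy => hC x hx y hy (dist_pos.2 hxy))
  exact ⟨c, hc, fun τ _ hτ => h τ <| sFinite_of_lintegral_ne_top
    (hΦc.aemeasurable hΩo.measurableSet).ennreal_ofReal
    (ae_restrict_of_forall_mem hΩo.measurableSet fun x hx =>
      (ENNReal.ofReal_pos.2 (hΦpos x hx)).ne') hτ.ne⟩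
end

section
/- Let Ω ⊂ ℝ^N (N ≥ 3) be a bounded open set with C² boundary. Let α, α* be real numbers with 0 < α − 1/2 < α* ≤ α, let Φ : Ω → (0,∞) be continuous with c₁⁻¹ δ(x)^α ≤ Φ(x) ≤ c₁ δ(x)^{α*} for all x with δ(x) < β₁ (some c₁ ≥ 1, β₁ > 0), let Φ₀ : Ω → (0,∞) satisfy c_*⁻¹ δ ≤ Φ₀ ≤ c_* δ, and let G : {(x,y) ∈ Ω × Ω : x ≠ y} → (0,∞) be Borel measurable and symmetric. Assume there exist a ≥ 2 and c₀ ≥ 1 such that for all β ∈ (0,β₁) and x ∈ Σ_β: (i) Φ(x) G(x,y) ≤ c₀ |x−y|^{2−N} Φ(y) for all y ∈ Ω with 0 < |x−y| < aβ; (ii) Φ(x) G(x,y) ≤ c₀ β^{2α*} |x−y|^{2−N−2α} Φ(y) for all y ∈ Ω with |x−y| ≥ aβ; and in addition (iii) for every b > 0 there is C(b) with G(x,y) ≤ C(b) |x−y|^{2−N} whenever 0 < |x−y| ≤ b⁻¹ min(δ(x),δ(y)); (iv) for every r > 0 there is C(r) with G(x,y) ≤ C(r) Φ(x) whenever δ(y)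 ≥ r and δ(x) < r/2. Then there exists c′ > 0 such that for every positive Borel measure τ on Ω with ∫_Ω Φ dτ < ∞: ∫_Ω (Φ(x)/Φ₀(x)) (∫_Ω G(x,y) dτ(y)) dx ≤ c′ ∫_Ω Φ dτ. -/
open MeasureTheory Metric Set

/-!
By Tonelli's theorem it suffices to bound `∫ Φ(x) / δ(x) * G(x, y) dx` by a multiple of `Φ(y)`,
uniformly in `y`. The Green estimates bound the integrand by a multiple of `|x - y| ^ (1 - N) Φ(y)`
or, where `δ(x) ≤ |x - y|`, after trading powers of `δ(x)` for powers of `|x - y|`, by a multiple of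
`δ(x) ^ (-γ) |x - y| ^ (-q) Φ(y)` with `γ < 1` and `γ + q < N`. Dyadic decomposition shows that both
singular factors have bounded integrals, the second because a boundary layer of width `t` has volume
`O(t r ^ (N - 1))` in a ball of radius `r`: a line transverse to the boundary stays in the layer for
a length `O(t)`, so about `r / t` disjoint translates of the layer fit into a ball of radius `2 r`.
Apart from this volume bound the argument takes place in a metric measure space.
-/

open scoped ENNReal NNReal Topology

section DyadicDecomposition

variable {X : Type*} [MeasurableSpace X] {μ : Measure X} {g : X → ℝ} {C : ℝ≥0∞} {p q R : ℝ}

lemma setLIntegral_preimage_Ioc_half_rpow_neg_le (hq : 0 ≤ q) (hR : 0 < R)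
    (h : μ (g ⁻¹' Ioc 0 R) ≤ C * ENNReal.ofReal (R ^ p)) :
    ∫⁻ x in g ⁻¹' Ioc (R / 2) R, ENNReal.ofReal (g x ^ (-q)) ∂μ ≤
      C * ENNReal.ofReal (2 ^ q * R ^ (p - q)) := by
  have hpow : (R / 2) ^ (-q) * R ^ p = 2 ^ q * R ^ (p - q) := by
    rw [Real.div_rpow hR.le zero_le_two, Real.rpow_neg zero_le_two, div_inv_eq_mul,
      sub_eq_neg_add, Real.rpow_add hR]
    ring
  calc ∫⁻ x in g ⁻¹' Ioc (R / 2) R, ENNReal.ofReal (g x ^ (-q)) ∂μ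
      ≤ ∫⁻ _ in g ⁻¹' Ioc (R / 2) R, ENNReal.ofReal ((R / 2) ^ (-q)) ∂μ :=
        setLIntegral_mono measurable_const fun x hx => ENNReal.ofReal_le_ofReal <|
          Real.rpow_le_rpow_of_nonpos (half_pos hR) hx.1.le (neg_nonpos.2 hq)
    _ = ENNReal.ofReal ((R / 2) ^ (-q)) * μ (g ⁻¹' Ioc (R / 2) R) := setLIntegral_const _ _
    _ ≤ ENNReal.ofReal ((R / 2) ^ (-q)) * (C * ENNReal.ofReal (R ^ p)) := by
        gcongr
        exact (measure_mono <| preimage_mono <| Ioc_subset_Ioc_left (half_pos hR).le).trans h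
    _ = C * ENNReal.ofReal (2 ^ q * R ^ (p - q)) := by
        rw [mul_left_comm, ← ENNReal.ofReal_mul (by positivity), hpow]

lemma Ioc_zero_subset_iUnion_Ioc_dyadic (R : ℝ) :
    Ioc 0 R ⊆ ⋃ k : ℕ, Ioc (R * (1 / 2) ^ k / 2) (R * (1 / 2) ^ k) := by
  rintro s ⟨hs, hsR⟩
  have hR : 0 < R := hs.trans_le hsR
  obtain ⟨k, hk, hk'⟩ := exists_nat_pow_near_of_lt_one (x := s / R) (y := (1 / 2 : ℝ))
    (by positivity) ((div_le_one hR).2 hsR) (by norm_num) (by norm_num)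
  rw [lt_div_iff₀ hR, pow_succ] at hk
  rw [div_le_iff₀ hR] at hk'
  exact mem_iUnion.2 ⟨k, by linarith, by linarith⟩

lemma setLIntegral_preimage_Ioc_zero_rpow_neg_le (hq : 0 ≤ q) (hqp : q < p)
    (h : ∀ s ∈ Ioc 0 R, μ (g ⁻¹' Ioc 0 s) ≤ C * ENNReal.ofReal (s ^ p)) :
    ∫⁻ x in g ⁻¹' Ioc 0 R, ENNReal.ofReal (g x ^ (-q)) ∂μ ≤
      C * ENNReal.ofReal (2 ^ q * R ^ (p - q) * (1 - (1 / 2) ^ (p - q))⁻¹) := by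
  rcases le_or_gt R 0 with hR | hR
  · simp [Ioc_eq_empty_of_le hR]
  set ρ : ℝ := (1 / 2) ^ (p - q) with hρ
  have hρ0 : 0 ≤ ρ := by positivity
  have hρ1 : ρ < 1 := Real.rpow_lt_one (by norm_num) (by norm_num) (sub_pos.2 hqp)
  have hpow (k : ℕ) : (R * (1 / 2) ^ k) ^ (p - q) = R ^ (p - q) * ρ ^ k := by
    rw [Real.mul_rpow hR.le (by positivity), hρ, Real.rpow_pow_comm (by norm_num)]
  have hannulus (k : ℕ) : ∫⁻ x in g ⁻¹' Ioc (R * (1 / 2) ^ k / 2) (R * (1 / 2) ^ k),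
      ENNReal.ofReal (g x ^ (-q)) ∂μ ≤ C * ENNReal.ofReal (2 ^ q * R ^ (p - q) * ρ ^ k) := by
    rw [mul_assoc, ← hpow]
    refine setLIntegral_preimage_Ioc_half_rpow_neg_le hq (by positivity)
      (h _ ⟨by positivity, mul_le_of_le_one_right hR.le ?_⟩)
    exact pow_le_one₀ (by norm_num) (by norm_num)
  calc ∫⁻ x in g ⁻¹' Ioc 0 R, ENNReal.ofReal (g x ^ (-q)) ∂μ
      ≤ ∫⁻ x in ⋃ k : ℕ, g ⁻¹' Ioc (R * (1 / 2) ^ k / 2) (R * (1 / 2) ^ k),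
          ENNReal.ofReal (g x ^ (-q)) ∂μ := by
        rw [← preimage_iUnion]
        exact lintegral_mono_set (preimage_mono (Ioc_zero_subset_iUnion_Ioc_dyadic R))
    _ ≤ ∑' k : ℕ, C * ENNReal.ofReal (2 ^ q * R ^ (p - q) * ρ ^ k) :=
        (lintegral_iUnion_le _ _).trans (ENNReal.tsum_le_tsum hannulus)
    _ = C * ENNReal.ofReal (2 ^ q * R ^ (p - q) * (1 - ρ)⁻¹) := by
        rw [ENNReal.tsum_mul_left, ← ENNReal.ofReal_tsum_of_nonneg (fun k => by positivity)
          ((summable_geometric_of_lt_one hρ0 hρ1).mul_left _), tsum_mul_left,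
          tsum_geometric_of_lt_one hρ0 hρ1]

end DyadicDecomposition

section MetricMeasure

variable {X : Type*} [PseudoMetricSpace X] [MeasurableSpace X] {μ : Measure X} {n : ℝ}

/-- A measure is upper Ahlfors regular of exponent `n` if a ball of radius `r` has measure
`O(r ^ n)`, at every scale. -/
def IsUpperAhlforsRegular (μ : Measure X) (n : ℝ) : Prop :=
  ∃ C : ℝ≥0, ∀ (y : X) (r : ℝ), 0 < r → μ (closedBall y r) ≤ C * ENNReal.ofReal (r ^ n)

/-- A set has thin thickenings if its `t`-thickening occupies a proportion `O(t / r)` of the balls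
of radius `r`, as for a hypersurface. The doubled ball on the right makes the notion meaningful for
balls whose centre is not on the set, without assuming that the measure is doubling. -/
def HasThinThickenings (μ : Measure X) (S : Set X) : Prop :=
  ∃ C : ℝ≥0, ∀ (y : X) (t r : ℝ), 0 < t → 0 < r →
    μ (thickening t S ∩ ball y r) ≤ C * ENNReal.ofReal (t / r) * μ (ball y (2 * r))

lemma HasThinThickenings.mono {S T : Set X} (hT : HasThinThickenings μ T) (hST : S ⊆ T) :
    HasThinThickenings μ S := by
  obtain ⟨C, hC⟩ := hT
  refine ⟨C, fun y t r ht hr => (measure_mono ?_).trans (hC y t r ht hr)⟩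
  exact inter_subset_inter_left _ (thickening_subset_of_subset t hST)

lemma HasThinThickenings.union {S T : Set X} (hS : HasThinThickenings μ S)
    (hT : HasThinThickenings μ T) : HasThinThickenings μ (S ∪ T) := by
  obtain ⟨C, hC⟩ := hS
  obtain ⟨C', hC'⟩ := hT
  refine ⟨C + C', fun y t r ht hr => ?_⟩
  rw [thickening_union, union_inter_distrib_right, ENNReal.coe_add, add_mul, add_mul]
  exact (measure_union_le _ _).trans (add_le_add (hC y t r ht hr) (hC' y t r ht hr))

lemma hasThinThickenings_of_isCompact {S : Set X} (hS : IsCompact S)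
    (h : ∀ p ∈ S, ∃ T ∈ 𝓝[S] p, HasThinThickenings μ T) : HasThinThickenings μ S :=
  hS.induction_on ⟨0, by simp⟩ (fun _ _ hST hT => hT.mono hST) (fun _ _ hS hT => hS.union hT) h

lemma IsUpperAhlforsRegular.measure_lt_top_of_isBounded (hμ : IsUpperAhlforsRegular μ n) {S : Set X}
    (hS : Bornology.IsBounded S) : μ S < ⊤ := by
  obtain ⟨C, hC⟩ := hμ
  rcases S.eq_empty_or_nonempty with rfl | ⟨y, -⟩
  · simp
  obtain ⟨r, hr, hSr⟩ := hS.subset_closedBall_lt 0 y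
  exact (measure_mono hSr).trans_lt ((hC y r hr).trans_lt (by finiteness))

lemma IsUpperAhlforsRegular.nullSingletonClass (hμ : IsUpperAhlforsRegular μ n) (hn : 0 < n) :
    NullSingletonClass μ := by
  obtain ⟨C, hC⟩ := hμ
  refine ⟨fun y => le_antisymm ?_ bot_le⟩
  have hlim : Filter.Tendsto (fun r : ℝ => C * ENNReal.ofReal (r ^ n)) (𝓝[>] 0) (𝓝 0) := by
    have hpow : Filter.Tendsto (fun r : ℝ => r ^ n) (𝓝[>] 0) (𝓝 0) := by
      simpa [Real.zero_rpow hn.ne'] using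
        (Real.continuousAt_rpow_const 0 n (Or.inr hn.le)).tendsto.mono_left nhdsWithin_le_nhds
    simpa using ENNReal.Tendsto.const_mul (ENNReal.tendsto_ofReal hpow)
      (Or.inr (ENNReal.coe_ne_top (r := C)))
  refine ge_of_tendsto hlim (eventually_mem_nhdsWithin.mono fun r hr => ?_)
  have hr : 0 < r := hr
  exact (measure_mono (singleton_subset_iff.2 (mem_closedBall_self hr.le))).trans (hC y r hr)

lemma IsUpperAhlforsRegular.exists_setLIntegral_dist_rpow_neg_le (hμ : IsUpperAhlforsRegular μ n)
    {q : ℝ} (hq : 0 ≤ q) (hqn : q < n) (D : ℝ) :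
    ∃ K : ℝ≥0, ∀ y, ∫⁻ x in (dist · y) ⁻¹' Ioc 0 D, ENNReal.ofReal (dist x y ^ (-q)) ∂μ ≤ K := by
  obtain ⟨C, hC⟩ := hμ
  refine ⟨C * Real.toNNReal _, fun y => (setLIntegral_preimage_Ioc_zero_rpow_neg_le hq hqn
    fun s hs => ?_).trans_eq (ENNReal.coe_mul _ _).symm⟩
  exact (measure_mono fun x hx => hx.2).trans (hC y s hs.1)

section Layer

variable {F : Set X}

lemma HasThinThickenings.exists_measure_layer_inter_closedBall_le (hF : HasThinThickenings μ F)
    (hμ : IsUpperAhlforsRegular μ n) :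
    ∃ C : ℝ≥0, ∀ (y : X) (t r : ℝ), 0 < t → 0 < r →
      μ ((infDist · F) ⁻¹' Ioc 0 t ∩ closedBall y r) ≤
        C * ENNReal.ofReal (r ^ (n - 1)) * ENNReal.ofReal t := by
  obtain ⟨C, hC⟩ := hμ
  obtain ⟨C', hC'⟩ := hF
  refine ⟨C' * C * Real.toNNReal (4 ^ n), fun y t r ht hr => ?_⟩
  have hsub : (infDist · F) ⁻¹' Ioc 0 t ∩ closedBall y r ⊆
      thickening (2 * t) F ∩ ball y (2 * r) := by
    rintro x ⟨⟨hx0, hxt⟩, hxy⟩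
    have hF : F.Nonempty := nonempty_iff_ne_empty.2 <| by
      rintro rfl
      simp at hx0
    exact ⟨(mem_thickening_iff_infDist_lt hF).2 (by linarith),
      closedBall_subset_ball (by linarith) hxy⟩
  have hpow : 2 * t / (2 * r) * (2 * (2 * r)) ^ n = 4 ^ n * r ^ (n - 1) * t := by
    rw [← mul_assoc, Real.mul_rpow (by norm_num) hr.le, Real.rpow_sub_one hr.ne']
    norm_num
    field_simp
  calc μ ((infDist · F) ⁻¹' Ioc 0 t ∩ closedBall y r)
      ≤ μ (thickening (2 * t) F ∩ ball y (2 * r)) := measure_mono hsub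
    _ ≤ C' * ENNReal.ofReal (2 * t / (2 * r)) * μ (ball y (2 * (2 * r))) :=
        hC' y _ _ (by positivity) (by positivity)
    _ ≤ C' * ENNReal.ofReal (2 * t / (2 * r)) *
          (C * ENNReal.ofReal ((2 * (2 * r)) ^ n)) := by
        gcongr
        exact (measure_mono ball_subset_closedBall).trans (hC y _ (by positivity))
    _ = C' * C * ENNReal.ofReal (2 * t / (2 * r) * (2 * (2 * r)) ^ n) := by
        rw [ENNReal.ofReal_mul (by positivity)]
        ring
    _ = C' * C * ENNReal.ofReal (4 ^ n) * ENNReal.ofReal (r ^ (n - 1)) * ENNReal.ofReal t := by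
        rw [hpow, ENNReal.ofReal_mul (by positivity), ENNReal.ofReal_mul (by positivity)]
        ring

variable [OpensMeasurableSpace X] {γ : ℝ}

lemma HasThinThickenings.exists_setLIntegral_infDist_rpow_neg_le (hF : HasThinThickenings μ F)
    (hμ : IsUpperAhlforsRegular μ n) (hγ : 0 ≤ γ) (hγ1 : γ < 1) :
    ∃ C : ℝ≥0, ∀ (y : X) (r : ℝ), 0 < r →
      ∫⁻ x in (infDist · F) ⁻¹' Ioc 0 r ∩ closedBall y r, ENNReal.ofReal (infDist x F ^ (-γ)) ∂μ ≤
        C * ENNReal.ofReal (r ^ (n - γ)) := by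
  obtain ⟨C, hC⟩ := hF.exists_measure_layer_inter_closedBall_le hμ
  refine ⟨C * Real.toNNReal (2 ^ γ * (1 - (1 / 2) ^ (1 - γ))⁻¹), fun y r hr => ?_⟩
  have hpow : r ^ (n - γ) = r ^ (n - 1) * r ^ (1 - γ) := by
    rw [← Real.rpow_add hr, sub_add_sub_cancel]
  have hlayer : ∀ s ∈ Ioc 0 r, μ.restrict (closedBall y r) ((infDist · F) ⁻¹' Ioc 0 s) ≤
      C * ENNReal.ofReal (r ^ (n - 1)) * ENNReal.ofReal (s ^ (1 : ℝ)) := by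
    intro s hs
    rw [Measure.restrict_apply' measurableSet_closedBall, Real.rpow_one]
    exact hC y s r hs.1 hr
  rw [← Measure.restrict_restrict' measurableSet_closedBall]
  refine (setLIntegral_preimage_Ioc_zero_rpow_neg_le hγ hγ1 hlayer).trans_eq ?_
  rw [ENNReal.coe_mul, ← ENNReal.ofReal, mul_assoc (C : ℝ≥0∞), mul_assoc (C : ℝ≥0∞),
    ← ENNReal.ofReal_mul (by positivity), ← ENNReal.ofReal_mul' (by positivity), hpow]
  ring_nf

lemma HasThinThickenings.exists_setLIntegral_infDist_rpow_neg_mul_dist_rpow_neg_le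
    (hF : HasThinThickenings μ F) (hμ : IsUpperAhlforsRegular μ n) (hγ : 0 ≤ γ) (hγ1 : γ < 1)
    {q : ℝ} (hq : 0 ≤ q) (hqγ : γ + q < n) (D : ℝ) :
    ∃ K : ℝ≥0, ∀ y,
      ∫⁻ x in (dist · y) ⁻¹' Ioc 0 D ∩ {x | infDist x F ∈ Ioc 0 (dist x y)},
        ENNReal.ofReal (infDist x F ^ (-γ)) * ENNReal.ofReal (dist x y ^ (-q)) ∂μ ≤ K := by
  obtain ⟨C, hC⟩ := hF.exists_setLIntegral_infDist_rpow_neg_le hμ hγ hγ1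
  refine ⟨C * (2 ^ q * D ^ (n - γ - q) * (1 - (1 / 2) ^ (n - γ - q))⁻¹).toNNReal, fun y => ?_⟩
  have hannulus (s : ℝ) : MeasurableSet ((dist · y) ⁻¹' Ioc 0 s) :=
    (continuous_id.dist continuous_const).measurable measurableSet_Ioc
  set B : Set X := {x | infDist x F ∈ Ioc 0 (dist x y)}
  have hmass : ∀ s ∈ Ioc 0 D,
      (μ.restrict B).withDensity (fun x => ENNReal.ofReal (infDist x F ^ (-γ)))
        ((dist · y) ⁻¹' Ioc 0 s) ≤ C * ENNReal.ofReal (s ^ (n - γ)) := by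
    intro s hs
    rw [withDensity_apply _ (hannulus s), Measure.restrict_restrict (hannulus s)]
    refine (lintegral_mono_set ?_).trans (hC y s hs.1)
    exact fun x hx => ⟨⟨hx.2.1, hx.2.2.trans hx.1.2⟩, hx.1.2⟩
  have hint := setLIntegral_preimage_Ioc_zero_rpow_neg_le hq (lt_sub_iff_add_lt'.2 hqγ) hmass
  rw [setLIntegral_withDensity_eq_setLIntegral_mul _ (by fun_prop) (by fun_prop) (hannulus D),
    Measure.restrict_restrict (hannulus D)] at hint
  exact hint.trans_eq (ENNReal.coe_mul _ _).symm

end Layer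

end MetricMeasure

section Hypersurface

variable {E : Type*} [NormedAddCommGroup E]

lemma card_mul_measure_le_of_pairwiseDisjoint_translates [MeasurableSpace E] [MeasurableAdd E]
    {μ : Measure E} [μ.IsAddRightInvariant] {ι : Type*} {I : Finset ι} {w : ι → E} {A B : Set E}
    (hA : MeasurableSet A) (hdisj : (I : Set ι).PairwiseDisjoint fun i => (· + w i) ⁻¹' A)
    (hAB : ∀ i ∈ I, (· + w i) ⁻¹' A ⊆ B) : I.card * μ A ≤ μ B :=
  calc I.card * μ A = ∑ i ∈ I, μ ((· + w i) ⁻¹' A) := by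
        simp only [measure_preimage_add_right, Finset.sum_const, nsmul_eq_mul]
    _ = μ (⋃ i ∈ I, (· + w i) ⁻¹' A) :=
        (measure_biUnion_finset hdisj fun i _ => measurable_add_const _ hA).symm
    _ ≤ μ B := measure_mono (iUnion₂_subset hAB)

variable [NormedSpace ℝ E]

lemma pairwiseDisjoint_preimage_add_smul {S : Set E} {v : E} {l : ℝ} (hl : 0 < l)
    (hS : ∀ x ∈ S, ∀ s : ℝ, x + s • v ∈ S → |s| < l) (I : Set ℕ) :
    I.PairwiseDisjoint fun k : ℕ => (· + (k * l : ℝ) • v) ⁻¹' S := by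
  intro j _ k _ hjk
  refine Set.disjoint_left.2 fun x hj hk => hjk ?_
  have hxk : x + (j * l : ℝ) • v + ((k - j) * l : ℝ) • v ∈ S := by
    have : x + (j * l : ℝ) • v + ((k - j) * l : ℝ) • v = x + (k * l : ℝ) • v := by module
    rwa [this]
  have hlt := hS _ hj _ hxk
  rw [abs_mul, abs_of_pos hl, mul_lt_iff_lt_one_left hl] at hlt
  have habs : |(k : ℤ) - j| < 1 := by exact_mod_cast hlt
  rw [Int.abs_lt_one_iff] at habs
  lia

lemma measure_inter_ball_le_of_forall_add_smul_mem [MeasurableSpace E] [BorelSpace E]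
    {μ : Measure E} [μ.IsAddRightInvariant] {S : Set E} (hS : MeasurableSet S) {v : E}
    (hv : ‖v‖ = 1) {l : ℝ} (hl : 0 < l) (hline : ∀ x ∈ S, ∀ s : ℝ, x + s • v ∈ S → |s| < l)
    (y : E) {r : ℝ} (hr : 0 < r) :
    μ (S ∩ ball y r) ≤ ENNReal.ofReal (l / r) * μ (ball y (2 * r)) := by
  set m : ℕ := ⌊r / l⌋₊ + 1
  have hm : r / l ≤ m := (Nat.lt_floor_add_one _).le.trans_eq (by simp [m])
  have hdisj : (Finset.range m : Set ℕ).PairwiseDisjoint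
      fun k : ℕ => (· + (k * l : ℝ) • v) ⁻¹' (S ∩ ball y r) :=
    (pairwiseDisjoint_preimage_add_smul hl hline _).mono fun k =>
      preimage_mono inter_subset_left
  have hsub : ∀ k ∈ Finset.range m,
      (· + (k * l : ℝ) • v) ⁻¹' (S ∩ ball y r) ⊆ ball y (2 * r) := by
    rintro k hk x ⟨-, hxy⟩
    have hkr : k * l ≤ r := by
      rw [← le_div_iff₀ hl]
      exact (Nat.le_floor_iff (by positivity)).1 (Nat.lt_succ_iff.1 (Finset.mem_range.1 hk))
    have hdist : dist x (x + (k * l : ℝ) • v) = k * l := by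
      rw [dist_self_add_right, norm_smul, hv, mul_one, Real.norm_of_nonneg (by positivity)]
    rw [mem_ball] at hxy ⊢
    linarith [dist_triangle x (x + (k * l : ℝ) • v) y]
  have hpack : m * μ (S ∩ ball y r) ≤ μ (ball y (2 * r)) := by
    simpa using card_mul_measure_le_of_pairwiseDisjoint_translates
      (hS.inter measurableSet_ball) hdisj hsub
  have hone : ENNReal.ofReal (l / r) * ENNReal.ofReal (r / l) = 1 := by
    rw [← ENNReal.ofReal_mul (by positivity), div_mul_div_cancel₀ hr.ne', div_self hl.ne',
      ENNReal.ofReal_one]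
  calc μ (S ∩ ball y r)
      = ENNReal.ofReal (l / r) * (ENNReal.ofReal (r / l) * μ (S ∩ ball y r)) := by
        rw [← mul_assoc, hone, one_mul]
    _ ≤ ENNReal.ofReal (l / r) * (m * μ (S ∩ ball y r)) := by
        gcongr
        exact (ENNReal.ofReal_le_ofReal hm).trans_eq (ENNReal.ofReal_natCast m)
    _ ≤ ENNReal.ofReal (l / r) * μ (ball y (2 * r)) := by gcongr

lemma exists_norm_eq_one_and_pos {f' : E →L[ℝ] ℝ} (hf' : f' ≠ 0) : ∃ v, ‖v‖ = 1 ∧ 0 < f' v := by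
  obtain ⟨w, hw⟩ := DFunLike.ne_iff.1 hf'
  have hpos : 0 < f' (f' w • w) := by
    rw [map_smul, smul_eq_mul]
    exact mul_self_pos.2 hw
  have hne : f' w • w ≠ 0 := fun h => by simp [h] at hpos
  refine ⟨‖f' w • w‖⁻¹ • f' w • w, norm_smul_inv_norm hne, ?_⟩
  rw [map_smul, smul_eq_mul]
  exact mul_pos (inv_pos.2 (norm_pos_iff.2 hne)) hpos

lemma abs_lt_of_mem_thickening_of_approximatesLinearOn {f : E → ℝ} {f' : E →L[ℝ] ℝ} {S : Set E}
    {c : ℝ≥0} (hf : ApproximatesLinearOn f f' S c) (hS : ∀ x ∈ S, ∀ y ∈ S, f x = f y) {v : E}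
    (hv : ‖v‖ = 1) (hcv : c < f' v) {t : ℝ} {x : E} {s : ℝ} (hx : x ∈ thickening t S)
    (hxs : x + s • v ∈ thickening t S) : |s| < 2 * (‖f'‖ + c) / (f' v - c) * t := by
  obtain ⟨z, hz, hxz⟩ := mem_thickening_iff.1 hx
  obtain ⟨w, hw, hxw⟩ := mem_thickening_iff.1 hxs
  rw [dist_eq_norm] at hxz hxw
  set e : E := (x - z) - (x + s • v - w) with he
  have hwz : w - z = s • v + e := by rw [he]; abel
  have hnorm_e : ‖e‖ < 2 * t := (norm_sub_le _ _).trans_lt (by linarith)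
  have hnorm : ‖w - z‖ ≤ |s| + ‖e‖ := by
    simpa [hwz, norm_smul, hv] using norm_add_le (s • v) e
  have hflat : |f' (w - z)| ≤ c * ‖w - z‖ := by
    simpa [hS w hw z hz, -map_sub] using hf w hw z hz
  have htransverse : |s| * f' v ≤ |f' (w - z)| + ‖f'‖ * ‖e‖ := by
    have hsv : s * f' v = f' (w - z) - f' e := by simp [hwz]
    rw [← abs_of_pos (c.coe_nonneg.trans_lt hcv), ← abs_mul, hsv]
    exact (abs_sub _ _).trans (by gcongr; exact f'.le_opNorm e)
  have hf'pos : 0 < ‖f'‖ + c := by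
    have := (le_abs_self _).trans (f'.le_opNorm v)
    rw [hv, mul_one] at this
    linarith [c.coe_nonneg]
  rw [div_mul_eq_mul_div, lt_div_iff₀ (sub_pos.2 hcv)]
  nlinarith [mul_lt_mul_of_pos_left hnorm_e hf'pos, mul_le_mul_of_nonneg_left hnorm c.coe_nonneg]

lemma exists_hasThinThickenings_of_hasStrictFDerivAt [MeasurableSpace E] [BorelSpace E]
    (μ : Measure E) [μ.IsAddRightInvariant] {f : E → ℝ} {f' : E →L[ℝ] ℝ} {p : E}
    (hf : HasStrictFDerivAt f f' p) (hf' : f' ≠ 0) :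
    ∃ W ∈ 𝓝 p, ∀ a, HasThinThickenings μ (W ∩ f ⁻¹' {a}) := by
  obtain ⟨v, hv, hfv⟩ := exists_norm_eq_one_and_pos hf'
  obtain ⟨c, hc, hcv⟩ : ∃ c : ℝ≥0, 0 < c ∧ c < f' v :=
    ⟨⟨f' v / 2, by positivity⟩, half_pos hfv, half_lt_self hfv⟩
  obtain ⟨W, hW, hlin⟩ := hf.approximates_deriv_on_nhds (Or.inr hc)
  set L : ℝ := 2 * (‖f'‖ + c) / (f' v - c)
  have hL : 0 < L := div_pos (by positivity) (sub_pos.2 hcv)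
  refine ⟨W, hW, fun a => ⟨L.toNNReal, fun y t r ht hr => ?_⟩⟩
  have hline : ∀ x ∈ thickening t (W ∩ f ⁻¹' {a}), ∀ s : ℝ,
      x + s • v ∈ thickening t (W ∩ f ⁻¹' {a}) → |s| < L * t := fun x hx s hxs =>
    abs_lt_of_mem_thickening_of_approximatesLinearOn (hlin.mono_set inter_subset_left)
      (fun z hz w hw => hz.2.trans hw.2.symm) hv hcv hx hxs
  refine (measure_inter_ball_le_of_forall_add_smul_mem isOpen_thickening.measurableSet hv
    (mul_pos hL ht) hline y hr).trans_eq ?_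
  rw [mul_div_assoc, ENNReal.ofReal_mul hL.le, ENNReal.ofReal]

lemma isUpperAhlforsRegular_addHaar [FiniteDimensional ℝ E] [MeasurableSpace E] [BorelSpace E]
    (μ : Measure E) [μ.IsAddHaarMeasure] :
    IsUpperAhlforsRegular μ (Module.finrank ℝ E) := by
  refine ⟨(μ (ball 0 1)).toNNReal, fun y r hr => ?_⟩
  rw [ENNReal.coe_toNNReal measure_ball_lt_top.ne, Measure.addHaar_closedBall μ y hr.le,
    Real.rpow_natCast, mul_comm]

lemma isUpperAhlforsRegular_volume_euclideanSpace (N : ℕ) :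
    IsUpperAhlforsRegular (volume : Measure (EuclideanSpace ℝ (Fin N))) N := by
  have h := isUpperAhlforsRegular_addHaar (volume : Measure (EuclideanSpace ℝ (Fin N)))
  rwa [finrank_euclideanSpace_fin] at h

lemma eq_zero_of_mem_frontier_of_inter_eq_sublevel {X : Type*} [TopologicalSpace X] {Ω U : Set X}
    {f : X → ℝ} (hΩ : IsOpen Ω) (hU : IsOpen U) (hf : ContinuousOn f U)
    (hΩU : Ω ∩ U = {x ∈ U | f x < 0}) {x : X} (hx : x ∈ frontier Ω) (hxU : x ∈ U) : f x = 0 := by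
  have hsub (z : X) (hz : z ∈ U) : z ∈ Ω ↔ f z < 0 := by
    simpa [hz] using Set.ext_iff.1 hΩU z
  have hxΩ : x ∉ Ω := (hΩ.frontier_eq ▸ hx).2
  refine le_antisymm (not_lt.1 fun hpos => ?_) (not_lt.1 fun hneg => hxΩ ((hsub x hxU).2 hneg))
  have hnhds := hU.mem_nhds hxU
  obtain ⟨z, ⟨hzpos, hzU⟩, hzΩ⟩ := mem_closure_iff_nhds.1 (frontier_subset_closure hx) _ <|
    Filter.inter_mem ((hf.continuousAt hnhds).eventually (lt_mem_nhds hpos)) hnhds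
  exact lt_asymm hzpos ((hsub z hzU).1 hzΩ)

lemma HasC2Boundary.hasThinThickenings_frontier {N : ℕ} {Ω : Set (EuclideanSpace ℝ (Fin N))}
    (hΩ : HasC2Boundary Ω) (hΩo : IsOpen Ω) (hΩb : Bornology.IsBounded Ω) :
    HasThinThickenings volume (frontier Ω) := by
  have hcomp : IsCompact (frontier Ω) :=
    hΩb.isCompact_closure.of_isClosed_subset isClosed_frontier frontier_subset_closure
  refine hasThinThickenings_of_isCompact hcomp fun p hp => ?_
  obtain ⟨U, f, hUo, hpU, hf, hf', hΩU⟩ := hΩ p hp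
  have hstrict : HasStrictFDerivAt f (fderiv ℝ f p) p :=
    (hf.contDiffAt (hUo.mem_nhds hpU)).hasStrictFDerivAt (by norm_num)
  obtain ⟨W, hW, hthin⟩ :=
    exists_hasThinThickenings_of_hasStrictFDerivAt volume hstrict (hf' p hpU)
  refine ⟨frontier Ω ∩ (U ∩ W), inter_mem_nhdsWithin _ (Filter.inter_mem (hUo.mem_nhds hpU) hW),
    (hthin 0).mono fun x hx => ⟨hx.2.2, ?_⟩⟩
  exact eq_zero_of_mem_frontier_of_inter_eq_sublevel hΩo hUo hf.continuousOn hΩU hx.1 hx.2.1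

end Hypersurface

section Tonelli

variable {X Y : Type*} [MeasurableSpace X] [MeasurableSpace Y]

lemma sFinite_of_lintegral_ne_top_s4 {ν : Measure Y} {φ : Y → ℝ≥0∞} (hφ : AEMeasurable φ ν)
    (hφ0 : ∀ᵐ y ∂ν, φ y ≠ 0) (hfin : ∫⁻ y, φ y ∂ν ≠ ⊤) : SFinite ν := by
  have := isFiniteMeasure_withDensity hfin
  rw [← withDensity_inv_same₀ hφ hφ0 ((ae_lt_top' hφ hfin).mono fun _ h => h.ne)]
  infer_instance

lemma lintegral_mul_lintegral_kernel_le {μ : Measure X} [SFinite μ] {ν : Measure Y} {w : X → ℝ≥0∞}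
    {k : X → Y → ℝ≥0∞} {φ : Y → ℝ≥0∞} {c : ℝ≥0} (hc : c ≠ 0) (hw : AEMeasurable w μ)
    (hk : Measurable (Function.uncurry k)) (hφ : AEMeasurable φ ν) (hφ0 : ∀ᵐ y ∂ν, φ y ≠ 0)
    (h : ∀ᵐ y ∂ν, ∫⁻ x, w x * k x y ∂μ ≤ c * φ y) :
    ∫⁻ x, w x * ∫⁻ y, k x y ∂ν ∂μ ≤ c * ∫⁻ y, φ y ∂ν := by
  rcases eq_or_ne (∫⁻ y, φ y ∂ν) ⊤ with hfin | hfin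
  · rw [hfin, ENNReal.mul_top (by simpa using hc)]
    exact le_top
  have := sFinite_of_lintegral_ne_top_s4 hφ hφ0 hfin
  calc ∫⁻ x, w x * ∫⁻ y, k x y ∂ν ∂μ = ∫⁻ x, ∫⁻ y, w x * k x y ∂ν ∂μ :=
        lintegral_congr fun x => (lintegral_const_mul _ hk.of_uncurry_left).symm
    _ = ∫⁻ y, ∫⁻ x, w x * k x y ∂μ ∂ν :=
        lintegral_lintegral_swap (hw.comp_fst.mul hk.aemeasurable)
    _ ≤ ∫⁻ y, c * φ y ∂ν := lintegral_mono_ae h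
    _ = c * ∫⁻ y, φ y ∂ν := lintegral_const_mul' _ _ ENNReal.coe_ne_top

end Tonelli

section PointwiseBounds

variable {u g φ δ d D a c n : ℝ}

lemma div_le_mul_div_of_inv_mul_le (hδ : 0 < δ) (hu : 0 ≤ u) (hc : 0 < c) (h : c⁻¹ * δ ≤ d) :
    u / d ≤ c * (u / δ) :=
  calc u / d ≤ u / (c⁻¹ * δ) := by gcongr
    _ = c * (u / δ) := by field_simp

lemma rpow_two_sub (hd : 0 < d) (n : ℝ) : d ^ (2 - n) = d * d ^ (1 - n) := by
  rw [mul_comm, ← Real.rpow_add_one hd.ne']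
  ring_nf

lemma one_le_rpow_mul_rpow_neg (hd : 0 < d) (hdD : d ≤ D) {s : ℝ} (hs : 0 ≤ s) :
    1 ≤ D ^ s * d ^ (-s) := by
  rw [Real.rpow_neg hd.le, ← div_eq_mul_inv, one_le_div (by positivity)]
  gcongr

lemma rpow_mul_rpow_le_rpow_mul_rpow (hδ : 0 < δ) (hδd : δ ≤ d) {s t s' t' : ℝ} (hs : s' ≤ s)
    (hst : s + t = s' + t') : δ ^ s * d ^ t ≤ δ ^ s' * d ^ t' := by
  have hd : 0 < d := hδ.trans_le hδd
  calc δ ^ s * d ^ t = δ ^ s' * (δ ^ (s - s') * d ^ t) := by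
        rw [← mul_assoc, ← Real.rpow_add hδ, add_sub_cancel]
    _ ≤ δ ^ s' * (d ^ (s - s') * d ^ t) := by gcongr
    _ = δ ^ s' * d ^ t' := by
        rw [← Real.rpow_add hd, sub_add_eq_add_sub, hst, add_sub_cancel_left]

lemma div_mul_le_of_le_mul (hδ : 0 < δ) (hd : 0 < d) (hc : 0 ≤ c) (hφ : 0 ≤ φ) (hda : d ≤ a * δ)
    (h : u * g ≤ c * d ^ (2 - n) * φ) : u / δ * g ≤ c * a * d ^ (1 - n) * φ := by
  calc u / δ * g = u * g / δ := div_mul_eq_mul_div _ _ _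
    _ ≤ c * (d * d ^ (1 - n)) * φ / δ := by rw [← rpow_two_sub hd]; gcongr
    _ ≤ c * (a * δ * d ^ (1 - n)) * φ / δ := by gcongr
    _ = c * a * d ^ (1 - n) * φ := by field_simp

lemma div_mul_le_of_le {α αs γ q : ℝ} (hδ : 0 < δ) (hδd : δ ≤ d) (hc : 0 ≤ c) (hφ : 0 ≤ φ)
    (hγ : 1 - 2 * αs ≤ γ) (hq : γ + q = n - 1 + 2 * α - 2 * αs)
    (h : u * g ≤ c * δ ^ (2 * αs) * d ^ (2 - n - 2 * α) * φ) :
    u / δ * g ≤ c * (δ ^ (-γ) * d ^ (-q)) * φ :=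
  calc u / δ * g = u * g / δ := div_mul_eq_mul_div _ _ _
    _ ≤ c * δ ^ (2 * αs) * d ^ (2 - n - 2 * α) * φ / δ := by gcongr
    _ = c * (δ ^ (2 * αs - 1) * d ^ (2 - n - 2 * α)) * φ := by
        rw [Real.rpow_sub_one hδ.ne']
        ring
    _ ≤ c * (δ ^ (-γ) * d ^ (-q)) * φ := by
        gcongr c * ?_ * φ
        exact rpow_mul_rpow_le_rpow_mul_rpow hδ hδd (by linarith) (by linarith)

lemma div_mul_le_or {α αs γ q : ℝ} (hδ : 0 < δ) (hd : 0 < d) (ha : 1 ≤ a) (hc : 0 ≤ c)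
    (hφ : 0 ≤ φ) (hγ : 1 - 2 * αs ≤ γ) (hq : γ + q = n - 1 + 2 * α - 2 * αs)
    (hnear : d < a * δ → u * g ≤ c * d ^ (2 - n) * φ)
    (hfar : a * δ ≤ d → u * g ≤ c * δ ^ (2 * αs) * d ^ (2 - n - 2 * α) * φ) :
    u / δ * g ≤ c * a * d ^ (1 - n) * φ ∨ δ ≤ d ∧ u / δ * g ≤ c * (δ ^ (-γ) * d ^ (-q)) * φ := by
  rcases lt_or_ge d (a * δ) with hda | hda
  · exact Or.inl (div_mul_le_of_le_mul hδ hd hc hφ hda.le (hnear hda))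
  · have hδd : δ ≤ d := (le_mul_of_one_le_left hδ.le ha).trans hda
    exact Or.inr ⟨hδd, div_mul_le_of_le hδ hδd hc hφ hγ hq (hfar hda)⟩

end PointwiseBounds

section InteriorBounds

variable {X : Type*} [MetricSpace X] [ProperSpace X] {Ω : Set X}

lemma isCompact_setOf_le_infDist_frontier (hΩo : IsOpen Ω) (hΩb : Bornology.IsBounded Ω) {s : ℝ}
    (hs : 0 < s) : IsCompact {x ∈ Ω | s ≤ infDist x (frontier Ω)} := by
  have hclosure : {x ∈ Ω | s ≤ infDist x (frontier Ω)} =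
      closure Ω ∩ {x | s ≤ infDist x (frontier Ω)} := by
    refine Subset.antisymm (fun x hx => ⟨subset_closure hx.1, hx.2⟩) fun x ⟨hxc, hxs⟩ => ⟨?_, hxs⟩
    by_contra hxΩ
    have hxf : x ∈ frontier Ω := hΩo.frontier_eq ▸ ⟨hxc, hxΩ⟩
    exact (hs.trans_le hxs).ne' (infDist_zero_of_mem hxf)
  rw [hclosure]
  exact hΩb.isCompact_closure.inter_right
    (isClosed_le continuous_const (continuous_infDist_pt _))

lemma exists_forall_le_of_le_infDist_frontier (hΩo : IsOpen Ω) (hΩb : Bornology.IsBounded Ω)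
    {f : X → ℝ} (hf : ContinuousOn f Ω) {s : ℝ} (hs : 0 < s) :
    ∃ M, 0 ≤ M ∧ ∀ x ∈ Ω, s ≤ infDist x (frontier Ω) → f x ≤ M := by
  obtain ⟨M, hM⟩ := (isCompact_setOf_le_infDist_frontier hΩo hΩb hs).bddAbove_image
    (hf.mono fun x hx => hx.1)
  exact ⟨max M 0, le_max_right _ _, fun x hx hxs => le_max_of_le_left (hM ⟨x, ⟨hx, hxs⟩, rfl⟩)⟩

variable {Φ : X → ℝ} {G : X → X → ℝ} {n β : ℝ}

lemma exists_kernel_le_of_le_infDist_frontier (hΩo : IsOpen Ω) (hΩb : Bornology.IsBounded Ω)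
    (hn : 1 ≤ n) (hΦc : ContinuousOn Φ Ω) (hΦpos : ∀ x ∈ Ω, 0 < Φ x)
    (hGsym : ∀ x ∈ Ω, ∀ y ∈ Ω, G x y = G y x)
    (hG3 : ∀ b : ℝ, 0 < b → ∃ Cb : ℝ, 0 < Cb ∧ ∀ x ∈ Ω, ∀ y ∈ Ω, 0 < dist x y →
      dist x y ≤ b⁻¹ * min (infDist x (frontier Ω)) (infDist y (frontier Ω)) →
      G x y ≤ Cb * dist x y ^ (2 - n))
    (hβ : 0 < β) (hG4 : ∃ C : ℝ, 0 < C ∧ ∀ x ∈ Ω, ∀ y ∈ Ω,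
      β ≤ infDist y (frontier Ω) → infDist x (frontier Ω) < β / 2 → G x y ≤ C * Φ x) :
    ∃ K, 0 ≤ K ∧ ∀ x ∈ Ω, ∀ y ∈ Ω, x ≠ y → β ≤ infDist x (frontier Ω) →
      G x y ≤ K * dist x y ^ (1 - n) * Φ y := by
  obtain ⟨M, hM, hΦM⟩ := exists_forall_le_of_le_infDist_frontier hΩo hΩb
    (hΦc.inv₀ fun x hx => (hΦpos x hx).ne') (half_pos hβ)
  set D : ℝ := diam Ω + 1
  have hD : 0 < D := by positivity
  obtain ⟨C₃, hC₃, h₃⟩ := hG3 (β / (2 * D)) (by positivity)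
  obtain ⟨C₄, hC₄, h₄⟩ := hG4
  refine ⟨C₃ * D * M + C₄ * D ^ (n - 1), by positivity, fun x hx y hy hxy hxβ => ?_⟩
  have hΦy := hΦpos y hy
  have hd : 0 < dist x y := dist_pos.2 hxy
  have hdD : dist x y ≤ D := (dist_le_diam_of_mem hΩb hx hy).trans (lt_add_one _).le
  rcases lt_or_ge (infDist y (frontier Ω)) (β / 2) with hyβ | hyβ
  · have hone := one_le_rpow_mul_rpow_neg hd hdD (sub_nonneg.2 hn)
    rw [neg_sub] at hone
    calc G x y ≤ C₄ * Φ y := (hGsym x hx y hy).trans_le (h₄ y hy x hx hxβ hyβ)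
      _ ≤ C₄ * Φ y * (D ^ (n - 1) * dist x y ^ (1 - n)) :=
        le_mul_of_one_le_right (by positivity) hone
      _ = C₄ * D ^ (n - 1) * dist x y ^ (1 - n) * Φ y := by ring
      _ ≤ _ := by gcongr; exact le_add_of_nonneg_left (by positivity)
  · have hone : 1 ≤ M * Φ y := (inv_le_iff_one_le_mul₀ hΦy).1 (hΦM y hy hyβ)
    have hmin : D ≤ (β / (2 * D))⁻¹ * min (infDist x (frontier Ω)) (infDist y (frontier Ω)) :=
      calc D = (β / (2 * D))⁻¹ * (β / 2) := by field_simp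
        _ ≤ _ := by gcongr; exact le_min (by linarith) hyβ
    calc G x y ≤ C₃ * (dist x y * dist x y ^ (1 - n)) :=
          rpow_two_sub hd n ▸ h₃ x hx y hy hd (hdD.trans hmin)
      _ ≤ C₃ * (D * dist x y ^ (1 - n)) := by gcongr
      _ ≤ C₃ * (D * dist x y ^ (1 - n)) * (M * Φ y) := le_mul_of_one_le_right (by positivity) hone
      _ = C₃ * D * M * dist x y ^ (1 - n) * Φ y := by ring
      _ ≤ _ := by gcongr; exact le_add_of_nonneg_right (by positivity)

lemma exists_div_infDist_mul_le_of_le_infDist_frontier (hΩo : IsOpen Ω)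
    (hΩb : Bornology.IsBounded Ω) (hΦc : ContinuousOn Φ Ω) (hΦpos : ∀ x ∈ Ω, 0 < Φ x) (hβ : 0 < β)
    (hG : ∃ K, 0 ≤ K ∧ ∀ x ∈ Ω, ∀ y ∈ Ω, x ≠ y → β ≤ infDist x (frontier Ω) →
      G x y ≤ K * dist x y ^ (1 - n) * Φ y) :
    ∃ K, ∀ x ∈ Ω, ∀ y ∈ Ω, x ≠ y → β ≤ infDist x (frontier Ω) →
      Φ x / infDist x (frontier Ω) * G x y ≤ K * dist x y ^ (1 - n) * Φ y := by
  obtain ⟨M, hM, hΦM⟩ := exists_forall_le_of_le_infDist_frontier hΩo hΩb hΦc hβ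
  obtain ⟨K, hK, hGK⟩ := hG
  refine ⟨M / β * K, fun x hx y hy hxy hxβ => ?_⟩
  have hΦx := hΦpos x hx
  have hΦy := hΦpos y hy
  calc Φ x / infDist x (frontier Ω) * G x y
      ≤ Φ x / infDist x (frontier Ω) * (K * dist x y ^ (1 - n) * Φ y) :=
        mul_le_mul_of_nonneg_left (hGK x hx y hy hxy hxβ) (div_nonneg hΦx.le infDist_nonneg)
    _ ≤ M / β * (K * dist x y ^ (1 - n) * Φ y) := by
        gcongr
        exact hΦM x hx hxβ
    _ = M / β * K * dist x y ^ (1 - n) * Φ y := by ring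

end InteriorBounds

section KernelIntegral

lemma setLIntegral_le_add_of_forall_or {Z : Type*} [MeasurableSpace Z] {μ : Measure Z}
    {S S₁ S₂ : Set Z} {k f₁ f₂ : Z → ℝ≥0∞} (hf₁ : Measurable f₁) (hf₂ : Measurable f₂)
    (h : ∀ x ∈ S, x ∈ S₁ ∧ k x ≤ f₁ x ∨ x ∈ S₂ ∧ k x ≤ f₂ x) :
    ∫⁻ x in S, k x ∂μ ≤ (∫⁻ x in S₁, f₁ x ∂μ) + ∫⁻ x in S₂, f₂ x ∂μ :=
  calc ∫⁻ x in S, k x ∂μ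
      ≤ ∫⁻ x in {x ∈ S₁ | k x ≤ f₁ x} ∪ {x ∈ S₂ | k x ≤ f₂ x}, k x ∂μ := lintegral_mono_set h
    _ ≤ (∫⁻ x in {x ∈ S₁ | k x ≤ f₁ x}, k x ∂μ) + ∫⁻ x in {x ∈ S₂ | k x ≤ f₂ x}, k x ∂μ :=
        lintegral_union_le _ _ _
    _ ≤ (∫⁻ x in S₁, f₁ x ∂μ) + ∫⁻ x in S₂, f₂ x ∂μ :=
        add_le_add
          ((setLIntegral_mono hf₁ fun _ hx => hx.2).trans (lintegral_mono_set (sep_subset _ _)))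
          ((setLIntegral_mono hf₂ fun _ hx => hx.2).trans (lintegral_mono_set (sep_subset _ _)))

variable {X : Type*} [MetricSpace X] [MeasurableSpace X] [OpensMeasurableSpace X] {μ : Measure X}
  {Ω F : Set X} {k : X → X → ℝ} {φ : X → ℝ} {n γ q A B : ℝ}

lemma exists_setLIntegral_kernel_le (hμ : IsUpperAhlforsRegular μ n) (hn : 1 ≤ n)
    (hF : HasThinThickenings μ F) (hΩb : Bornology.IsBounded Ω) (hΩF : ∀ x ∈ Ω, 0 < infDist x F)
    (hφ : ∀ y ∈ Ω, 0 ≤ φ y) (hγ : 0 ≤ γ) (hγ1 : γ < 1) (hq : 0 ≤ q) (hqγ : γ + q < n)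
    (hk : ∀ x ∈ Ω, ∀ y ∈ Ω, x ≠ y → k x y ≤ A * dist x y ^ (1 - n) * φ y ∨
      infDist x F ≤ dist x y ∧ k x y ≤ B * (infDist x F ^ (-γ) * dist x y ^ (-q)) * φ y) :
    ∃ K : ℝ≥0, ∀ y ∈ Ω, ∫⁻ x in Ω, ENNReal.ofReal (k x y) ∂μ ≤ K * ENNReal.ofReal (φ y) := by
  have := hμ.nullSingletonClass (by linarith)
  obtain ⟨K₁, hK₁⟩ := hμ.exists_setLIntegral_dist_rpow_neg_le (sub_nonneg.2 hn) (sub_one_lt n)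
    (diam Ω)
  obtain ⟨K₂, hK₂⟩ := hF.exists_setLIntegral_infDist_rpow_neg_mul_dist_rpow_neg_le hμ hγ hγ1 hq hqγ
    (diam Ω)
  simp only [neg_sub] at hK₁
  refine ⟨A.toNNReal * K₁ + B.toNNReal * K₂, fun y hy => ?_⟩
  set φy := ENNReal.ofReal (φ y)
  set S : Set X := (dist · y) ⁻¹' Ioc 0 (diam Ω)
  set T : Set X := S ∩ {x | infDist x F ∈ Ioc 0 (dist x y)}
  have hcases : ∀ x ∈ Ω \ {y},
      x ∈ S ∧ ENNReal.ofReal (k x y) ≤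
        ENNReal.ofReal A * ENNReal.ofReal (dist x y ^ (1 - n)) * φy ∨
      x ∈ T ∧ ENNReal.ofReal (k x y) ≤ ENNReal.ofReal B *
        (ENNReal.ofReal (infDist x F ^ (-γ)) * ENNReal.ofReal (dist x y ^ (-q))) * φy := by
    rintro x ⟨hx, hxy⟩
    have hxS : x ∈ S := ⟨dist_pos.2 hxy, dist_le_diam_of_mem hΩb hx hy⟩
    have hδ := hΩF x hx
    refine (hk x hx y hy hxy).imp (fun h => ⟨hxS, ?_⟩) fun ⟨hδd, h⟩ => ⟨⟨hxS, hδ, hδd⟩, ?_⟩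
    · rw [← ENNReal.ofReal_mul' (by positivity), ← ENNReal.ofReal_mul' (hφ y hy)]
      exact ENNReal.ofReal_le_ofReal h
    · rw [← ENNReal.ofReal_mul (by positivity), ← ENNReal.ofReal_mul' (by positivity),
        ← ENNReal.ofReal_mul' (hφ y hy)]
      exact ENNReal.ofReal_le_ofReal h
  calc ∫⁻ x in Ω, ENNReal.ofReal (k x y) ∂μ
      = ∫⁻ x in Ω \ {y}, ENNReal.ofReal (k x y) ∂μ :=
        setLIntegral_congr (sdiff_null_ae_eq_self (measure_singleton y)).symm
    _ ≤ _ := setLIntegral_le_add_of_forall_or (by fun_prop) (by fun_prop) hcases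
    _ ≤ ENNReal.ofReal A * K₁ * φy + ENNReal.ofReal B * K₂ * φy := by
        rw [lintegral_mul_const _ (by fun_prop), lintegral_const_mul _ (by fun_prop),
          lintegral_mul_const _ (by fun_prop), lintegral_const_mul _ (by fun_prop)]
        gcongr
        exacts [hK₁ y, hK₂ y]
    _ = (A.toNNReal * K₁ + B.toNNReal * K₂ : ℝ≥0) * φy := by
        rw [← add_mul]
        rfl

end KernelIntegral

section GreenPotential

variable {X : Type*} [MetricSpace X] {Ω : Set X} {Φ Φ₀ : X → ℝ} {G : X → X → ℝ}
  {n α αs γ q β₁ a c₀ cs : ℝ}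

/-- The upper estimates (i)–(iv) for a Green kernel `G` with ground state `Φ`, in a space of
dimension `n`. The level `β` of the paper is `infDist x (frontier Ω)`. -/
structure GreenUpperBounds (Ω : Set X) (Φ : X → ℝ) (G : X → X → ℝ) (n α αs β₁ a c₀ : ℝ) :
    Prop where
  near : ∀ x ∈ Ω, infDist x (frontier Ω) < β₁ → ∀ y ∈ Ω, 0 < dist x y →
    dist x y < a * infDist x (frontier Ω) → Φ x * G x y ≤ c₀ * dist x y ^ (2 - n) * Φ y
  far : ∀ x ∈ Ω, infDist x (frontier Ω) < β₁ → ∀ y ∈ Ω, a * infDist x (frontier Ω) ≤ dist x y →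
    Φ x * G x y ≤ c₀ * infDist x (frontier Ω) ^ (2 * αs) * dist x y ^ (2 - n - 2 * α) * Φ y
  interior : ∀ b : ℝ, 0 < b → ∃ Cb : ℝ, 0 < Cb ∧ ∀ x ∈ Ω, ∀ y ∈ Ω, 0 < dist x y →
    dist x y ≤ b⁻¹ * min (infDist x (frontier Ω)) (infDist y (frontier Ω)) →
    G x y ≤ Cb * dist x y ^ (2 - n)
  boundary : ∀ r : ℝ, 0 < r → ∃ Cr : ℝ, 0 < Cr ∧ ∀ x ∈ Ω, ∀ y ∈ Ω,
    r ≤ infDist y (frontier Ω) → infDist x (frontier Ω) < r / 2 → G x y ≤ Cr * Φ x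

variable [ProperSpace X]

lemma GreenUpperBounds.exists_div_infDist_mul_le_or (hG : GreenUpperBounds Ω Φ G n α αs β₁ a c₀)
    (hGsym : ∀ x ∈ Ω, ∀ y ∈ Ω, G x y = G y x) (hn : 1 ≤ n) (hΩo : IsOpen Ω)
    (hΩb : Bornology.IsBounded Ω) (hδ : ∀ x ∈ Ω, 0 < infDist x (frontier Ω))
    (hΦc : ContinuousOn Φ Ω) (hΦpos : ∀ x ∈ Ω, 0 < Φ x) (hβ₁ : 0 < β₁) (ha : 1 ≤ a) (hc₀ : 0 ≤ c₀)
    (hγ : 1 - 2 * αs ≤ γ) (hq : γ + q = n - 1 + 2 * α - 2 * αs) :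
    ∃ A, ∀ x ∈ Ω, ∀ y ∈ Ω, x ≠ y →
      Φ x / infDist x (frontier Ω) * G x y ≤ A * dist x y ^ (1 - n) * Φ y ∨
      infDist x (frontier Ω) ≤ dist x y ∧ Φ x / infDist x (frontier Ω) * G x y ≤
        c₀ * (infDist x (frontier Ω) ^ (-γ) * dist x y ^ (-q)) * Φ y := by
  obtain ⟨K, hinterior⟩ := exists_div_infDist_mul_le_of_le_infDist_frontier hΩo hΩb hΦc hΦpos hβ₁
    (exists_kernel_le_of_le_infDist_frontier hΩo hΩb hn hΦc hΦpos hGsym hG.interior hβ₁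
      (hG.boundary β₁ hβ₁))
  refine ⟨max (c₀ * a) K, fun x hx y hy hxy => ?_⟩
  have hd : 0 < dist x y := dist_pos.2 hxy
  have hΦy := hΦpos y hy
  rcases lt_or_ge (infDist x (frontier Ω)) β₁ with hxβ | hxβ
  · refine (div_mul_le_or (hδ x hx) hd ha hc₀ hΦy.le hγ hq (hG.near x hx hxβ y hy hd)
      (hG.far x hx hxβ y hy)).imp_left fun h => h.trans ?_
    gcongr
    exact le_max_left _ _
  · refine Or.inl ((hinterior x hx y hy hxy hxβ).trans ?_)
    gcongr
    exact le_max_right _ _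

variable [MeasurableSpace X] [OpensMeasurableSpace X] {μ : Measure X}

lemma GreenUpperBounds.exists_setLIntegral_le (hG : GreenUpperBounds Ω Φ G n α αs β₁ a c₀)
    (hGsym : ∀ x ∈ Ω, ∀ y ∈ Ω, G x y = G y x) (hμ : IsUpperAhlforsRegular μ n) (hn : 1 ≤ n)
    (hΩo : IsOpen Ω) (hΩb : Bornology.IsBounded Ω) (hδ : ∀ x ∈ Ω, 0 < infDist x (frontier Ω))
    (hF : HasThinThickenings μ (frontier Ω)) (hα : 0 < α - 1 / 2) (hαs : α - 1 / 2 < αs)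
    (hαs' : αs ≤ α) (hΦc : ContinuousOn Φ Ω) (hΦpos : ∀ x ∈ Ω, 0 < Φ x) (hβ₁ : 0 < β₁)
    (ha : 1 ≤ a) (hc₀ : 0 ≤ c₀) :
    ∃ K : ℝ≥0, ∀ y ∈ Ω, ∫⁻ x in Ω,
      ENNReal.ofReal (Φ x / infDist x (frontier Ω)) * ENNReal.ofReal (G x y) ∂μ ≤
        K * ENNReal.ofReal (Φ y) := by
  obtain ⟨γ, hγ⟩ : ∃ γ, γ = max 0 (1 - 2 * αs) := ⟨_, rfl⟩
  have hγ0 : 0 ≤ γ := hγ ▸ le_max_left _ _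
  have hγ1 : γ < 1 := hγ ▸ max_lt one_pos (by linarith)
  have hγs : 1 - 2 * αs ≤ γ := hγ ▸ le_max_right _ _
  have hγn : γ ≤ n - 1 + 2 * α - 2 * αs := hγ ▸ max_le (by linarith) (by linarith)
  obtain ⟨A, hA⟩ := hG.exists_div_infDist_mul_le_or hGsym hn hΩo hΩb hδ hΦc hΦpos hβ₁ ha hc₀ hγs
    (add_sub_cancel _ _)
  obtain ⟨K, hK⟩ := exists_setLIntegral_kernel_le hμ hn hF hΩb hδ (fun y hy => (hΦpos y hy).le)
    hγ0 hγ1 (sub_nonneg.2 hγn) (by linarith) hA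
  refine ⟨K, fun y hy => (setLIntegral_congr_fun hΩo.measurableSet fun x hx => ?_).trans_le
    (hK y hy)⟩
  exact (ENNReal.ofReal_mul (div_nonneg (hΦpos x hx).le (hδ x hx).le)).symm

theorem stmt4_general (hμ : IsUpperAhlforsRegular μ n) (hn : 1 ≤ n) (hΩo : IsOpen Ω)
    (hΩb : Bornology.IsBounded Ω) (hδ : ∀ x ∈ Ω, 0 < infDist x (frontier Ω))
    (hF : HasThinThickenings μ (frontier Ω)) (hα : 0 < α - 1 / 2) (hαs : α - 1 / 2 < αs)
    (hαs' : αs ≤ α) (hΦc : ContinuousOn Φ Ω) (hΦpos : ∀ x ∈ Ω, 0 < Φ x) (hcs : 0 < cs)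
    (hΦ₀ : ∀ x ∈ Ω, cs⁻¹ * infDist x (frontier Ω) ≤ Φ₀ x) (hGm : Measurable (Function.uncurry G))
    (hGsym : ∀ x ∈ Ω, ∀ y ∈ Ω, G x y = G y x) (hβ₁ : 0 < β₁) (ha : 1 ≤ a) (hc₀ : 0 ≤ c₀)
    (hG : GreenUpperBounds Ω Φ G n α αs β₁ a c₀) :
    ∃ c' : ℝ, 0 < c' ∧ ∀ τ : Measure X,
      ∫⁻ x in Ω, ENNReal.ofReal (Φ x / Φ₀ x) * (∫⁻ y in Ω, ENNReal.ofReal (G x y) ∂τ) ∂μ ≤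
        ENNReal.ofReal c' * ∫⁻ x in Ω, ENNReal.ofReal (Φ x) ∂τ := by
  obtain ⟨K, hK⟩ := hG.exists_setLIntegral_le hGsym hμ hn hΩo hΩb hδ hF hα hαs hαs' hΦc hΦpos hβ₁
    ha hc₀
  have hΩm := hΩo.measurableSet
  have hfin : IsFiniteMeasure (μ.restrict Ω) :=
    isFiniteMeasure_restrict.2 (hμ.measure_lt_top_of_isBounded hΩb).ne
  have hweight : ∀ x ∈ Ω, ENNReal.ofReal (Φ x / Φ₀ x) ≤
      ENNReal.ofReal cs * ENNReal.ofReal (Φ x / infDist x (frontier Ω)) := fun x hx =>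
    (ENNReal.ofReal_le_ofReal (div_le_mul_div_of_inv_mul_le (hδ x hx) (hΦpos x hx).le hcs
      (hΦ₀ x hx))).trans_eq (ENNReal.ofReal_mul hcs.le)
  refine ⟨cs * (K + 1 : ℝ≥0), by positivity, fun τ => ?_⟩
  have hTonelli := lintegral_mul_lintegral_kernel_le (ν := τ.restrict Ω)
    (k := fun x y => ENNReal.ofReal (G x y)) (c := K + 1) (by positivity)
    ((hΦc.aemeasurable hΩm).div measurable_infDist.aemeasurable).ennreal_ofReal
    hGm.ennreal_ofReal (hΦc.aemeasurable hΩm).ennreal_ofReal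
    (ae_restrict_of_forall_mem hΩm fun y hy => (ENNReal.ofReal_pos.2 (hΦpos y hy)).ne')
    (ae_restrict_of_forall_mem hΩm fun y hy => (hK y hy).trans (by gcongr; exact le_self_add))
  calc ∫⁻ x in Ω, ENNReal.ofReal (Φ x / Φ₀ x) * (∫⁻ y in Ω, ENNReal.ofReal (G x y) ∂τ) ∂μ
      ≤ ∫⁻ x in Ω, ENNReal.ofReal cs * (ENNReal.ofReal (Φ x / infDist x (frontier Ω)) *
          ∫⁻ y in Ω, ENNReal.ofReal (G x y) ∂τ) ∂μ :=
        setLIntegral_mono' hΩm fun x hx =>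
          (mul_le_mul_left (hweight x hx) _).trans_eq (mul_assoc _ _ _)
    _ ≤ ENNReal.ofReal cs * ((K + 1 : ℝ≥0) * ∫⁻ x in Ω, ENNReal.ofReal (Φ x) ∂τ) := by
        rw [lintegral_const_mul' _ _ ENNReal.ofReal_ne_top]
        exact mul_le_mul_right hTonelli _
    _ = ENNReal.ofReal (cs * (K + 1 : ℝ≥0)) * ∫⁻ x in Ω, ENNReal.ofReal (Φ x) ∂τ := by
        rw [ENNReal.ofReal_mul hcs.le, ENNReal.ofReal_coe_nnreal, mul_assoc]

end GreenPotential

theorem stmt4 {N : ℕ} (hN : 3 ≤ N) (Ω : Set (EuclideanSpace ℝ (Fin N)))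
    (hΩo : IsOpen Ω) (hΩb : Bornology.IsBounded Ω) (hΩ2 : HasC2Boundary Ω)
    (α αs : ℝ) (hα : 0 < α - 1/2) (hαs : α - 1/2 < αs) (hαs' : αs ≤ α)
    (Φ Φ₀ : EuclideanSpace ℝ (Fin N) → ℝ)
    (G : EuclideanSpace ℝ (Fin N) → EuclideanSpace ℝ (Fin N) → ℝ)
    (hΦc : ContinuousOn Φ Ω) (hΦpos : ∀ x ∈ Ω, 0 < Φ x)
    (c₁ β₁ : ℝ) (hc₁ : 1 ≤ c₁) (hβ₁ : 0 < β₁)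
    -- (B2): bounds on the ground state near the boundary
    (hΦ : ∀ x ∈ Ω, Metric.infDist x (frontier Ω) < β₁ →
      c₁⁻¹ * Metric.infDist x (frontier Ω) ^ α ≤ Φ x ∧
      Φ x ≤ c₁ * Metric.infDist x (frontier Ω) ^ αs)
    (cs : ℝ) (hcs : 1 ≤ cs)
    (hΦ₀ : ∀ x ∈ Ω, cs⁻¹ * Metric.infDist x (frontier Ω) ≤ Φ₀ x ∧
      Φ₀ x ≤ cs * Metric.infDist x (frontier Ω))
    (hΦ₀pos : ∀ x ∈ Ω, 0 < Φ₀ x)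
    (hGm : Measurable (Function.uncurry G))
    (hGpos : ∀ x ∈ Ω, ∀ y ∈ Ω, x ≠ y → 0 < G x y)
    (hGsym : ∀ x ∈ Ω, ∀ y ∈ Ω, G x y = G y x)
    (a c₀ : ℝ) (ha : 2 ≤ a) (hc₀ : 1 ≤ c₀)
    -- (i): upper boundary Green estimate near the diagonal
    (hG1 : ∀ β ∈ Set.Ioo (0:ℝ) β₁, ∀ x ∈ Ω, Metric.infDist x (frontier Ω) = β →
      ∀ y ∈ Ω, 0 < dist x y → dist x y < a * β →
        Φ x * G x y ≤ c₀ * dist x y ^ ((2:ℝ) - N) * Φ y)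
    -- (ii): upper boundary Green estimate away from the diagonal
    (hG2 : ∀ β ∈ Set.Ioo (0:ℝ) β₁, ∀ x ∈ Ω, Metric.infDist x (frontier Ω) = β →
      ∀ y ∈ Ω, a * β ≤ dist x y →
        Φ x * G x y ≤ c₀ * β ^ (2 * αs) * dist x y ^ ((2:ℝ) - N - 2 * α) * Φ y)
    -- (iii): interior upper Green estimate
    (hG3 : ∀ b : ℝ, 0 < b → ∃ Cb : ℝ, 0 < Cb ∧ ∀ x ∈ Ω, ∀ y ∈ Ω,
      0 < dist x y →
      dist x y ≤ b⁻¹ * min (Metric.infDist x (frontier Ω)) (Metric.infDist y (frontier Ω)) →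
      G x y ≤ Cb * dist x y ^ ((2:ℝ) - N))
    -- (iv): comparison of the Green kernel with the ground state near the boundary
    (hG4 : ∀ r : ℝ, 0 < r → ∃ Cr : ℝ, 0 < Cr ∧ ∀ x ∈ Ω, ∀ y ∈ Ω,
      r ≤ Metric.infDist y (frontier Ω) → Metric.infDist x (frontier Ω) < r / 2 →
      G x y ≤ Cr * Φ x) :
    ∃ c' : ℝ, 0 < c' ∧ ∀ τ : Measure (EuclideanSpace ℝ (Fin N)), τ Ωᶜ = 0 →
      (∫⁻ x in Ω, ENNReal.ofReal (Φ x) ∂τ) < ⊤ →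
      (∫⁻ x in Ω, ENNReal.ofReal (Φ x / Φ₀ x) *
          (∫⁻ y in Ω, ENNReal.ofReal (G x y) ∂τ) ∂volume) ≤
        ENNReal.ofReal c' * (∫⁻ x in Ω, ENNReal.ofReal (Φ x) ∂τ) := by
  have hδ : ∀ x ∈ Ω, 0 < infDist x (frontier Ω) := fun x hx =>
    pos_of_mul_pos_right ((hΦ₀pos x hx).trans_le (hΦ₀ x hx).2) (by positivity)
  have hG : GreenUpperBounds Ω Φ G N α αs β₁ a c₀ :=
    { near := fun x hx hxβ => hG1 _ ⟨hδ x hx, hxβ⟩ x hx rfl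
      far := fun x hx hxβ => hG2 _ ⟨hδ x hx, hxβ⟩ x hx rfl
      interior := hG3
      boundary := hG4 }
  obtain ⟨c', hc', h⟩ := stmt4_general (isUpperAhlforsRegular_volume_euclideanSpace N)
    (mod_cast (by lia : 1 ≤ N)) hΩo hΩb hδ (hΩ2.hasThinThickenings_frontier hΩo hΩb) hα hαs hαs'
    hΦc hΦpos (by positivity) (fun x hx => (hΦ₀ x hx).1) hGm hGsym hβ₁ (by linarith)
    (by linarith) hG
  exact ⟨c', hc', fun τ _ _ => h τ⟩
end
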